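/- Let C² = {(ξ₁, ξ₂, √(ξ₁² + ξ₂²)) : 1/4 ≤ ξ₁² + ξ₂² ≤ 4} be the truncated cone in ℝ³. For δ ∈ (0,1) with δ^{-1/2} an integer, partition the unit circle into arcs ω of length 2π δ^{1/2}, and for each ω let P_ω = {(ξ, t) ∈ ℝ³ : ξ ≠ 0, ξ/|ξ| ∈ ω, 1/2 ≤ |ξ| ≤ 2, |t − |ξ|| ≤ δ} (a plate of dimensions ≈ 1 × δ^{1/2} × δ). Then for every ε > 0 and every p with 2 ≤ p ≤ 6 there is a constant C (depending on ε and p) such that for every integrable f : ℝ³ → ℂ with Fourier transform supported in ∪_ω P_ω one has ‖f‖_{L^p(ℝ³)} ≤ C δ^{-ε} (Σ_ω ‖f_{P_ω}‖_{L^p(ℝ³)}²)^{1/2}. -/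

import Mathlib

/-!
The proof reduces the cone to the parabola by induction on scales, and proves the parabola
estimate by a bilinear orthogonality argument. All functions are handled through continuous
representatives with integrable, boundedly supported Fourier transforms (`Spec`), so no weights or
wave packets are needed; the only analytic input is `∫ h = 0` when `0` is outside the spectrum of `h`.

*Parabola, `p = 6`* (`par_decoupling`). Rescaled so that the caps have unit size, the frequencies
are `(j, j²)` for `j` in a block of `N` integers. If the blocks `I`, `J` are at distance `≈ N` and
`|J| = L`, then in `∫ |f_I|² |f_J|⁴` the factor `|f_J|⁴` makes the pieces of `f_I` over blocks of
length `L² / N` almost orthogonal (`transversal`, `par_orth`). Alternating this with Hölder's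
inequality `∫ |f|²|g|⁴ ≤ (∫ |f|⁴|g|²)^{1/2} (∫ |g|⁶)^{1/2}` gains, after enough rounds, on the
inductive hypothesis at smaller scales (`par_bilin`); a broad–narrow decomposition (`broad_narrow`)
passes from the bilinear to the linear estimate (`par_step`).

*Thin slab of the cone* (`slab_decoupling`). Write the cone as `x z = y²`. On the slab
`1 ≤ x ≤ 1 + R⁻²` a group of `R` consecutive blocks of plates is, after a shear and a parabolic
rescaling, within the caps of a cylinder over a parabola (`slab_subset_theta`). Applying the
parabola estimate at each of the `log_R N` scales loses `N ^ η` once `R` is large depending on `η`.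

*Sector and interpolation* (`sector_decoupling`). A sector of the cone is cut into boundedly many
slabs by smooth multipliers, which are bounded on every `L^q`, `q > 1`, uniformly over the shears
(`exists_op`). Interpolation with the orthogonality in `L²` gives every `2 ≤ p ≤ 6`
(`marcinkiewicz`, `ops_interp`).

*Conclusion.* Three sectors with centres at the angles `0`, `π`, `2π` cover the plates
(`exists_sector`, `conePlate_subset`). A bounded number of plates is treated by the triangle
inequality.
-/

open MeasureTheory Set
open scoped FourierTransform ENNReal

noncomputable section

abbrev E3 := EuclideanSpace ℝ (Fin 3)

/-- The plate `P_ω` of the truncated cone `C²` over the arc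
`ω = {(cos θ, sin θ) : θ ∈ [2πj/K, 2π(j+1)/K)}` of the unit circle (`K = δ^{-1/2}` arcs):
`P_ω = {(ξ, t) : ξ/|ξ| ∈ ω, 1/2 ≤ |ξ| ≤ 2, |t − |ξ|| ≤ δ}`, of
dimensions `≈ 1 × δ^{1/2} × δ`. -/
def conePlate (δ : ℝ) (K : ℕ) (j : Fin K) : Set E3 :=
  {x : E3 | ∃ r θ : ℝ, 1/2 ≤ r ∧ r ≤ 2 ∧
    θ ∈ Set.Ico (2 * Real.pi * j / K) (2 * Real.pi * (j + 1) / K) ∧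
    x 0 = r * Real.cos θ ∧ x 1 = r * Real.sin θ ∧ |x 2 - r| ≤ δ}

/-! ### Functions with integrable Fourier transform and their spectra -/

lemma continuous_fourier_of_integrable {f : E3 → ℂ} (hf : Integrable f) : Continuous (𝓕 f) :=
  VectorFourier.fourierIntegral_continuous Real.continuous_fourierChar
    (innerSL ℝ).continuous₂ hf

lemma norm_fourier_le (f : E3 → ℂ) (ξ : E3) : ‖𝓕 f ξ‖ ≤ ∫ x, ‖f x‖ :=
  VectorFourier.norm_fourierIntegral_le_integral_norm _ _ _ f ξ

lemma continuous_fourierInv_of_integrable {f : E3 → ℂ} (hf : Integrable f) :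
    Continuous (𝓕⁻ f) := by
  have h : (𝓕⁻ f) = fun x => 𝓕 f (-x) := by
    ext x; exact Real.fourierInv_eq_fourier_neg f x
  rw [h]
  exact (continuous_fourier_of_integrable hf).comp continuous_neg

/-- `Spec A f`: the function `f` is integrable and continuous, its Fourier transform is integrable
and vanishes outside `A`. -/
structure Spec (A : Set E3) (f : E3 → ℂ) : Prop where
  int : Integrable f
  cont : Continuous f
  intF : Integrable (𝓕 f)
  supp : ∀ ξ, ξ ∉ A → 𝓕 f ξ = 0

namespace Spec

variable {A B : Set E3} {f g : E3 → ℂ}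

lemma mono (hf : Spec A f) (h : A ⊆ B) : Spec B f :=
  ⟨hf.int, hf.cont, hf.intF, fun ξ hξ => hf.supp ξ fun h' => hξ (h h')⟩

lemma inv (hf : Spec A f) : 𝓕⁻ (𝓕 f) = f :=
  hf.cont.fourierInv_fourier_eq hf.int hf.intF

lemma bdd (hf : Spec A f) : ∃ C : ℝ, 0 ≤ C ∧ ∀ x, ‖f x‖ ≤ C := by
  refine ⟨∫ x, ‖𝓕 f x‖, integral_nonneg fun _ => norm_nonneg _, fun x => ?_⟩
  conv_lhs => rw [← hf.inv]
  rw [Real.fourierInv_eq_fourier_neg]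
  exact norm_fourier_le _ _

lemma fourier_add' (hf : Integrable f) (hg : Integrable g) : 𝓕 (f + g) = 𝓕 f + 𝓕 g := by
  ext ξ
  simp only [Real.fourier_eq, Pi.add_apply, smul_add]
  exact integral_add ((Real.fourierIntegral_convergent_iff ξ).2 hf)
    ((Real.fourierIntegral_convergent_iff ξ).2 hg)

lemma add (hf : Spec A f) (hg : Spec A g) : Spec A (f + g) := by
  refine ⟨hf.int.add hg.int, hf.cont.add hg.cont, ?_, fun ξ hξ => ?_⟩
  · rw [fourier_add' hf.int hg.int]; exact hf.intF.add hg.intF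
  · rw [fourier_add' hf.int hg.int]; simp [hf.supp ξ hξ, hg.supp ξ hξ]

lemma fourier_zero' : 𝓕 (0 : E3 → ℂ) = 0 := by
  ext ξ; simp [Real.fourier_eq]

lemma zero : Spec A (0 : E3 → ℂ) := by
  refine ⟨integrable_zero _ _ _, continuous_zero, ?_, fun ξ _ => ?_⟩ <;> rw [fourier_zero']
  · exact integrable_zero _ _ _
  · rfl

lemma sum {ι : Type*} (s : Finset ι) {F : ι → E3 → ℂ} (h : ∀ i ∈ s, Spec A (F i)) :
    Spec A (fun x => ∑ i ∈ s, F i x) := by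
  have e : (fun x => ∑ i ∈ s, F i x) = ∑ i ∈ s, F i := by ext x; simp
  rw [e]
  exact Finset.sum_induction _ (Spec A) (fun _ _ => add) zero h

open scoped Pointwise in
/-- The spectrum of a product lies in the sum of the spectra, because the Fourier transform of
`f * g` is the convolution of the Fourier transforms. -/
lemma mul (hf : Spec A f) (hg : Spec B g) : Spec (A + B) (fun x => f x * g x) := by
  obtain ⟨Cg, hCg0, hCg⟩ := hg.bdd
  set h : E3 → ℂ := convolution (𝓕 f) (𝓕 g) (ContinuousLinearMap.mul ℂ ℂ) volume with hh
  have hint : Integrable h := hf.intF.integrable_convolution _ hg.intF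
  have hcont : Continuous h := by
    refine BddAbove.continuous_convolution_right_of_integrable _ ?_ hf.intF
      (continuous_fourier_of_integrable hg.int)
    exact ⟨∫ x, ‖g x‖, by rintro _ ⟨x, rfl⟩; exact norm_fourier_le g x⟩
  have hfg : Integrable (fun x => f x * g x) :=
    hf.int.mul_bdd hg.cont.aestronglyMeasurable (ae_of_all _ hCg)
  have key : 𝓕⁻ h = fun x => f x * g x := by
    ext x
    rw [Real.fourierInv_eq_fourier_neg, hh,
      Real.fourier_mul_convolution_eq hf.intF hg.intF, ← Real.fourierInv_eq_fourier_neg,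
      ← Real.fourierInv_eq_fourier_neg, hf.inv, hg.inv]
  have hFh : Integrable (𝓕 h) := by
    have : 𝓕 h = fun x => 𝓕⁻ h (-x) := by
      ext x; rw [Real.fourierInv_eq_fourier_neg, neg_neg]
    rw [this, key]; exact hfg.comp_neg
  have key2 : 𝓕 (fun x => f x * g x) = h := by
    rw [← key]
    exact hcont.fourier_fourierInv_eq hint hFh
  refine ⟨hfg, hf.cont.mul hg.cont, by rw [key2]; exact hint, fun ξ hξ => ?_⟩
  rw [key2, hh, convolution]
  refine integral_eq_zero_of_ae (ae_of_all _ fun t => ?_)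
  by_cases ht : t ∈ A
  · have : ξ - t ∉ B := fun hb => hξ ⟨t, ht, ξ - t, hb, by simp⟩
    simp [hg.supp _ this]
  · simp [hf.supp _ ht]

open scoped Pointwise in
lemma conj (hf : Spec A f) : Spec (-A) (fun x => (starRingEnd ℂ) (f x)) := by
  have key : 𝓕 (fun x => (starRingEnd ℂ) (f x)) = fun ξ => (starRingEnd ℂ) (𝓕 f (-ξ)) := by
    ext ξ
    rw [Real.fourier_eq, Real.fourier_eq, ← integral_conj]
    congr 1; ext x
    simp only [Circle.smul_def, smul_eq_mul, map_mul, inner_neg_right, neg_neg]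
    congr 1
    rw [← Circle.coe_inv_eq_conj, ← AddChar.map_neg_eq_inv]
  refine ⟨?_, Complex.continuous_conj.comp hf.cont, ?_, fun ξ hξ => ?_⟩
  · exact (Complex.conjLIE.integrable_comp_iff (φ := f)).2 hf.int
  · rw [key]
    exact (Complex.conjLIE.integrable_comp_iff (φ := fun ξ => 𝓕 f (-ξ))).2 hf.intF.comp_neg
  · rw [key]; simp [hf.supp (-ξ) (by simpa using hξ)]

lemma integral_eq_zero (hf : Spec A f) (h : (0 : E3) ∉ A) : ∫ x, f x = 0 := by
  have := hf.supp 0 h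
  rw [Real.fourier_eq] at this
  simpa using this

end Spec

/-- Fourier inversion almost everywhere, without assuming continuity. -/
lemma fourierInv_fourier_ae {f : E3 → ℂ} (hf : Integrable f) (hF : Integrable (𝓕 f)) :
    𝓕⁻ (𝓕 f) =ᵐ[volume] f := by
  have hc := continuous_fourierInv_of_integrable hF
  have hsub : ∀ᵐ x : E3, (𝓕⁻ (𝓕 f) - f) x = 0 := by
    refine ae_eq_zero_of_integral_contDiff_smul_eq_zero
      (hc.locallyIntegrable.sub hf.locallyIntegrable) fun g hg hgc => ?_
    have hgc' : HasCompactSupport (fun x => (g x : ℂ)) :=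
      hgc.comp_left (g := fun t : ℝ => (t : ℂ)) (by simp)
    have hg'' : ContDiff ℝ (↑(⊤ : ℕ∞)) (fun x => (g x : ℂ)) := Complex.ofRealCLM.contDiff.comp hg
    set G : SchwartzMap E3 ℂ := hgc'.toSchwartzMap hg'' with hG
    set H : SchwartzMap E3 ℂ := 𝓕⁻ G with hH
    have hHG : 𝓕 (H : E3 → ℂ) = fun x => (g x : ℂ) := by
      have : (𝓕 H : SchwartzMap E3 ℂ) = G := by rw [hH]; exact FourierTransform.fourier_fourierInv_eq G
      rw [← SchwartzMap.fourier_coe, this]; rfl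
    -- both pairings equal the pairing of the Fourier transform of `f` with `H`
    have flip : ∀ a b : E3 → ℂ, Integrable a → Integrable b →
        ∫ ξ, 𝓕 a ξ * b ξ = ∫ x, a x * 𝓕 b x := by
      intro a b ha hb
      have := VectorFourier.integral_fourierIntegral_smul_eq_flip (L := innerₗ E3)
        (μ := volume) (ν := volume) (f := a) (g := b)
        Real.continuous_fourierChar continuous_inner ha hb
      rw [flip_innerₗ] at this
      exact this
    have e1 : ∫ x, (g x : ℂ) * f x = ∫ ξ, H ξ * 𝓕 f ξ := by
      rw [← flip _ _ H.integrable hf, hHG]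
    have hGint : Integrable (fun x => (g x : ℂ)) := G.integrable
    have e2 : ∫ x, (g x : ℂ) * 𝓕⁻ (𝓕 f) x = ∫ ξ, H ξ * 𝓕 f ξ := by
      have hHg : (H : E3 → ℂ) = 𝓕 (fun x => (g (-x) : ℂ)) := by
        rw [hH, SchwartzMap.fourierInv_coe]
        ext ξ
        exact Real.fourierInv_eq_fourier_comp_neg (fun x => (g x : ℂ)) ▸ rfl
      rw [hHg, flip _ _ hGint.comp_neg hF,
        ← integral_neg_eq_self (fun x => (g (-x) : ℂ) * 𝓕 (𝓕 f) x)]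
      congr 1; ext x
      rw [neg_neg, Real.fourierInv_eq_fourier_neg]
    have hi1 : Integrable (fun x => (g x : ℂ) * 𝓕⁻ (𝓕 f) x) :=
      hGint.mul_bdd hc.aestronglyMeasurable (ae_of_all _ fun x => by
        rw [Real.fourierInv_eq_fourier_neg]; exact norm_fourier_le _ _)
    have hi2 : Integrable (fun x => (g x : ℂ) * f x) := by
      obtain ⟨C, hC⟩ := hgc'.exists_bound_of_continuous hg''.continuous
      exact hf.bdd_mul hg''.continuous.aestronglyMeasurable (ae_of_all _ hC)
    calc ∫ x, g x • (𝓕⁻ (𝓕 f) - f) x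
        = ∫ x, ((g x : ℂ) * 𝓕⁻ (𝓕 f) x - (g x : ℂ) * f x) := by
          congr 1; ext x; simp [mul_sub]
      _ = 0 := by rw [integral_sub hi1 hi2, e1, e2, sub_self]
  filter_upwards [hsub] with x hx
  simpa [sub_eq_zero] using hx

/-- An integrable function whose Fourier transform vanishes outside a bounded set agrees almost
everywhere with a continuous function with that spectrum. -/
lemma exists_spec_of_bounded {f : E3 → ℂ} {A : Set E3} (hf : Integrable f)
    (hA : Bornology.IsBounded A) (h : ∀ ξ, ξ ∉ A → 𝓕 f ξ = 0) :
    ∃ g, Spec A g ∧ g =ᵐ[volume] f ∧ 𝓕 g = 𝓕 f := by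
  have hc := continuous_fourier_of_integrable hf
  have hF : Integrable (𝓕 f) := by
    refine hc.integrable_of_hasCompactSupport ?_
    exact HasCompactSupport.intro hA.isCompact_closure
      fun x hx => h x fun h' => hx (subset_closure h')
  have hae := fourierInv_fourier_ae hf hF
  have hFe : 𝓕 (𝓕⁻ (𝓕 f)) = 𝓕 f := by
    ext ξ
    rw [Real.fourier_eq, Real.fourier_eq]
    exact integral_congr_ae (by filter_upwards [hae] with x hx; rw [hx])
  refine ⟨𝓕⁻ (𝓕 f), ⟨hf.congr hae.symm, continuous_fourierInv_of_integrable hF, ?_, ?_⟩, hae, hFe⟩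
  · rw [hFe]; exact hF
  · rw [hFe]; exact h

/-! ### Integrals of products and almost orthogonality -/

lemma Spec.integrable_norm_mul {A : Set E3} {f : E3 → ℂ} (hf : Spec A f) {h : E3 → ℝ}
    (hc : Continuous h) {C : ℝ} (hb : ∀ x, ‖h x‖ ≤ C) : Integrable (fun x => ‖f x‖ * h x) :=
  hf.int.norm.mul_bdd hc.aestronglyMeasurable (ae_of_all _ hb)

lemma Spec.integrable_pow {A : Set E3} {f : E3 → ℂ} (hf : Spec A f) (a : ℕ) :
    Integrable (fun x => ‖f x‖ ^ (a + 1)) := by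
  obtain ⟨C, hC0, hC⟩ := hf.bdd
  have := hf.integrable_norm_mul (h := fun x => ‖f x‖ ^ a) (hf.cont.norm.pow a) (C := C ^ a)
    (fun x => by rw [norm_pow, norm_norm]; exact pow_le_pow_left₀ (norm_nonneg _) (hC x) a)
  simpa [pow_succ'] using this

lemma Spec.integrable_pow_mul {A B : Set E3} {f g : E3 → ℂ} (hf : Spec A f) (hg : Spec B g)
    (a b : ℕ) : Integrable (fun x => ‖f x‖ ^ (a + 1) * ‖g x‖ ^ b) := by
  obtain ⟨C, hC0, hC⟩ := hg.bdd
  exact (hf.integrable_pow a).mul_bdd (c := C ^ b)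
    (hg.cont.norm.pow b).aestronglyMeasurable
    (ae_of_all _ fun x => by
      rw [norm_pow, norm_norm]; exact pow_le_pow_left₀ (norm_nonneg _) (hC x) b)

/-- Almost orthogonality with a weight: if `∫ f i * conj (f j) * W = 0` unless `i` and `j` are
near, and each index has at most `B` near ones, then the `L²(W)` norm of the sum is controlled by
the individual ones. -/
lemma orth_weight {ι : Type*} (s : Finset ι) (f : ι → E3 → ℂ) (W : E3 → ℝ)
    (hW0 : ∀ x, 0 ≤ W x) (hWc : Continuous W) (hWb : ∃ C, ∀ x, W x ≤ C)
    (hf : ∀ i ∈ s, ∃ A, Spec A (f i)) (near : ι → ι → Prop) [DecidableRel near]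
    (hsymm : ∀ i j, near i j → near j i) (B : ℕ)
    (hB : ∀ i ∈ s, (s.filter (near i)).card ≤ B)
    (hz : ∀ i ∈ s, ∀ j ∈ s, ¬ near i j →
      ∫ x, f i x * (starRingEnd ℂ) (f j x) * (W x : ℂ) = 0) :
    ∫ x, ‖∑ i ∈ s, f i x‖ ^ 2 * W x ≤ B * ∑ i ∈ s, ∫ x, ‖f i x‖ ^ 2 * W x := by
  obtain ⟨C, hC⟩ := hWb
  have hWn : ∀ x, ‖W x‖ ≤ C := fun x => by rw [Real.norm_of_nonneg (hW0 x)]; exact hC x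
  have hint : ∀ i ∈ s, ∀ j ∈ s,
      Integrable (fun x => f i x * (starRingEnd ℂ) (f j x) * (W x : ℂ)) := by
    intro i hi j hj
    obtain ⟨A, hA⟩ := hf i hi
    obtain ⟨A', hA'⟩ := hf j hj
    refine (hA.mul hA'.conj).int.mul_bdd (c := C)
      (Complex.continuous_ofReal.comp hWc).aestronglyMeasurable (ae_of_all _ fun x => ?_)
    simpa using hWn x
  have hint2 : ∀ i ∈ s, Integrable (fun x => ‖f i x‖ ^ 2 * W x) := by
    intro i hi
    obtain ⟨A, hA⟩ := hf i hi
    exact (hA.integrable_pow 1).mul_bdd hWc.aestronglyMeasurable (ae_of_all _ hWn)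
  set a : ι → ℝ := fun i => ∫ x, ‖f i x‖ ^ 2 * W x with ha
  have ha0 : ∀ i, 0 ≤ a i := fun i =>
    integral_nonneg fun x => mul_nonneg (by positivity) (hW0 x)
  have hbd : ∀ i ∈ s, ∀ j ∈ s,
      ‖∫ x, f i x * (starRingEnd ℂ) (f j x) * (W x : ℂ)‖ ≤ (a i + a j) / 2 := by
    intro i hi j hj
    calc _ ≤ ∫ x, ‖f i x * (starRingEnd ℂ) (f j x) * (W x : ℂ)‖ :=
          norm_integral_le_integral_norm _
      _ ≤ ∫ x, (‖f i x‖ ^ 2 * W x + ‖f j x‖ ^ 2 * W x) / 2 := by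
          refine integral_mono (hint i hi j hj).norm
            (((hint2 i hi).add (hint2 j hj)).div_const 2) fun x => ?_
          simp only [norm_mul, RCLike.norm_conj, Complex.norm_real, Real.norm_of_nonneg (hW0 x)]
          have := mul_nonneg (sq_nonneg (‖f i x‖ - ‖f j x‖)) (hW0 x)
          nlinarith
      _ = (a i + a j) / 2 := by
          rw [integral_div, integral_add (hint2 i hi) (hint2 j hj)]
  have hexp : ((∫ x, ‖∑ i ∈ s, f i x‖ ^ 2 * W x : ℝ) : ℂ) =
      ∑ i ∈ s, ∑ j ∈ s, ∫ x, f i x * (starRingEnd ℂ) (f j x) * (W x : ℂ) := by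
    rw [← integral_complex_ofReal]
    have : ∀ x, (((‖∑ i ∈ s, f i x‖ ^ 2 * W x : ℝ)) : ℂ) =
        ∑ i ∈ s, ∑ j ∈ s, f i x * (starRingEnd ℂ) (f j x) * (W x : ℂ) := by
      intro x
      push_cast
      rw [← Complex.mul_conj', map_sum, Finset.sum_mul_sum, Finset.sum_mul]
      simp_rw [Finset.sum_mul]
    simp_rw [this]
    rw [integral_finsetSum _ fun i hi => integrable_finsetSum _ fun j hj => hint i hi j hj]
    exact Finset.sum_congr rfl fun i hi => integral_finsetSum _ fun j hj => hint i hi j hj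
  have h1 : ∫ x, ‖∑ i ∈ s, f i x‖ ^ 2 * W x ≤
      ∑ i ∈ s, ∑ j ∈ s.filter (near i), (a i + a j) / 2 := by
    refine le_trans (le_abs_self _) ?_
    rw [← Real.norm_eq_abs, ← Complex.norm_real, hexp]
    refine (norm_sum_le _ _).trans (Finset.sum_le_sum fun i hi => ?_)
    rw [Finset.sum_filter]
    refine (norm_sum_le _ _).trans (Finset.sum_le_sum fun j hj => ?_)
    split_ifs with h
    · exact hbd i hi j hj
    · rw [hz i hi j hj h, norm_zero]
  have h2 : ∑ i ∈ s, ∑ j ∈ s.filter (near i), a j = ∑ i ∈ s, ∑ j ∈ s.filter (near i), a i := by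
    simp_rw [Finset.sum_filter]
    rw [Finset.sum_comm]
    refine Finset.sum_congr rfl fun i _ => Finset.sum_congr rfl fun j _ => ?_
    by_cases h : near i j
    · rw [if_pos h, if_pos (hsymm _ _ h)]
    · rw [if_neg h, if_neg fun h' => h (hsymm _ _ h')]
  have h3 : ∑ i ∈ s, ∑ j ∈ s.filter (near i), a i ≤ B * ∑ i ∈ s, a i := by
    rw [Finset.mul_sum]
    refine Finset.sum_le_sum fun i hi => ?_
    rw [Finset.sum_const, nsmul_eq_mul]
    exact mul_le_mul_of_nonneg_right (by exact_mod_cast hB i hi) (ha0 i)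
  calc _ ≤ _ := h1
    _ = (∑ i ∈ s, ∑ j ∈ s.filter (near i), a i + ∑ i ∈ s, ∑ j ∈ s.filter (near i), a j) / 2 := by
        rw [← Finset.sum_add_distrib, Finset.sum_div]
        refine Finset.sum_congr rfl fun i _ => ?_
        rw [← Finset.sum_add_distrib, Finset.sum_div]
    _ = ∑ i ∈ s, ∑ j ∈ s.filter (near i), a i := by rw [h2]; ring
    _ ≤ _ := h3

/-- Cauchy–Schwarz for the integral of a product of real functions. -/
lemma integral_mul_sq_le {f g : E3 → ℝ} (hf : Integrable (fun x => f x ^ 2))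
    (hg : Integrable (fun x => g x ^ 2)) (hfg : Integrable (fun x => f x * g x)) :
    (∫ x, f x * g x) ^ 2 ≤ (∫ x, f x ^ 2) * ∫ x, g x ^ 2 := by
  have h : ∀ t : ℝ, 0 ≤ (∫ x, f x ^ 2) * (t * t) + (2 * ∫ x, f x * g x) * t + ∫ x, g x ^ 2 := by
    intro t
    have : 0 ≤ ∫ x, (t * f x + g x) ^ 2 := integral_nonneg fun x => sq_nonneg _
    have e : ∫ x, (t * f x + g x) ^ 2 =
        (∫ x, f x ^ 2) * (t * t) + (2 * ∫ x, f x * g x) * t + ∫ x, g x ^ 2 := by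
      have : ∀ x, (t * f x + g x) ^ 2 = (t * t) * f x ^ 2 + (2 * t) * (f x * g x) + g x ^ 2 :=
        fun x => by ring
      simp_rw [this]
      have hs : Integrable (fun x => (t * t) * f x ^ 2 + (2 * t) * (f x * g x)) :=
        (hf.const_mul _).add (hfg.const_mul _)
      rw [integral_add hs hg,
        integral_add (hf.const_mul _) (hfg.const_mul _), integral_const_mul, integral_const_mul]
      ring
    rwa [e] at this
  have := discrim_le_zero h
  rw [discrim] at this
  nlinarith

/-- `∫ |f|²|g|⁴ ≤ (∫ |f|⁴|g|²)^{1/2} (∫ |g|⁶)^{1/2}`, in squared form. -/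
lemma holder_swap {A B : Set E3} {f g : E3 → ℂ} (hf : Spec A f) (hg : Spec B g) :
    (∫ x, ‖f x‖ ^ 2 * ‖g x‖ ^ 4) ^ 2 ≤
      (∫ x, ‖g x‖ ^ 2 * ‖f x‖ ^ 4) * ∫ x, ‖g x‖ ^ 6 := by
  have h := integral_mul_sq_le (f := fun x => ‖g x‖ * ‖f x‖ ^ 2) (g := fun x => ‖g x‖ ^ 3)
    ((hg.integrable_pow_mul hf 1 4).congr (ae_of_all _ fun x => by simp only; ring))
    ((hg.integrable_pow 5).congr (ae_of_all _ fun x => by simp only; ring))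
    ((hg.integrable_pow_mul hf 3 2).congr (ae_of_all _ fun x => by simp only; ring))
  have e1 : ∀ x, ‖g x‖ * ‖f x‖ ^ 2 * ‖g x‖ ^ 3 = ‖f x‖ ^ 2 * ‖g x‖ ^ 4 := fun x => by ring
  have e2 : ∀ x, (‖g x‖ * ‖f x‖ ^ 2) ^ 2 = ‖g x‖ ^ 2 * ‖f x‖ ^ 4 := fun x => by ring
  have e3 : ∀ x, (‖g x‖ ^ 3) ^ 2 = ‖g x‖ ^ 6 := fun x => by ring
  simpa only [e1, e2, e3] using h

/-- Hölder's inequality `∫ |f|²|g|⁴ ≤ ‖f‖₆² ‖g‖₆⁴`, in cubed form. -/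
lemma holder_cube {A B : Set E3} {f g : E3 → ℂ} (hf : Spec A f) (hg : Spec B g) :
    (∫ x, ‖f x‖ ^ 2 * ‖g x‖ ^ 4) ^ 3 ≤ (∫ x, ‖f x‖ ^ 6) * (∫ x, ‖g x‖ ^ 6) ^ 2 := by
  have h1 := holder_swap hf hg
  have h2 := holder_swap hg hf
  set X := ∫ x, ‖f x‖ ^ 2 * ‖g x‖ ^ 4
  set Y := ∫ x, ‖g x‖ ^ 2 * ‖f x‖ ^ 4
  set P := ∫ x, ‖f x‖ ^ 6
  set Q := ∫ x, ‖g x‖ ^ 6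
  have hX : 0 ≤ X := integral_nonneg fun x => by positivity
  have hY : 0 ≤ Y := integral_nonneg fun x => by positivity
  have hP : 0 ≤ P := integral_nonneg fun x => by positivity
  have hQ : 0 ≤ Q := integral_nonneg fun x => by positivity
  rcases hX.eq_or_lt with h0 | h0
  · rw [← h0, zero_pow (by norm_num)]; positivity
  · have : X ^ 4 ≤ X * (P * Q ^ 2) := by
      calc X ^ 4 = (X ^ 2) ^ 2 := by ring
        _ ≤ (Y * Q) ^ 2 := pow_le_pow_left₀ (sq_nonneg _) h1 2
        _ = Y ^ 2 * Q ^ 2 := by ring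
        _ ≤ (X * P) * Q ^ 2 := mul_le_mul_of_nonneg_right h2 (sq_nonneg _)
        _ = _ := by ring
    refine le_of_mul_le_mul_left ?_ h0
    calc X * X ^ 3 = X ^ 4 := by ring
      _ ≤ _ := this

/-! ### Blocks of consecutive frequencies and parabolic families -/

/-- Sum of the functions `F j` over the block `a ≤ j < a + L`. -/
def blockSum (F : ℤ → E3 → ℂ) (a : ℤ) (L : ℕ) : E3 → ℂ :=
  fun x => ∑ j ∈ Finset.Ico a (a + L), F j x

/-- Sum of the numbers `e j` over the block `a ≤ j < a + L`. -/
def blockE (e : ℤ → ℝ) (a : ℤ) (L : ℕ) : ℝ := ∑ j ∈ Finset.Ico a (a + L), e j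

lemma sum_Ico_split {α : Type*} [AddCommMonoid α] (g : ℤ → α) (a : ℤ) (Q L : ℕ) :
    ∑ j ∈ Finset.Ico a (a + (Q * L : ℕ)), g j =
      ∑ q ∈ Finset.range Q, ∑ j ∈ Finset.Ico (a + q * L) (a + q * L + L), g j := by
  induction Q with
  | zero => simp
  | succ Q ih =>
    rw [Finset.sum_range_succ, ← ih, ← Finset.sum_union]
    · congr 1
      push_cast
      rw [Finset.Ico_union_Ico_eq_Ico (by nlinarith [Int.natCast_nonneg Q, Int.natCast_nonneg L]) (by omega)]
      congr 1; ring
    · push_cast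
      exact Finset.Ico_disjoint_Ico_consecutive _ _ _

lemma blockSum_split (F : ℤ → E3 → ℂ) (a : ℤ) (Q L : ℕ) (x : E3) :
    blockSum F a (Q * L) x = ∑ q ∈ Finset.range Q, blockSum F (a + q * L) L x :=
  sum_Ico_split (fun j => F j x) a Q L

lemma blockE_split (e : ℤ → ℝ) (a : ℤ) (Q L : ℕ) :
    blockE e a (Q * L) = ∑ q ∈ Finset.range Q, blockE e (a + q * L) L :=
  sum_Ico_split e a Q L

/-- Unit neighbourhood (up to the constant `c`) of the parabola `v = u²` near `u = j`, as a
cylinder in `ℝ³` given by two linear functionals `u`, `v`. -/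
def Theta (u v : E3 →ₗ[ℝ] ℝ) (c : ℝ) (j : ℤ) : Set E3 :=
  {ξ | |u ξ - j| ≤ c ∧ |v ξ - 2 * j * u ξ + (j : ℝ) ^ 2| ≤ c}

/-- A family of functions with spectra in the caps `Theta u v c j`; `e j` bounds `‖F j‖₆²`. -/
structure ParFamily (c : ℕ) (u v : E3 →ₗ[ℝ] ℝ) (F : ℤ → E3 → ℂ) (e : ℤ → ℝ) : Prop where
  spec : ∀ j, Spec (Theta u v c j) (F j)
  nonneg : ∀ j, 0 ≤ e j
  bound : ∀ j, ∫ x, ‖F j x‖ ^ 6 ≤ e j ^ 3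

lemma blockE_nonneg {e : ℤ → ℝ} (he : ∀ j, 0 ≤ e j) (a : ℤ) (L : ℕ) : 0 ≤ blockE e a L :=
  Finset.sum_nonneg fun j _ => he j

lemma spec_block {T : ℤ → Set E3} {F : ℤ → E3 → ℂ} (hF : ∀ j, Spec (T j) (F j)) (a : ℤ) (L : ℕ) :
    Spec {ξ | ∃ j ∈ Finset.Ico a (a + L), ξ ∈ T j} (blockSum F a L) :=
  Spec.sum _ fun j hj => (hF j).mono fun _ hξ => ⟨j, hj, hξ⟩

lemma blockE_cube_sum_le {e : ℤ → ℝ} (he : ∀ j, 0 ≤ e j) (a : ℤ) (Q L : ℕ) :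
    ∑ q ∈ Finset.range Q, blockE e (a + q * L) L ^ 3 ≤ blockE e a (Q * L) ^ 3 := by
  rw [blockE_split]
  have h0 : ∀ q ∈ Finset.range Q, 0 ≤ blockE e (a + q * L) L := fun q _ => blockE_nonneg he _ _
  have hs := Finset.sum_nonneg h0
  calc ∑ q ∈ Finset.range Q, blockE e (a + q * L) L ^ 3
      ≤ ∑ q ∈ Finset.range Q, blockE e (a + q * L) L *
          (∑ q ∈ Finset.range Q, blockE e (a + q * L) L) ^ 2 := by
        refine Finset.sum_le_sum fun q hq => ?_
        rw [pow_succ' _ 2]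
        exact mul_le_mul_of_nonneg_left
          (pow_le_pow_left₀ (h0 q hq) (Finset.single_le_sum h0 hq) 2) (h0 q hq)
    _ = _ := by rw [← Finset.sum_mul]; ring

/-- The trivial bound, from Hölder's inequality on the finite sum. -/
lemma trivial_block {T : ℤ → Set E3} {F : ℤ → E3 → ℂ} {e : ℤ → ℝ} (hF : ∀ j, Spec (T j) (F j))
    (he : ∀ j, 0 ≤ e j) (hb : ∀ j, ∫ x, ‖F j x‖ ^ 6 ≤ e j ^ 3) (a : ℤ) (L : ℕ) :
    ∫ x, ‖blockSum F a L x‖ ^ 6 ≤ (L : ℝ) ^ 5 * blockE e a L ^ 3 := by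
  have hi : ∀ j ∈ Finset.Ico a (a + L), Integrable (fun x => ‖F j x‖ ^ 6) :=
    fun j _ => (hF j).integrable_pow 5
  have hcard : (Finset.Ico a (a + L)).card = L := by simp
  calc ∫ x, ‖blockSum F a L x‖ ^ 6
      ≤ ∫ x, (L : ℝ) ^ 5 * ∑ j ∈ Finset.Ico a (a + L), ‖F j x‖ ^ 6 := by
        refine integral_mono ((spec_block hF a L).integrable_pow 5)
          ((integrable_finsetSum _ hi).const_mul _) fun x => ?_
        calc ‖blockSum F a L x‖ ^ 6 ≤ (∑ j ∈ Finset.Ico a (a + L), ‖F j x‖) ^ 6 :=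
              pow_le_pow_left₀ (norm_nonneg _) (norm_sum_le _ _) 6
          _ ≤ _ := by
              have := pow_sum_le_card_mul_sum_pow (s := Finset.Ico a (a + (L:ℤ))) (f := fun j => ‖F j x‖) (fun j _ => norm_nonneg _) 5
              rwa [hcard] at this
    _ = (L : ℝ) ^ 5 * ∑ j ∈ Finset.Ico a (a + L), ∫ x, ‖F j x‖ ^ 6 := by
        rw [integral_const_mul, integral_finsetSum _ hi]
    _ ≤ (L : ℝ) ^ 5 * ∑ j ∈ Finset.Ico a (a + L), e j ^ 3 := by
        gcongr with j hj; exact hb j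
    _ ≤ _ := by
        gcongr
        have := blockE_cube_sum_le he a L 1
        simp only [mul_one, Nat.cast_one] at this
        refine le_trans (le_of_eq ?_) this
        have h2 := sum_Ico_split (fun j => e j ^ 3) a L 1
        simp only [mul_one, Nat.cast_one] at h2
        rw [h2]
        refine Finset.sum_congr rfl fun q _ => ?_
        have : Finset.Ico (a + (q : ℤ)) (a + q + 1) = {a + (q : ℤ)} := by ext; simp; omega
        simp [blockE, this]

/-- Two blocks lie at mutual distance at least `d` and at most `D`. -/
def SepBlocks (D d : ℕ) (a : ℤ) (L : ℕ) (b : ℤ) (L' : ℕ) : Prop :=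
  (∀ i ∈ Finset.Ico a (a + L), ∀ j ∈ Finset.Ico b (b + L'), (d : ℤ) ≤ i - j ∧ i - j ≤ D) ∨
  (∀ i ∈ Finset.Ico a (a + L), ∀ j ∈ Finset.Ico b (b + L'), (d : ℤ) ≤ j - i ∧ j - i ≤ D)

lemma SepBlocks.symm {D d : ℕ} {a b : ℤ} {L L' : ℕ} (h : SepBlocks D d a L b L') : SepBlocks D d b L' a L := by
  rcases h with h | h
  · exact Or.inr fun i hi j hj => h j hj i hi
  · exact Or.inl fun i hi j hj => h j hj i hi

lemma SepBlocks.mono {D d : ℕ} {a b a' : ℤ} {L L' M : ℕ} (h : SepBlocks D d a L b L')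
    (hs : Finset.Ico a' (a' + M) ⊆ Finset.Ico a (a + L)) : SepBlocks D d a' M b L' := by
  rcases h with h | h
  · exact Or.inl fun i hi j hj => h i (hs hi) j hj
  · exact Or.inr fun i hi j hj => h i (hs hi) j hj

lemma sub_block_subset (a : ℤ) {Q L q : ℕ} (hq : q < Q) :
    Finset.Ico (a + q * L) (a + q * L + L) ⊆ Finset.Ico a (a + (Q * L : ℕ)) := by
  apply Finset.Ico_subset_Ico
  · nlinarith [Int.natCast_nonneg q, Int.natCast_nonneg L]
  · have : (q + 1) * L ≤ Q * L := Nat.mul_le_mul_right _ hq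
    push_cast
    have : ((q : ℤ) + 1) * L ≤ Q * L := by exact_mod_cast this
    linarith

/-! ### Transversality: the bilinear orthogonality step -/

lemma theta_normal {u v : E3 →ₗ[ℝ] ℝ} {c : ℝ} {i : ℤ} {ξ : E3} (h : ξ ∈ Theta u v c i) (b : ℝ) :
    |v ξ - 2 * b * u ξ + b ^ 2 - ((i : ℝ) - b) ^ 2| ≤ c * (2 * |(i : ℝ) - b| + 1) := by
  obtain ⟨h1, h2⟩ := h
  have e : v ξ - 2 * b * u ξ + b ^ 2 - ((i : ℝ) - b) ^ 2 =
      (v ξ - 2 * i * u ξ + (i : ℝ) ^ 2) + 2 * ((i : ℝ) - b) * (u ξ - i) := by ring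
  rw [e]
  calc _ ≤ |v ξ - 2 * i * u ξ + (i : ℝ) ^ 2| + |2 * ((i : ℝ) - b) * (u ξ - i)| := abs_add_le _ _
    _ ≤ c + 2 * |(i : ℝ) - b| * c := by
        rw [abs_mul, abs_mul, abs_two]
        gcongr
    _ = _ := by ring

/-- Transversality. Frequencies `ξ₁ ∈ Theta i₁`, `ξ₂ ∈ Theta i₂` whose difference is compensated by
four frequencies from a block `J` of length `L` have `|i₁ - i₂| ≲ M L'`, where `L² = L' N`:
the functional `v - 2 j₀ u + j₀²` is `O(L²)` on `J`, and equals `(i - j₀)²` up to `O(N)` on `Theta i`. -/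
lemma transversal {u v : E3 →ₗ[ℝ] ℝ} {c M d L L' : ℕ} (hL : 1 ≤ L) (hL' : 1 ≤ L')
    (hd : 1 ≤ d) (hLL : L * L = L' * (M * d)) {j₀ i₁ i₂ : ℤ}
    (hpos : ((d : ℤ) ≤ i₁ - j₀ ∧ (d : ℤ) ≤ i₂ - j₀) ∨ ((d : ℤ) ≤ j₀ - i₁ ∧ (d : ℤ) ≤ j₀ - i₂))
    (hN1 : |i₁ - j₀| ≤ (M * d : ℕ)) (hN2 : |i₂ - j₀| ≤ (M * d : ℕ))
    {ξ₁ ξ₂ η₁ η₂ η₃ η₄ : E3} (h₁ : ξ₁ ∈ Theta u v c i₁) (h₂ : ξ₂ ∈ Theta u v c i₂)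
    (k₁ : ∃ j ∈ Finset.Ico j₀ (j₀ + L), η₁ ∈ Theta u v c j)
    (k₂ : ∃ j ∈ Finset.Ico j₀ (j₀ + L), η₂ ∈ Theta u v c j)
    (k₃ : ∃ j ∈ Finset.Ico j₀ (j₀ + L), η₃ ∈ Theta u v c j)
    (k₄ : ∃ j ∈ Finset.Ico j₀ (j₀ + L), η₄ ∈ Theta u v c j)
    (hsum : ξ₁ - ξ₂ + ((η₁ - η₂) + (η₃ - η₄)) = 0) :
    |i₁ - i₂| ≤ (2 + 9 * c) * M * L' := by
  have hJ : ∀ η : E3, (∃ j ∈ Finset.Ico j₀ (j₀ + L), η ∈ Theta u v c j) →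
      |v η - 2 * j₀ * u η + (j₀ : ℝ) ^ 2| ≤ (1 + 3 * c) * (L : ℝ) ^ 2 := by
    rintro η ⟨j, hj, hη⟩
    rw [Finset.mem_Ico] at hj
    have h := theta_normal hη (j₀ : ℝ)
    have a0 : (0 : ℝ) ≤ (j : ℝ) - j₀ := by
      have : (j₀ : ℝ) ≤ j := by exact_mod_cast hj.1
      linarith
    have a1 : (j : ℝ) - j₀ ≤ L := by
      have : (j : ℝ) ≤ (j₀ : ℝ) + L := by exact_mod_cast hj.2.le
      linarith
    have a2 : (1 : ℝ) ≤ L := by exact_mod_cast hL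
    rw [abs_of_nonneg a0] at h
    have hc : (0 : ℝ) ≤ c := Nat.cast_nonneg c
    rw [abs_le] at h ⊢
    have a3 : ((j : ℝ) - j₀) ^ 2 ≤ (L : ℝ) ^ 2 := pow_le_pow_left₀ a0 a1 2
    have a4 : (c : ℝ) * (2 * ((j : ℝ) - j₀) + 1) ≤ c * (3 * L ^ 2) := by
      apply mul_le_mul_of_nonneg_left _ hc; nlinarith
    constructor <;> nlinarith [sq_nonneg ((j : ℝ) - j₀)]
  have g₁ := hJ _ k₁
  have g₂ := hJ _ k₂
  have g₃ := hJ _ k₃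
  have g₄ := hJ _ k₄
  have n₁ := theta_normal h₁ (j₀ : ℝ)
  have n₂ := theta_normal h₂ (j₀ : ℝ)
  have hu : u ξ₁ - u ξ₂ + ((u η₁ - u η₂) + (u η₃ - u η₄)) = 0 := by
    have := congrArg u hsum
    simpa using this
  have hv : v ξ₁ - v ξ₂ + ((v η₁ - v η₂) + (v η₃ - v η₄)) = 0 := by
    have := congrArg v hsum
    simpa using this
  set N : ℝ := (M : ℝ) * d with hN
  set D₁ : ℝ := (i₁ : ℝ) - j₀ with hD₁
  set D₂ : ℝ := (i₂ : ℝ) - j₀ with hD₂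
  have b1 : |D₁| ≤ N := by rw [hD₁, hN]; exact_mod_cast hN1
  have b2 : |D₂| ≤ N := by rw [hD₂, hN]; exact_mod_cast hN2
  have hLLr : (L : ℝ) ^ 2 = L' * N := by rw [sq, hN]; exact_mod_cast hLL
  have hL'1 : (1 : ℝ) ≤ L' := by exact_mod_cast hL'
  have hd1 : (1 : ℝ) ≤ d := by exact_mod_cast hd
  have hc0 : (0 : ℝ) ≤ c := Nat.cast_nonneg c
  have hN0 : 1 ≤ N := by
    have : 1 ≤ M * d := by
      rcases Nat.eq_zero_or_pos (M * d) with h | h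
      · rw [h, mul_zero] at hLL; nlinarith
      · exact h
    rw [hN]; exact_mod_cast this
  have hdiff : |D₁ ^ 2 - D₂ ^ 2| ≤ (4 + 18 * c) * (L' * N) := by
    have m1 : (c : ℝ) * (2 * |D₁| + 1) ≤ c * (3 * (L' * N)) := by
      apply mul_le_mul_of_nonneg_left _ hc0; nlinarith
    have m2 : (c : ℝ) * (2 * |D₂| + 1) ≤ c * (3 * (L' * N)) := by
      apply mul_le_mul_of_nonneg_left _ hc0; nlinarith
    rw [hLLr] at g₁ g₂ g₃ g₄
    have hid : D₁ ^ 2 - D₂ ^ 2 =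
        -(v ξ₁ - 2 * j₀ * u ξ₁ + (j₀ : ℝ) ^ 2 - D₁ ^ 2)
        + (v ξ₂ - 2 * j₀ * u ξ₂ + (j₀ : ℝ) ^ 2 - D₂ ^ 2)
        - (v η₁ - 2 * j₀ * u η₁ + (j₀ : ℝ) ^ 2) + (v η₂ - 2 * j₀ * u η₂ + (j₀ : ℝ) ^ 2)
        - (v η₃ - 2 * j₀ * u η₃ + (j₀ : ℝ) ^ 2) + (v η₄ - 2 * j₀ * u η₄ + (j₀ : ℝ) ^ 2) := by
      linear_combination hv - 2 * (j₀ : ℝ) * hu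
    rw [hid]
    clear hid hN0 hL'1 hd1 hLLr b1 b2
    have n₁' := abs_le.1 (n₁.trans m1)
    have n₂' := abs_le.1 (n₂.trans m2)
    replace g₁ := abs_le.1 g₁
    replace g₂ := abs_le.1 g₂
    replace g₃ := abs_le.1 g₃
    replace g₄ := abs_le.1 g₄
    clear n₁ n₂ m1 m2 hJ hu hv
    apply abs_le.2
    constructor <;> linarith
  have hlow : |(i₁ : ℝ) - i₂| * (2 * d) ≤ |D₁ ^ 2 - D₂ ^ 2| := by
    have : D₁ ^ 2 - D₂ ^ 2 = ((i₁ : ℝ) - i₂) * (D₁ + D₂) := by rw [hD₁, hD₂]; ring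
    rw [this, abs_mul]
    apply mul_le_mul_of_nonneg_left _ (abs_nonneg _)
    rcases hpos with ⟨p1, p2⟩ | ⟨p1, p2⟩
    · have p1' : (d : ℝ) ≤ D₁ := by rw [hD₁]; exact_mod_cast p1
      have p2' : (d : ℝ) ≤ D₂ := by rw [hD₂]; exact_mod_cast p2
      exact le_trans (by linarith) (le_abs_self _)
    · have p1' : (d : ℝ) ≤ -D₁ := by rw [hD₁, neg_sub]; exact_mod_cast p1
      have p2' : (d : ℝ) ≤ -D₂ := by rw [hD₂, neg_sub]; exact_mod_cast p2
      exact le_trans (by linarith) (neg_le_abs _)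
  have : |(i₁ : ℝ) - i₂| ≤ (2 + 9 * c) * M * L' := by
    have h2d : (0 : ℝ) < 2 * d := by linarith
    refine le_of_mul_le_mul_right ?_ h2d
    calc _ ≤ _ := hlow
      _ ≤ _ := hdiff
      _ = _ := by rw [hN]; ring
  exact_mod_cast this

open scoped Pointwise in
/-- Orthogonality step: against `|g_J|⁴` with `|J| = L`, the function `f_I` decouples in `L²` into
blocks of length `L'`, where `L² = L' N`. -/
lemma par_orth {c : ℕ} {u v : E3 →ₗ[ℝ] ℝ} {F : ℤ → E3 → ℂ}
    (hF : ∀ j, Spec (Theta u v c j) (F j)) {M d L L' Q : ℕ} (hL : 1 ≤ L) (hL' : 1 ≤ L')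
    (hd : 1 ≤ d) (hM : 1 ≤ M) (hLL : L * L = L' * (M * d)) {i₀ j₀ : ℤ}
    (hsep : SepBlocks (M * d) d i₀ (Q * L') j₀ L) :
    ∫ x, ‖blockSum F i₀ (Q * L') x‖ ^ 2 * ‖blockSum F j₀ L x‖ ^ 4 ≤
      ((7 + 18 * c) * M : ℕ) * ∑ q ∈ Finset.range Q,
        ∫ x, ‖blockSum F (i₀ + q * L') L' x‖ ^ 2 * ‖blockSum F j₀ L x‖ ^ 4 := by
  set B : ℕ := (3 + 9 * c) * M with hB
  set g := blockSum F j₀ L with hg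
  have hgS := spec_block hF j₀ L
  rw [← hg] at hgS
  obtain ⟨Cg, hCg0, hCg⟩ := hgS.bdd
  simp_rw [blockSum_split F i₀ Q L']
  refine orth_weight (Finset.range Q) (fun q => blockSum F (i₀ + q * L') L') (fun x => ‖g x‖ ^ 4)
    (fun x => by positivity) (hgS.cont.norm.pow 4)
    ⟨Cg ^ 4, fun x => pow_le_pow_left₀ (norm_nonneg _) (hCg x) 4⟩
    (fun q _ => ⟨_, spec_block hF _ _⟩) (fun q q' => q ≤ q' + B ∧ q' ≤ q + B)
    (fun q q' h => ⟨h.2, h.1⟩) _ ?_ ?_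
  · intro q _
    have : (Finset.range Q).filter (fun q' => q ≤ q' + B ∧ q' ≤ q + B) ⊆
        Finset.Icc (q - B) (q + B) := by
      intro q' h
      simp only [Finset.mem_filter, Finset.mem_Icc] at h ⊢
      omega
    refine (Finset.card_le_card this).trans ?_
    rw [Nat.card_Icc]
    have : 2 * B + 1 ≤ (7 + 18 * c) * M := by rw [hB]; nlinarith
    omega
  · intro q hq q' hq' hn
    rw [Finset.mem_range] at hq hq'
    have hW : ∀ x, (((‖g x‖ ^ 4 : ℝ)) : ℂ) =
        (g x * (starRingEnd ℂ) (g x)) * (g x * (starRingEnd ℂ) (g x)) := by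
      intro x; rw [Complex.mul_conj']; push_cast; ring
    simp_rw [hW]
    have hgg := hgS.mul hgS.conj
    refine (((spec_block hF (i₀ + q * L') L').mul (spec_block hF (i₀ + q' * L') L').conj).mul
      (hgg.mul hgg)).integral_eq_zero ?_
    rintro ⟨_, ⟨ξ₁, ⟨i₁, hi₁, h₁⟩, ξ₂, ⟨i₂, hi₂, h₂⟩, rfl⟩, _,
      ⟨_, ⟨η₁, k₁, η₂, k₂, rfl⟩, _, ⟨η₃, k₃, η₄, k₄, rfl⟩, rfl⟩, hsum⟩
    have hj₀ : j₀ ∈ Finset.Ico j₀ (j₀ + L) := by rw [Finset.mem_Ico]; omega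
    have m₁ := sub_block_subset i₀ hq hi₁
    have m₂ := sub_block_subset i₀ hq' hi₂
    have key := transversal (u := u) (v := v) (c := c) hL hL' hd hLL (j₀ := j₀) (i₁ := i₁)
      (i₂ := i₂) ?_ ?_ ?_ h₁ h₂ k₁ k₂ k₃ k₄ ?_
    · rw [Finset.mem_Ico] at hi₁ hi₂
      have hlt : ((B : ℤ)) * L' < |i₁ - i₂| := by
        have hL'0 : (1 : ℤ) ≤ L' := by exact_mod_cast hL'
        rcases not_and_or.1 hn with h | h
        · have h' : (q' : ℤ) + B + 1 ≤ q := by omega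
          have := mul_le_mul_of_nonneg_right h' (by linarith : (0 : ℤ) ≤ L')
          refine lt_of_lt_of_le ?_ (le_abs_self _)
          nlinarith
        · have h' : (q : ℤ) + B + 1 ≤ q' := by omega
          have := mul_le_mul_of_nonneg_right h' (by linarith : (0 : ℤ) ≤ L')
          refine lt_of_lt_of_le ?_ (neg_le_abs _)
          nlinarith
      have h3 : (2 + 9 * (c : ℤ)) * M * L' ≤ (B : ℤ) * L' := by
        rw [hB]; push_cast
        apply mul_le_mul_of_nonneg_right _ (by positivity)
        apply mul_le_mul_of_nonneg_right _ (by positivity)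
        linarith
      linarith
    · rcases hsep with h | h
      · exact Or.inl ⟨(h _ m₁ _ hj₀).1, (h _ m₂ _ hj₀).1⟩
      · exact Or.inr ⟨(h _ m₁ _ hj₀).1, (h _ m₂ _ hj₀).1⟩
    · rcases hsep with h | h <;> have := h _ m₁ _ hj₀ <;> rw [abs_le] <;> constructor <;> omega
    · rcases hsep with h | h <;> have := h _ m₂ _ hj₀ <;> rw [abs_le] <;> constructor <;> omega
    · simpa [sub_eq_add_neg] using hsum

/-! ### Bilinear iteration and decoupling for the parabola -/

/-- The bilinear iteration. Assuming the decoupling bound with constant `A s ^ (2 i)` at all scales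
`M ^ i` with `i < n`, alternating the orthogonality step and Hölder's inequality `t` times gains a
factor `s ^ (2 ^ k * t)` for separated blocks. -/
lemma par_bilin {c M : ℕ} (hM : 1 ≤ M) {u v : E3 →ₗ[ℝ] ℝ} {F : ℤ → E3 → ℂ} {e : ℤ → ℝ}
    (h : ParFamily c u v F e) {A s : ℝ} (hA : 0 ≤ A) (hs : 1 ≤ s) {n m : ℕ} (hmn : 2 ^ m ≤ n)
    (IH : ∀ i < n, ∀ a, ∫ x, ‖blockSum F a (M ^ i) x‖ ^ 6 ≤
      A * s ^ (2 * i) * blockE e a (M ^ i) ^ 3) {G : ℝ} (hG : G = ((7 + 18 * c) * M : ℕ)) :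
    ∀ t k : ℕ, k + t = m → ∀ lev : ℕ, 1 ≤ lev → lev ≤ 2 * 2 ^ k → lev ≤ n → ∀ i₀ j₀ : ℤ,
      SepBlocks (M ^ n) (M ^ (n - 1)) i₀ (M ^ (n - lev)) j₀ (M ^ (n - 2 ^ k)) →
      (∫ x, ‖blockSum F i₀ (M ^ (n - lev)) x‖ ^ 2 * ‖blockSum F j₀ (M ^ (n - 2 ^ k)) x‖ ^ 4) *
          s ^ (2 ^ k * t) ≤
        G ^ 2 * A * s ^ (2 * n) * blockE e i₀ (M ^ (n - lev)) *
          blockE e j₀ (M ^ (n - 2 ^ k)) ^ 2 := by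
  have hs0 : 0 < s := by linarith
  have hG1 : 1 ≤ G := by
    rw [hG]; exact_mod_cast (by nlinarith : 1 ≤ (7 + 18 * c) * M)
  have hpos : ∀ k ≤ m, 1 ≤ 2 ^ k ∧ 2 ^ k ≤ n := fun k hk =>
    ⟨Nat.one_le_two_pow, (Nat.pow_le_pow_right (by norm_num) hk).trans hmn⟩
  -- the inductive bound with the full power of `s`
  have IH' : ∀ lev : ℕ, 1 ≤ lev → lev ≤ n → ∀ a,
      (∫ x, ‖blockSum F a (M ^ (n - lev)) x‖ ^ 6) * s ^ (2 * lev) ≤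
        A * s ^ (2 * n) * blockE e a (M ^ (n - lev)) ^ 3 := by
    intro lev h1 h2 a
    have := mul_le_mul_of_nonneg_right (IH (n - lev) (by omega) a)
      (pow_nonneg hs0.le (2 * lev))
    refine this.trans (le_of_eq ?_)
    have e1 : 2 * n = 2 * (n - lev) + 2 * lev := by omega
    rw [e1, pow_add]; ring
  intro t
  induction t with
  | zero =>
    intro k hk lev h1 h2 h3 i₀ j₀ _
    obtain rfl : k = m := by omega
    have hE1 := blockE_nonneg h.nonneg i₀ (M ^ (n - lev))
    have hE2 := blockE_nonneg h.nonneg j₀ (M ^ (n - 2 ^ k))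
    have hc := holder_cube (spec_block h.spec i₀ (M ^ (n - lev)))
      (spec_block h.spec j₀ (M ^ (n - 2 ^ k)))
    have one : ∀ lev : ℕ, 1 ≤ lev → lev ≤ n → ∀ a,
        (∫ x, ‖blockSum F a (M ^ (n - lev)) x‖ ^ 6) ≤
        A * s ^ (2 * n) * blockE e a (M ^ (n - lev)) ^ 3 := by
      intro lev h1 h2 a
      refine le_trans (le_mul_of_one_le_right (integral_nonneg fun x => by positivity) ?_)
        (IH' lev h1 h2 a)
      exact one_le_pow₀ hs
    have a1 := one lev h1 h3 i₀
    have a2 := one (2 ^ k) (hpos k le_rfl).1 (hpos k le_rfl).2 j₀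
    rw [mul_zero, pow_zero, mul_one]
    set X := ∫ x, ‖blockSum F i₀ (M ^ (n - lev)) x‖ ^ 2 * ‖blockSum F j₀ (M ^ (n - 2 ^ k)) x‖ ^ 4
    set E1 := blockE e i₀ (M ^ (n - lev))
    set E2 := blockE e j₀ (M ^ (n - 2 ^ k))
    have hX : X ≤ A * s ^ (2 * n) * E1 * E2 ^ 2 := by
      refine le_of_pow_le_pow_left₀ (n := 3) (by norm_num) (by positivity) ?_
      calc X ^ 3 ≤ _ := hc
        _ ≤ (A * s ^ (2 * n) * E1 ^ 3) * (A * s ^ (2 * n) * E2 ^ 3) ^ 2 := by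
            gcongr
        _ = _ := by ring
    refine hX.trans ?_
    have : A * s ^ (2 * n) * E1 * E2 ^ 2 ≤ G ^ 2 * (A * s ^ (2 * n) * E1 * E2 ^ 2) :=
      le_mul_of_one_le_left (by positivity) (one_le_pow₀ hG1)
    linarith
  | succ t ih =>
    intro k hk lev h1 h2 h3 i₀ j₀ hsep
    obtain ⟨p1, p2⟩ := hpos k (by omega)
    obtain ⟨p3, p4⟩ := hpos (k + 1) (by omega)
    have hdbl : 2 ^ (k + 1) = 2 * 2 ^ k := by ring
    set L := M ^ (n - 2 ^ k) with hL
    set L' := M ^ (n - 2 ^ (k + 1)) with hL'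
    set Q := M ^ (2 ^ (k + 1) - lev) with hQ
    have hI : M ^ (n - lev) = Q * L' := by
      rw [hQ, hL', ← pow_add]; congr 1; omega
    have hMd : M ^ n = M * M ^ (n - 1) := by
      rw [← pow_succ']; congr 1; omega
    rw [hI] at hsep ⊢
    rw [hMd] at hsep
    have hsep0 := hsep
    have horth := par_orth h.spec (M := M) (d := M ^ (n - 1)) (L := L) (L' := L') (Q := Q)
      (Nat.one_le_pow _ _ hM) (Nat.one_le_pow _ _ hM) (Nat.one_le_pow _ _ hM) hM
      (by rw [← hMd, hL, hL', ← pow_add, ← pow_add]; congr 1; omega) hsep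
    rw [← hG] at horth
    set E2 := blockE e j₀ L with hE2
    have hE20 : 0 ≤ E2 := blockE_nonneg h.nonneg _ _
    have hq : ∀ q ∈ Finset.range Q,
        (∫ x, ‖blockSum F (i₀ + q * L') L' x‖ ^ 2 * ‖blockSum F j₀ L x‖ ^ 4) *
          s ^ (2 ^ k * (t + 1)) ≤
        G * A * s ^ (2 * n) * blockE e (i₀ + q * L') L' * E2 ^ 2 := by
      intro q hq
      have hEq := blockE_nonneg h.nonneg (i₀ + q * L') L'
      have hsw := holder_swap (spec_block h.spec (i₀ + q * L') L') (spec_block h.spec j₀ L)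
      have b1 := ih (k + 1) (by omega) (2 ^ k) p1 (by omega) p2 j₀ (i₀ + q * L')
        (by rw [hMd]; exact (hsep0.mono (sub_block_subset i₀ (Finset.mem_range.1 hq))).symm)
      rw [← hL, ← hL', ← hE2] at b1
      have b2 := IH' (2 ^ k) p1 p2 j₀
      rw [← hL, ← hE2] at b2
      set X := ∫ x, ‖blockSum F (i₀ + q * L') L' x‖ ^ 2 * ‖blockSum F j₀ L x‖ ^ 4
      set Y := ∫ x, ‖blockSum F j₀ L x‖ ^ 2 * ‖blockSum F (i₀ + q * L') L' x‖ ^ 4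
      set Z := ∫ x, ‖blockSum F j₀ L x‖ ^ 6
      set Eq := blockE e (i₀ + q * L') L'
      have hZ : 0 ≤ Z := integral_nonneg fun x => by positivity
      have hG0 : 0 ≤ G := by linarith
      refine le_of_pow_le_pow_left₀ (n := 2) (by norm_num) (by positivity) ?_
      calc (X * s ^ (2 ^ k * (t + 1))) ^ 2 = X ^ 2 * (s ^ (2 ^ (k + 1) * t) * s ^ (2 * 2 ^ k)) := by
            rw [mul_pow, ← pow_add, ← pow_mul]; congr 2; ring
        _ ≤ (Y * Z) * (s ^ (2 ^ (k + 1) * t) * s ^ (2 * 2 ^ k)) := by gcongr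
        _ = (Y * s ^ (2 ^ (k + 1) * t)) * (Z * s ^ (2 * 2 ^ k)) := by ring
        _ ≤ (G ^ 2 * A * s ^ (2 * n) * E2 * Eq ^ 2) * (A * s ^ (2 * n) * E2 ^ 3) := by
            gcongr
        _ = _ := by ring
    calc _ ≤ (G * ∑ q ∈ Finset.range Q,
          ∫ x, ‖blockSum F (i₀ + q * L') L' x‖ ^ 2 * ‖blockSum F j₀ L x‖ ^ 4) *
            s ^ (2 ^ k * (t + 1)) := by gcongr
      _ = G * ∑ q ∈ Finset.range Q,
          (∫ x, ‖blockSum F (i₀ + q * L') L' x‖ ^ 2 * ‖blockSum F j₀ L x‖ ^ 4) *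
            s ^ (2 ^ k * (t + 1)) := by rw [mul_assoc, Finset.sum_mul]
      _ ≤ G * ∑ q ∈ Finset.range Q,
          G * A * s ^ (2 * n) * blockE e (i₀ + q * L') L' * E2 ^ 2 := by
            exact mul_le_mul_of_nonneg_left (Finset.sum_le_sum hq) (by linarith)
      _ = _ := by
          rw [blockE_split, Finset.mul_sum, Finset.mul_sum, Finset.sum_mul]
          exact Finset.sum_congr rfl fun q _ => by ring

/-- Either one block together with its neighbours dominates, or two separated blocks do. -/
lemma broad_narrow (a : ℕ → ℂ) (M : ℕ) :
    ‖∑ q ∈ Finset.range M, a q‖ ^ 6 ≤ 32 * 729 * ∑ q ∈ Finset.range M, ‖a q‖ ^ 6 +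
      32 * (M : ℝ) ^ 5 * ∑ p ∈ (Finset.range M ×ˢ Finset.range M).filter
        (fun p : ℕ × ℕ => p.1 + 2 ≤ p.2 ∨ p.2 + 2 ≤ p.1),
        (‖a p.1‖ ^ 2 * ‖a p.2‖ ^ 4 + ‖a p.2‖ ^ 2 * ‖a p.1‖ ^ 4) := by
  rcases Nat.eq_zero_or_pos M with rfl | hM
  · simp
  obtain ⟨q₀, hq₀, hmax⟩ := Finset.exists_max_image (Finset.range M) (fun q => ‖a q‖)
    ⟨0, Finset.mem_range.2 hM⟩
  set far := (Finset.range M).filter (fun q => q + 2 ≤ q₀ ∨ q₀ + 2 ≤ q)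
  set near := (Finset.range M).filter (fun q => ¬ (q + 2 ≤ q₀ ∨ q₀ + 2 ≤ q))
  have hnear : ∑ q ∈ near, ‖a q‖ ≤ 3 * ‖a q₀‖ := by
    have hc : near.card ≤ 3 := by
      have : near ⊆ Finset.Icc (q₀ - 1) (q₀ + 1) := by
        intro q hq
        simp only [near, Finset.mem_filter, Finset.mem_Icc] at hq ⊢
        omega
      refine (Finset.card_le_card this).trans ?_
      rw [Nat.card_Icc]; omega
    calc ∑ q ∈ near, ‖a q‖ ≤ near.card • ‖a q₀‖ :=
          Finset.sum_le_card_nsmul _ _ _ fun q hq => hmax q (Finset.mem_filter.1 hq).1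
      _ ≤ 3 * ‖a q₀‖ := by
          rw [nsmul_eq_mul]; gcongr; exact_mod_cast hc
  have hfar : (∑ q ∈ far, ‖a q‖) ^ 6 ≤ (M : ℝ) ^ 5 * ∑ q ∈ far, ‖a q‖ ^ 3 * ‖a q₀‖ ^ 3 := by
    have hc : far.card ≤ M := by
      simpa using Finset.card_filter_le (Finset.range M) (fun q => q + 2 ≤ q₀ ∨ q₀ + 2 ≤ q)
    calc (∑ q ∈ far, ‖a q‖) ^ 6 ≤ (far.card : ℝ) ^ 5 * ∑ q ∈ far, ‖a q‖ ^ 6 :=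
          pow_sum_le_card_mul_sum_pow (fun j _ => norm_nonneg _) 5
      _ ≤ (M : ℝ) ^ 5 * ∑ q ∈ far, ‖a q‖ ^ 3 * ‖a q₀‖ ^ 3 := by
          gcongr with q hq
          have := hmax q (Finset.mem_filter.1 hq).1
          calc ‖a q‖ ^ 6 = ‖a q‖ ^ 3 * ‖a q‖ ^ 3 := by ring
            _ ≤ _ := by gcongr
  have hpair : ∑ q ∈ far, ‖a q‖ ^ 3 * ‖a q₀‖ ^ 3 ≤
      ∑ p ∈ (Finset.range M ×ˢ Finset.range M).filter
        (fun p : ℕ × ℕ => p.1 + 2 ≤ p.2 ∨ p.2 + 2 ≤ p.1),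
        (‖a p.1‖ ^ 2 * ‖a p.2‖ ^ 4 + ‖a p.2‖ ^ 2 * ‖a p.1‖ ^ 4) := by
    calc ∑ q ∈ far, ‖a q‖ ^ 3 * ‖a q₀‖ ^ 3
        ≤ ∑ q ∈ far, (‖a q‖ ^ 2 * ‖a q₀‖ ^ 4 + ‖a q₀‖ ^ 2 * ‖a q‖ ^ 4) := by
          refine Finset.sum_le_sum fun q _ => ?_
          nlinarith [mul_nonneg (sq_nonneg (‖a q‖ * ‖a q₀‖)) (sq_nonneg (‖a q‖ - ‖a q₀‖)),
            mul_nonneg (pow_nonneg (norm_nonneg (a q)) 3) (pow_nonneg (norm_nonneg (a q₀)) 3)]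
      _ = ∑ p ∈ far.map ⟨fun q => (q, q₀), fun _ _ h => (Prod.mk.inj h).1⟩,
          (‖a p.1‖ ^ 2 * ‖a p.2‖ ^ 4 + ‖a p.2‖ ^ 2 * ‖a p.1‖ ^ 4) := by
          rw [Finset.sum_map]; rfl
      _ ≤ _ := by
          refine Finset.sum_le_sum_of_subset_of_nonneg ?_ fun _ _ _ => by positivity
          intro p hp
          rw [Finset.mem_map] at hp
          obtain ⟨q, hq, rfl⟩ := hp
          simp only [far, Finset.mem_filter] at hq
          simp only [Finset.mem_filter, Finset.mem_product]
          exact ⟨⟨hq.1, hq₀⟩, hq.2⟩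
  have hsingle : ‖a q₀‖ ^ 6 ≤ ∑ q ∈ Finset.range M, ‖a q‖ ^ 6 :=
    Finset.single_le_sum (f := fun q => ‖a q‖ ^ 6) (fun q _ => by positivity) hq₀
  calc ‖∑ q ∈ Finset.range M, a q‖ ^ 6 ≤ (∑ q ∈ near, ‖a q‖ + ∑ q ∈ far, ‖a q‖) ^ 6 := by
        gcongr
        rw [add_comm, Finset.sum_filter_add_sum_filter_not]
        exact norm_sum_le _ _
    _ ≤ 2 ^ 5 * ((∑ q ∈ near, ‖a q‖) ^ 6 + (∑ q ∈ far, ‖a q‖) ^ 6) :=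
        add_pow_le (by positivity) (by positivity) 6
    _ ≤ 2 ^ 5 * ((3 * ‖a q₀‖) ^ 6 + (M : ℝ) ^ 5 * ∑ q ∈ far, ‖a q‖ ^ 3 * ‖a q₀‖ ^ 3) := by
        gcongr
    _ ≤ 2 ^ 5 * (729 * (∑ q ∈ Finset.range M, ‖a q‖ ^ 6) + (M : ℝ) ^ 5 *
        ∑ p ∈ (Finset.range M ×ˢ Finset.range M).filter
        (fun p : ℕ × ℕ => p.1 + 2 ≤ p.2 ∨ p.2 + 2 ≤ p.1),
        (‖a p.1‖ ^ 2 * ‖a p.2‖ ^ 4 + ‖a p.2‖ ^ 2 * ‖a p.1‖ ^ 4)) := by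
        rw [mul_pow]; gcongr; norm_num
    _ = _ := by ring

lemma sepBlocks_of_far {M L q q' : ℕ} (a : ℤ) (hq : q < M) (hq' : q' < M)
    (h : q + 2 ≤ q' ∨ q' + 2 ≤ q) : SepBlocks (M * L) L (a + q * L) L (a + q' * L) L := by
  have key : ∀ {q q' : ℕ}, q < M → q' + 2 ≤ q →
      ∀ i ∈ Finset.Ico (a + (q : ℤ) * L) (a + q * L + L),
      ∀ j ∈ Finset.Ico (a + (q' : ℤ) * L) (a + q' * L + L), (L : ℤ) ≤ i - j ∧ i - j ≤ (M * L : ℕ) := by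
    intro q q' hq h i hi j hj
    rw [Finset.mem_Ico] at hi hj
    have hL : (0 : ℤ) ≤ L := Int.natCast_nonneg L
    have h1 : ((q' : ℤ) + 2) * L ≤ q * L := mul_le_mul_of_nonneg_right (by exact_mod_cast h) hL
    have h2 : ((q : ℤ) + 1) * L ≤ M * L := mul_le_mul_of_nonneg_right (by exact_mod_cast hq) hL
    have h3 : (0 : ℤ) ≤ q' * L := by positivity
    push_cast
    constructor <;> linarith
  rcases h with h | h
  · exact Or.inr fun i hi j hj => key hq' h j hj i hi
  · exact Or.inl (key hq h)

/-- Passage from scales below `M ^ n` to scale `M ^ n`. -/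
lemma par_step {c M : ℕ} (hM : 1 ≤ M) {u v : E3 →ₗ[ℝ] ℝ} {F : ℤ → E3 → ℂ} {e : ℤ → ℝ}
    (h : ParFamily c u v F e) {A s : ℝ} (hA : 0 ≤ A) (hs : 1 ≤ s) {n m : ℕ} (hmn : 2 ^ m ≤ n)
    (IH : ∀ i < n, ∀ a, ∫ x, ‖blockSum F a (M ^ i) x‖ ^ 6 ≤
      A * s ^ (2 * i) * blockE e a (M ^ i) ^ 3) {G : ℝ} (hG : G = ((7 + 18 * c) * M : ℕ))
    (h1 : 2 * (32 * 729) ≤ s ^ 2) (h2 : 2 * (64 * (M : ℝ) ^ 7 * G ^ 2) ≤ s ^ m) (a : ℤ) :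
    ∫ x, ‖blockSum F a (M ^ n) x‖ ^ 6 ≤ A * s ^ (2 * n) * blockE e a (M ^ n) ^ 3 := by
  have hs0 : 0 < s := by linarith
  have hn : 1 ≤ n := Nat.one_le_two_pow.trans hmn
  set L := M ^ (n - 1) with hL
  have hMn : M ^ n = M * L := by rw [hL, ← pow_succ']; congr 1; omega
  set S := (Finset.range M ×ˢ Finset.range M).filter
        (fun p : ℕ × ℕ => p.1 + 2 ≤ p.2 ∨ p.2 + 2 ≤ p.1) with hS
  set f : ℕ → E3 → ℂ := fun q => blockSum F (a + q * L) L with hf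
  set E := blockE e a (M ^ n) with hE
  have hE0 : 0 ≤ E := blockE_nonneg h.nonneg _ _
  have hEsum : E = ∑ q ∈ Finset.range M, blockE e (a + q * L) L := by
    rw [hE, hMn, blockE_split]
  have hEq : ∀ q ∈ Finset.range M, blockE e (a + q * L) L ≤ E := by
    intro q hq
    rw [hEsum]
    exact Finset.single_le_sum (f := fun q : ℕ => blockE e (a + q * L) L)
      (fun q _ => blockE_nonneg h.nonneg _ _) hq
  have hfS : ∀ q, Spec _ (f q) := fun q => spec_block h.spec (a + q * L) L
  have hi6 : ∀ q ∈ Finset.range M, Integrable (fun x => ‖f q x‖ ^ 6) :=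
    fun q _ => (hfS q).integrable_pow 5
  have hi24 : ∀ q q', Integrable (fun x => ‖f q x‖ ^ 2 * ‖f q' x‖ ^ 4) :=
    fun q q' => (hfS q).integrable_pow_mul (hfS q') 1 4
  have hX : ∀ q ∈ Finset.range M, ∀ q' ∈ Finset.range M, (q + 2 ≤ q' ∨ q' + 2 ≤ q) →
      (∫ x, ‖f q x‖ ^ 2 * ‖f q' x‖ ^ 4) * s ^ m ≤ G ^ 2 * A * s ^ (2 * n) * E ^ 3 := by
    intro q hq q' hq' hfar
    have := par_bilin hM h hA hs hmn IH hG m 0 (by omega) 1 le_rfl (by norm_num) hn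
      (a + q * L) (a + q' * L) (by
        rw [pow_zero, ← hL, hMn]
        exact sepBlocks_of_far a (Finset.mem_range.1 hq) (Finset.mem_range.1 hq') hfar)
    rw [pow_zero, ← hL, one_mul] at this
    refine this.trans ?_
    have e1 := hEq q hq
    have e2 := hEq q' hq'
    have e3 := blockE_nonneg h.nonneg (a + q * L) L
    have e4 := blockE_nonneg h.nonneg (a + q' * L) L
    calc _ ≤ G ^ 2 * A * s ^ (2 * n) * E * E ^ 2 := by gcongr
      _ = _ := by ring
  have hnarrow : (∑ q ∈ Finset.range M, ∫ x, ‖f q x‖ ^ 6) * s ^ 2 ≤ A * s ^ (2 * n) * E ^ 3 := by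
    calc (∑ q ∈ Finset.range M, ∫ x, ‖f q x‖ ^ 6) * s ^ 2
        ≤ (∑ q ∈ Finset.range M, A * s ^ (2 * (n - 1)) * blockE e (a + q * L) L ^ 3) * s ^ 2 := by
          gcongr with q hq
          exact IH (n - 1) (by omega) _
      _ = A * s ^ (2 * n) * ∑ q ∈ Finset.range M, blockE e (a + q * L) L ^ 3 := by
          rw [← Finset.mul_sum]
          have : 2 * n = 2 * (n - 1) + 2 := by omega
          rw [this, pow_add]; ring
      _ ≤ _ := by
          gcongr
          rw [hE, hMn]
          exact blockE_cube_sum_le h.nonneg a M L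
  have hbroad : (∑ p ∈ S, ((∫ x, ‖f p.1 x‖ ^ 2 * ‖f p.2 x‖ ^ 4) +
      ∫ x, ‖f p.2 x‖ ^ 2 * ‖f p.1 x‖ ^ 4)) * s ^ m ≤
        (M : ℝ) ^ 2 * (2 * (G ^ 2 * A * s ^ (2 * n) * E ^ 3)) := by
    rw [Finset.sum_mul]
    have hcard : (S.card : ℝ) ≤ (M : ℝ) ^ 2 := by
      have : S.card ≤ M ^ 2 := by
        refine (Finset.card_filter_le _ _).trans (le_of_eq ?_)
        simp [sq]
      exact_mod_cast this
    calc _ ≤ S.card • (2 * (G ^ 2 * A * s ^ (2 * n) * E ^ 3)) := by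
          refine Finset.sum_le_card_nsmul _ _ _ fun p hp => ?_
          rw [hS, Finset.mem_filter, Finset.mem_product] at hp
          have k1 := hX p.1 hp.1.1 p.2 hp.1.2 hp.2
          have k2 := hX p.2 hp.1.2 p.1 hp.1.1 hp.2.symm
          rw [add_mul]; linarith
      _ ≤ _ := by
          rw [nsmul_eq_mul]; gcongr
  have hmain : ∫ x, ‖blockSum F a (M ^ n) x‖ ^ 6 ≤
      32 * 729 * (∑ q ∈ Finset.range M, ∫ x, ‖f q x‖ ^ 6) + 32 * (M : ℝ) ^ 5 *
        ∑ p ∈ S, ((∫ x, ‖f p.1 x‖ ^ 2 * ‖f p.2 x‖ ^ 4) +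
          ∫ x, ‖f p.2 x‖ ^ 2 * ‖f p.1 x‖ ^ 4) := by
    have i1 : Integrable (fun x => 32 * 729 * ∑ q ∈ Finset.range M, ‖f q x‖ ^ 6) :=
      (integrable_finsetSum _ hi6).const_mul _
    have i3 : ∀ p ∈ S, Integrable (fun x => ‖f p.1 x‖ ^ 2 * ‖f p.2 x‖ ^ 4 +
        ‖f p.2 x‖ ^ 2 * ‖f p.1 x‖ ^ 4) := fun p _ => (hi24 _ _).add (hi24 _ _)
    have i2 : Integrable (fun x => 32 * (M : ℝ) ^ 5 * ∑ p ∈ S, (‖f p.1 x‖ ^ 2 * ‖f p.2 x‖ ^ 4 +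
        ‖f p.2 x‖ ^ 2 * ‖f p.1 x‖ ^ 4)) := (integrable_finsetSum _ i3).const_mul _
    calc _ ≤ ∫ x, (32 * 729 * ∑ q ∈ Finset.range M, ‖f q x‖ ^ 6 + 32 * (M : ℝ) ^ 5 *
          ∑ p ∈ S, (‖f p.1 x‖ ^ 2 * ‖f p.2 x‖ ^ 4 + ‖f p.2 x‖ ^ 2 * ‖f p.1 x‖ ^ 4)) := by
          refine integral_mono ((spec_block h.spec a _).integrable_pow 5) (i1.add i2) fun x => ?_
          simp only
          rw [hMn, blockSum_split]
          exact broad_narrow (fun q => f q x) M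
      _ = _ := by
          rw [integral_add i1 i2, integral_const_mul, integral_const_mul,
            integral_finsetSum _ hi6, integral_finsetSum _ i3]
          congr 2
          exact Finset.sum_congr rfl fun p _ => integral_add (hi24 _ _) (hi24 _ _)
  set X := ∑ q ∈ Finset.range M, ∫ x, ‖f q x‖ ^ 6
  set Y := ∑ p ∈ S, ((∫ x, ‖f p.1 x‖ ^ 2 * ‖f p.2 x‖ ^ 4) +
          ∫ x, ‖f p.2 x‖ ^ 2 * ‖f p.1 x‖ ^ 4)
  set T := A * s ^ (2 * n) * E ^ 3 with hT
  have hT0 : 0 ≤ T := by positivity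
  have hX0 : 0 ≤ X := Finset.sum_nonneg fun q _ => integral_nonneg fun x => by positivity
  have t1 : 2 * (32 * 729) * X ≤ T := by
    calc _ ≤ s ^ 2 * X := by gcongr
      _ = X * s ^ 2 := mul_comm _ _
      _ ≤ T := hnarrow
  have t2 : 2 * (32 * (M : ℝ) ^ 5 * Y) ≤ T := by
    have hsm : 0 < s ^ m := by positivity
    refine le_of_mul_le_mul_right ?_ hsm
    calc 2 * (32 * (M : ℝ) ^ 5 * Y) * s ^ m = 2 * (32 * (M : ℝ) ^ 5) * (Y * s ^ m) := by ring
      _ ≤ 2 * (32 * (M : ℝ) ^ 5) * ((M : ℝ) ^ 2 * (2 * (G ^ 2 * A * s ^ (2 * n) * E ^ 3))) := by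
          gcongr
      _ = T * (2 * (64 * (M : ℝ) ^ 7 * G ^ 2)) := by rw [hT]; ring
      _ ≤ T * s ^ m := by gcongr
  linarith

/-- The family `F` with all members outside the block `[a, a + N)` replaced by zero. -/
def padF {α : Type*} [Zero α] (F : ℤ → α) (a : ℤ) (N : ℕ) : ℤ → α :=
  fun j => if j ∈ Finset.Ico a (a + N) then F j else 0

lemma sum_padF {α β : Type*} [Zero α] [AddCommMonoid β] (F : ℤ → α) (g : α → β) (hg : g 0 = 0)
    (a : ℤ) {N L : ℕ} (h : N ≤ L) :
    ∑ j ∈ Finset.Ico a (a + L), g (padF F a N j) = ∑ j ∈ Finset.Ico a (a + N), g (F j) := by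
  have hsub : Finset.Ico a (a + N) ⊆ Finset.Ico a (a + L) :=
    Finset.Ico_subset_Ico le_rfl (by omega)
  rw [← Finset.sum_subset hsub]
  · exact Finset.sum_congr rfl fun j hj => by rw [padF, if_pos hj]
  · intro j _ hj
    rw [padF, if_neg hj, hg]

lemma blockSum_padF (F : ℤ → E3 → ℂ) (a : ℤ) {N L : ℕ} (h : N ≤ L) :
    blockSum (padF F a N) a L = blockSum F a N := by
  funext x
  exact sum_padF F (fun f => f x) rfl a h

lemma blockE_padF (e : ℤ → ℝ) (a : ℤ) {N L : ℕ} (h : N ≤ L) :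
    blockE (padF e a N) a L = blockE e a N :=
  sum_padF e id rfl a h

lemma spec_padF {T : ℤ → Set E3} {F : ℤ → E3 → ℂ} (hF : ∀ j, Spec (T j) (F j)) (a : ℤ) (N : ℕ)
    (j : ℤ) : Spec (T j) (padF F a N j) := by
  unfold padF
  split_ifs
  · exact hF j
  · exact Spec.zero

lemma nonneg_padF {e : ℤ → ℝ} (he : ∀ j, 0 ≤ e j) (a : ℤ) (N : ℕ) (j : ℤ) :
    0 ≤ padF e a N j := by
  unfold padF
  split_ifs
  · exact he j
  · exact le_rfl

lemma bound_padF {F : ℤ → E3 → ℂ} {e : ℤ → ℝ} (hb : ∀ j, ∫ x, ‖F j x‖ ^ 6 ≤ e j ^ 3)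
    (a : ℤ) (N : ℕ) (j : ℤ) : ∫ x, ‖padF F a N j x‖ ^ 6 ≤ padF e a N j ^ 3 := by
  unfold padF
  split_ifs
  · exact hb j
  · simp

/-- A power of `M` comparable to `N`. -/
lemma exists_pow_ge {M N : ℕ} (hM : 2 ≤ M) (hN : 1 ≤ N) : ∃ n, N ≤ M ^ n ∧ M ^ n ≤ M * N := by
  refine ⟨Nat.clog M N, Nat.le_pow_clog (by omega) N, ?_⟩
  rcases Nat.lt_or_ge 1 N with h | h
  · have h1 := Nat.pow_pred_clog_lt_self (b := M) (by omega) h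
    have h2 : 0 < Nat.clog M N := Nat.clog_pos (by omega) (by omega)
    have : M ^ Nat.clog M N = M * M ^ (Nat.clog M N).pred := by
      rw [← pow_succ']; congr 1; exact (Nat.succ_pred_eq_of_pos h2).symm
    rw [this]
    exact Nat.mul_le_mul_left _ h1.le
  · obtain rfl : N = 1 := by omega
    simp; omega

/-- The `ℓ²L⁶` decoupling theorem for (cylinders over) the parabola. -/
theorem par_decoupling (c : ℕ) {η : ℝ} (hη : 0 < η) :
    ∃ A : ℝ, 0 < A ∧ ∀ (u v : E3 →ₗ[ℝ] ℝ) (F : ℤ → E3 → ℂ) (e : ℤ → ℝ), ParFamily c u v F e →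
      ∀ (a : ℤ) (N : ℕ), 1 ≤ N →
        ∫ x, ‖blockSum F a N x‖ ^ 6 ≤ A * (N : ℝ) ^ η * blockE e a N ^ 3 := by
  obtain ⟨M, hM2, hMη⟩ : ∃ M : ℕ, 2 ≤ M ∧ (2 * (32 * 729) : ℝ) ≤ (M : ℝ) ^ η := by
    have h1 := ((tendsto_rpow_atTop hη).comp tendsto_natCast_atTop_atTop).eventually_ge_atTop
      (2 * (32 * 729) : ℝ)
    obtain ⟨M, h2, h3⟩ := (h1.and (Filter.eventually_ge_atTop 2)).exists
    exact ⟨M, h3, h2⟩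
  have hM0 : (0 : ℝ) ≤ M := Nat.cast_nonneg M
  have hM1 : (1 : ℝ) < M := by exact_mod_cast hM2
  set s : ℝ := (M : ℝ) ^ (η / 2) with hs
  have hs1 : 1 < s := Real.one_lt_rpow hM1 (by positivity)
  have hspow : ∀ n : ℕ, s ^ (2 * n) = ((M ^ n : ℕ) : ℝ) ^ η := by
    intro n
    rw [hs, ← Real.rpow_natCast, ← Real.rpow_mul hM0]
    push_cast
    rw [← Real.rpow_natCast (M : ℝ) n, ← Real.rpow_mul hM0]
    congr 1; ring
  obtain ⟨G, hG⟩ : ∃ G : ℝ, G = ((7 + 18 * c) * M : ℕ) := ⟨_, rfl⟩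
  obtain ⟨m, hm⟩ := pow_unbounded_of_one_lt (2 * (64 * (M : ℝ) ^ 7 * G ^ 2)) hs1
  set A : ℝ := ((M : ℝ) ^ (2 ^ m)) ^ 5 with hA
  have hA0 : 0 < A := by positivity
  refine ⟨A * (M : ℝ) ^ η, by positivity, fun u v F e h a N hN => ?_⟩
  have main : ∀ (F : ℤ → E3 → ℂ) (e : ℤ → ℝ), ParFamily c u v F e → ∀ n a,
      ∫ x, ‖blockSum F a (M ^ n) x‖ ^ 6 ≤ A * s ^ (2 * n) * blockE e a (M ^ n) ^ 3 := by
    intro F e h n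
    induction n using Nat.strong_induction_on with
    | _ n ih =>
      intro a
      rcases Nat.lt_or_ge n (2 ^ m) with hn | hn
      · refine (trivial_block h.spec h.nonneg h.bound a (M ^ n)).trans ?_
        have hE := blockE_nonneg h.nonneg a (M ^ n)
        gcongr
        calc (((M ^ n : ℕ) : ℝ)) ^ 5 ≤ A := by
              rw [hA]; push_cast; gcongr; exact hM1.le
          _ ≤ A * s ^ (2 * n) := le_mul_of_one_le_right hA0.le (one_le_pow₀ hs1.le)
      · exact par_step (by omega) h hA0.le hs1.le hn ih hG
          (by have := hspow 1; rw [mul_one, pow_one] at this; rw [this]; exact hMη) hm.le a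
  obtain ⟨n, hn1, hn2⟩ := exists_pow_ge hM2 hN
  have := main _ _ ⟨spec_padF h.spec a N, nonneg_padF h.nonneg a N, bound_padF h.bound a N⟩ n a
  rw [blockSum_padF F a hn1, blockE_padF e a hn1, hspow] at this
  refine this.trans ?_
  have hE := blockE_nonneg h.nonneg a N
  refine mul_le_mul_of_nonneg_right ?_ (by positivity)
  rw [mul_assoc]
  gcongr
  rw [← Real.mul_rpow hM0 (Nat.cast_nonneg N)]
  apply Real.rpow_le_rpow (Nat.cast_nonneg _) _ hη.le
  exact_mod_cast hn2

/-! ### From the parabola to a thin slab of the cone -/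

/-- Plates around the cone `x z = y²` at `y / x = j`, restricted to the slab
`1 ≤ x ≤ 1 + 1 / R²`. -/
def ConeSlab (x y z : E3 →ₗ[ℝ] ℝ) (c : ℝ) (R : ℕ) (j : ℤ) : Set E3 :=
  {ξ | 1 ≤ x ξ ∧ (R : ℝ) ^ 2 * (x ξ - 1) ≤ 1 ∧ |y ξ - j * x ξ| ≤ c ∧
    |z ξ - 2 * j * y ξ + (j : ℝ) ^ 2 * x ξ| ≤ c}

lemma slab_arith {P a b d e l k c : ℝ} (hP : |P| ≤ c) (ha0 : 0 ≤ a) (ha : a ≤ l)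
    (hb : |b| ≤ 2 * k) (hd0 : 0 ≤ d) (hd : d ≤ l) (he0 : 0 ≤ e) (he : e ≤ l) (hck : c ≤ k) :
    |P + a + b - d + e| ≤ 3 * k + 3 * l := by
  rw [abs_le] at *
  constructor <;> linarith

/-- On the slab, blocks of `L` consecutive plates look like caps of a parabola after the affine
change of variables `u = (y - a x) / L`, `v = (z - 2 a y + a² x) / L²`, as long as only `R` blocks
are considered: the cone is within `O(1)` of a cylinder at this scale. -/
lemma slab_subset_theta {x y z : E3 →ₗ[ℝ] ℝ} {c R L : ℕ} (hR : 2 ≤ R) (hL : 1 ≤ L) (a q j : ℤ)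
    (hq0 : 0 ≤ q) (hq : q < R) (hj1 : a + q * L ≤ j) (hj2 : j < a + q * L + L) {ξ : E3}
    (hξ : ξ ∈ ConeSlab x y z c R j) :
    ξ ∈ Theta ((L : ℝ)⁻¹ • (y - (a : ℝ) • x))
      (((L : ℝ) ^ 2)⁻¹ • (z - (2 * a : ℝ) • y + ((a : ℝ) ^ 2) • x)) ((3 * c + 3 : ℕ) : ℝ) q := by
  obtain ⟨h1, h2, h3, h4⟩ := hξ
  have hL0 : (1 : ℝ) ≤ L := by exact_mod_cast hL
  have hR0 : (2 : ℝ) ≤ R := by exact_mod_cast hR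
  have hc : (0 : ℝ) ≤ c := Nat.cast_nonneg c
  simp only [Theta, Set.mem_ofPred_eq, LinearMap.smul_apply, LinearMap.sub_apply,
    LinearMap.add_apply, smul_eq_mul]
  set X := x ξ
  obtain ⟨i, hi⟩ : ∃ i : ℝ, i = (j : ℝ) - a - q * L := ⟨_, rfl⟩
  have hi0 : 0 ≤ i := by
    have : ((a : ℝ) + q * L) ≤ j := by exact_mod_cast hj1
    linarith
  have hi1 : i ≤ L := by
    have : (j : ℝ) < ((a : ℝ) + q * L) + L := by exact_mod_cast hj2
    linarith
  obtain ⟨J, hJ⟩ : ∃ J : ℝ, J = (j : ℝ) - a := ⟨_, rfl⟩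
  have hJ0 : 0 ≤ J := by
    have : (0 : ℝ) ≤ (q : ℝ) * L := mul_nonneg (by exact_mod_cast hq0) (by linarith)
    linarith
  have hJ1 : J ≤ R * L := by
    have h : ((q : ℝ) + 1) ≤ R := by exact_mod_cast hq
    have : ((q : ℝ) + 1) * L ≤ R * L := mul_le_mul_of_nonneg_right h (by linarith)
    linarith
  obtain ⟨Y, hY⟩ : ∃ Y : ℝ, Y = y ξ - a * X := ⟨_, rfl⟩
  obtain ⟨Z, hZ⟩ : ∃ Z : ℝ, Z = z ξ - 2 * a * y ξ + (a : ℝ) ^ 2 * X := ⟨_, rfl⟩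
  have e1 : y ξ - j * X = Y - J * X := by rw [hY, hJ]; ring
  have e2 : z ξ - 2 * j * y ξ + (j : ℝ) ^ 2 * X = Z - 2 * J * Y + J ^ 2 * X := by
    rw [hY, hJ, hZ]; ring
  have hqi : (q : ℝ) * L = J - i := by rw [hi, hJ]; ring
  rw [e1] at h3
  rw [e2] at h4
  rw [← hY, ← hZ]
  -- the deviation of `x` from `1` is harmless
  have k0 : 0 ≤ X - 1 := by linarith
  have k1 : J * (X - 1) ≤ L / 2 := by
    have : J * (X - 1) * R ≤ L := by
      calc J * (X - 1) * R ≤ (R * L) * (X - 1) * R := by gcongr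
        _ = L * (R ^ 2 * (X - 1)) := by ring
        _ ≤ L * 1 := by gcongr
        _ = L := mul_one _
    have h' : J * (X - 1) * 2 ≤ J * (X - 1) * R := by gcongr
    linarith
  have k1' : 0 ≤ J * (X - 1) := mul_nonneg hJ0 k0
  have k2 : J ^ 2 * (X - 1) ≤ L ^ 2 := by
    calc J ^ 2 * (X - 1) ≤ (R * L) ^ 2 * (X - 1) := by gcongr
      _ = L ^ 2 * (R ^ 2 * (X - 1)) := by ring
      _ ≤ L ^ 2 * 1 := by gcongr
      _ = L ^ 2 := mul_one _
  have k2' : 0 ≤ J ^ 2 * (X - 1) := mul_nonneg (sq_nonneg _) k0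
  have hL2 : (L : ℝ) ≤ L ^ 2 := by nlinarith
  constructor
  · have : (L : ℝ)⁻¹ * Y - q = (L : ℝ)⁻¹ * (Y - J * X + J * (X - 1) + i) := by
      have : (L : ℝ)⁻¹ * (Y - J * X + J * (X - 1) + i) = (L : ℝ)⁻¹ * (Y - q * L) := by
        rw [hqi]; ring
      rw [this]; field_simp
    rw [this, abs_mul, abs_of_pos (by positivity), inv_mul_le_iff₀ (by linarith)]
    rw [abs_le] at h3 ⊢
    have hcL : (c : ℝ) ≤ c * L := le_mul_of_one_le_right hc hL0
    push_cast
    constructor <;> nlinarith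
  · have : ((L : ℝ) ^ 2)⁻¹ * Z - 2 * q * ((L : ℝ)⁻¹ * Y) + (q : ℝ) ^ 2 = ((L : ℝ) ^ 2)⁻¹ *
        ((Z - 2 * J * Y + J ^ 2 * X) + 2 * i * (J * (X - 1)) + 2 * i * (Y - J * X)
          - J ^ 2 * (X - 1) + i ^ 2) := by
      have : (Z - 2 * J * Y + J ^ 2 * X) + 2 * i * (J * (X - 1)) + 2 * i * (Y - J * X)
          - J ^ 2 * (X - 1) + i ^ 2 = Z - 2 * (J - i) * Y + (J - i) ^ 2 := by ring
      rw [this, ← hqi]; field_simp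
    rw [this, abs_mul, abs_of_pos (by positivity), inv_mul_le_iff₀ (by positivity)]
    have m1 : 2 * i * (J * (X - 1)) ≤ L ^ 2 := by
      calc 2 * i * (J * (X - 1)) ≤ 2 * L * (L / 2) := by gcongr
        _ = L ^ 2 := by ring
    have m1' : 0 ≤ 2 * i * (J * (X - 1)) := by positivity
    have m2 : |2 * i * (Y - J * X)| ≤ 2 * L ^ 2 * c := by
      rw [abs_mul, abs_of_nonneg (by positivity : (0 : ℝ) ≤ 2 * i)]
      gcongr
      exact hi1.trans hL2
    have m3 : i ^ 2 ≤ L ^ 2 := by gcongr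
    have m3' : 0 ≤ i ^ 2 := sq_nonneg i
    have m4 : (c : ℝ) ≤ c * L ^ 2 := le_mul_of_one_le_right hc (by nlinarith)
    have m7 : (L : ℝ) ^ 2 * ((3 * c + 3 : ℕ) : ℝ) = 3 * (c * L ^ 2) + 3 * L ^ 2 := by
      push_cast; ring
    rw [m7]
    exact slab_arith h4 m1' m1 (m2.trans (le_of_eq (by ring))) k2' k2 m3' m3 m4

lemma sum_Ico_eq_range {α : Type*} [AddCommMonoid α] (g : ℤ → α) (a : ℤ) (N : ℕ) :
    ∑ j ∈ Finset.Ico a (a + N), g j = ∑ q ∈ Finset.range N, g (a + q) := by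
  have h := sum_Ico_split g a N 1
  simp only [mul_one, Nat.cast_one] at h
  rw [h]
  refine Finset.sum_congr rfl fun q _ => ?_
  have : Finset.Ico (a + (q : ℤ)) (a + q + 1) = {a + (q : ℤ)} := by ext; simp; omega
  rw [this, Finset.sum_singleton]

/-- The `ℓ²L⁶` decoupling theorem for the cone, restricted to a slab whose thickness depends only on
the loss `η`. -/
theorem slab_decoupling (c : ℕ) {η : ℝ} (hη : 0 < η) :
    ∃ (R : ℕ) (A : ℝ), 2 ≤ R ∧ 0 < A ∧
      ∀ (x y z : E3 →ₗ[ℝ] ℝ) (F : ℤ → E3 → ℂ) (e : ℤ → ℝ),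
      (∀ j, Spec (ConeSlab x y z c R j) (F j)) → (∀ j, 0 ≤ e j) →
      (∀ j, ∫ x, ‖F j x‖ ^ 6 ≤ e j ^ 3) → ∀ (a : ℤ) (N : ℕ), 1 ≤ N →
        ∫ x, ‖blockSum F a N x‖ ^ 6 ≤ A * (N : ℝ) ^ η * blockE e a N ^ 3 := by
  obtain ⟨A₀, hA₀, hpar⟩ := par_decoupling (3 * c + 3) (half_pos hη)
  obtain ⟨R, hR2, hRη⟩ : ∃ R : ℕ, 2 ≤ R ∧ A₀ ≤ (R : ℝ) ^ (η / 2) := by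
    have h1 := ((tendsto_rpow_atTop (half_pos hη)).comp
      tendsto_natCast_atTop_atTop).eventually_ge_atTop A₀
    obtain ⟨M, h2, h3⟩ := (h1.and (Filter.eventually_ge_atTop 2)).exists
    exact ⟨M, h3, h2⟩
  have hR0 : (0 : ℝ) < R := by exact_mod_cast (by omega : 0 < R)
  set κ : ℝ := (R : ℝ) ^ (η / 3) with hκ
  have hκ0 : 0 < κ := by positivity
  have hκ3 : κ ^ 3 = (R : ℝ) ^ η := by
    rw [hκ, ← Real.rpow_natCast, ← Real.rpow_mul hR0.le]; congr 1; push_cast; ring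
  have hAR : A₀ * (R : ℝ) ^ (η / 2) ≤ κ ^ 3 := by
    rw [hκ3]
    calc A₀ * (R : ℝ) ^ (η / 2) ≤ (R : ℝ) ^ (η / 2) * (R : ℝ) ^ (η / 2) := by gcongr
      _ = _ := by rw [← Real.rpow_add hR0]; congr 1; ring
  refine ⟨R, (R : ℝ) ^ η, hR2, by positivity, fun x y z F e hF he hb a N hN => ?_⟩
  have main : ∀ (F : ℤ → E3 → ℂ) (e : ℤ → ℝ), (∀ j, Spec (ConeSlab x y z c R j) (F j)) →
      (∀ j, 0 ≤ e j) → (∀ j, ∫ x, ‖F j x‖ ^ 6 ≤ e j ^ 3) → ∀ k a,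
      ∫ x, ‖blockSum F a (R ^ k) x‖ ^ 6 ≤ (κ ^ k * blockE e a (R ^ k)) ^ 3 := by
    intro F e hF he hb k
    induction k with
    | zero =>
      intro a
      have := trivial_block hF he hb a 1
      simpa using this
    | succ k ih =>
      intro a
      set L := R ^ k with hL
      have hL1 : 1 ≤ L := Nat.one_le_pow _ _ (by omega)
      set G : ℤ → E3 → ℂ := padF (fun q => blockSum F (a + q * L) L) 0 R with hG
      set d : ℤ → ℝ := padF (fun q => κ ^ k * blockE e (a + q * L) L) 0 R with hd
      have hpf : ParFamily (3 * c + 3) ((L : ℝ)⁻¹ • (y - (a : ℝ) • x))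
          (((L : ℝ) ^ 2)⁻¹ • (z - (2 * a : ℝ) • y + ((a : ℝ) ^ 2) • x)) G d := by
        refine ⟨fun q => ?_, fun q => ?_, fun q => ?_⟩
        · simp only [hG, padF]
          split_ifs with hq
          · rw [Finset.mem_Ico] at hq
            refine (spec_block hF (a + q * L) L).mono ?_
            rintro ξ ⟨j, hj, hξ⟩
            rw [Finset.mem_Ico] at hj
            exact slab_subset_theta hR2 hL1 a q j hq.1 (by omega) hj.1 hj.2 hξ
          · exact Spec.zero
        · exact nonneg_padF (fun q => mul_nonneg (by positivity) (blockE_nonneg he _ _)) 0 R q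
        · exact bound_padF (fun q => ih (a + q * L)) 0 R q
      have key := hpar _ _ G d hpf 0 R (by omega)
      have eS : blockSum G 0 R = blockSum F a (R ^ (k + 1)) := by
        rw [hG, blockSum_padF _ _ le_rfl]
        funext w
        rw [pow_succ', ← hL, blockSum_split, blockSum, sum_Ico_eq_range]
        simp
      have eE : blockE d 0 R = κ ^ k * blockE e a (R ^ (k + 1)) := by
        rw [hd, blockE_padF _ _ le_rfl]
        rw [pow_succ', ← hL, blockE_split, blockE, sum_Ico_eq_range, Finset.mul_sum]
        simp
      rw [eS, eE] at key
      refine key.trans ?_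
      have hE := blockE_nonneg he a (R ^ (k + 1))
      calc _ ≤ κ ^ 3 * (κ ^ k * blockE e a (R ^ (k + 1))) ^ 3 := by gcongr
        _ = _ := by ring
  obtain ⟨n, hn1, hn2⟩ := exists_pow_ge hR2 hN
  have := main _ _ (spec_padF hF a N) (nonneg_padF he a N) (bound_padF hb a N) n a
  rw [blockSum_padF F a hn1, blockE_padF e a hn1] at this
  refine this.trans ?_
  have hE := blockE_nonneg he a N
  rw [mul_pow]
  refine mul_le_mul_of_nonneg_right ?_ (by positivity)
  rw [← Real.mul_rpow hR0.le (Nat.cast_nonneg N)]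
  calc (κ ^ n) ^ 3 = ((R ^ n : ℕ) : ℝ) ^ η := by
        rw [← pow_mul, mul_comm n 3, pow_mul, hκ3, ← Real.rpow_natCast, ← Real.rpow_mul hR0.le]
        push_cast
        rw [← Real.rpow_natCast (R : ℝ) n, ← Real.rpow_mul hR0.le, mul_comm]
    _ ≤ _ := by
        apply Real.rpow_le_rpow (Nat.cast_nonneg _) _ hη.le
        exact_mod_cast hn2

/-! ### Smooth Fourier multipliers -/

lemma lintegral_jensen {a b : E3 → ℝ≥0∞} (ha : Measurable a) (hb : Measurable b) {q : ℝ}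
    (hq : 1 < q) :
    (∫⁻ t, a t * b t) ^ q ≤ (∫⁻ t, a t) ^ (q - 1) * ∫⁻ t, a t * b t ^ q := by
  have hc := Real.HolderConjugate.conjExponent hq
  set q' := q.conjExponent
  have hq0 : 0 < q := by linarith
  have h := ENNReal.lintegral_mul_le_Lp_mul_Lq (volume.withDensity a) hc.symm
    (f := fun _ => 1) (g := b) aemeasurable_const hb.aemeasurable
  simp only [Pi.mul_apply, one_mul, ENNReal.one_rpow, lintegral_const] at h
  rw [lintegral_withDensity_eq_lintegral_mul _ ha hb,
    lintegral_withDensity_eq_lintegral_mul _ ha (hb.pow_const q), withDensity_apply _ MeasurableSet.univ,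
    Measure.restrict_univ] at h
  simp only [Pi.mul_apply] at h
  calc _ ≤ ((∫⁻ t, a t) ^ (1 / q') * (∫⁻ t, a t * b t ^ q) ^ (1 / q)) ^ q :=
        ENNReal.rpow_le_rpow h hq0.le
    _ = _ := by
        rw [ENNReal.mul_rpow_of_nonneg _ _ hq0.le, ← ENNReal.rpow_mul, ← ENNReal.rpow_mul,
          one_div_mul_cancel hq0.ne', ENNReal.rpow_one]
        congr 2
        have := hc.div_conj_eq_sub_one
        rw [← this]; ring

/-- Young's inequality `‖k ⋆ g‖_q ≤ ‖k‖₁ ‖g‖_q`. -/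
lemma young {k g : E3 → ℂ} (hk : Measurable k) (hg : Measurable g) {q : ℝ} (hq : 1 < q) :
    ∫⁻ x, ‖∫ t, k t * g (x - t)‖ₑ ^ q ≤ (∫⁻ t, ‖k t‖ₑ) ^ q * ∫⁻ x, ‖g x‖ₑ ^ q := by
  have hq0 : 0 < q := by linarith
  calc ∫⁻ x, ‖∫ t, k t * g (x - t)‖ₑ ^ q
      ≤ ∫⁻ x, (∫⁻ t, ‖k t‖ₑ) ^ (q - 1) * ∫⁻ t, ‖k t‖ₑ * ‖g (x - t)‖ₑ ^ q := by
        refine lintegral_mono fun x => ?_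
        refine le_trans (ENNReal.rpow_le_rpow (enorm_integral_le_lintegral_enorm _) hq0.le) ?_
        simp_rw [enorm_mul]
        exact lintegral_jensen hk.enorm (hg.comp (measurable_const.sub measurable_id)).enorm hq
    _ = (∫⁻ t, ‖k t‖ₑ) ^ (q - 1) * ∫⁻ x, ∫⁻ t, ‖k t‖ₑ * ‖g (x - t)‖ₑ ^ q := by
        have hm : Measurable (fun p : E3 × E3 => ‖k p.2‖ₑ * ‖g (p.1 - p.2)‖ₑ ^ q) := by fun_prop
        rw [lintegral_const_mul]
        exact hm.lintegral_prod_right'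
    _ = (∫⁻ t, ‖k t‖ₑ) ^ (q - 1) * ∫⁻ t, ‖k t‖ₑ * ∫⁻ x, ‖g x‖ₑ ^ q := by
        have hm : Measurable (fun p : E3 × E3 => ‖k p.2‖ₑ * ‖g (p.1 - p.2)‖ₑ ^ q) := by fun_prop
        rw [lintegral_lintegral_swap hm.aemeasurable]
        congr 1
        refine lintegral_congr fun t => ?_
        rw [lintegral_const_mul _ (by fun_prop)]
        congr 1
        exact lintegral_sub_right_eq_self (fun x => ‖g x‖ₑ ^ q) t
    _ = _ := by
        rw [lintegral_mul_const _ hk.enorm, ← mul_assoc]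
        congr 1
        nth_rw 2 [← ENNReal.rpow_one (∫⁻ t, ‖k t‖ₑ)]
        rw [← ENNReal.rpow_add_of_nonneg _ _ (by linarith) zero_le_one]
        congr 1; ring

/-- A kernel whose Fourier transform is `Ψ ∘ A`, with `L¹` norm independent of the linear
isomorphism `A`. -/
lemma exists_kernel {Ψ : E3 → ℂ} (hΨ : ContDiff ℝ (⊤ : ℕ∞) Ψ) (hc : HasCompactSupport Ψ) :
    ∃ B : ℝ, 0 ≤ B ∧ ∀ A : E3 ≃ₗ[ℝ] E3, ∃ k : E3 → ℂ, Integrable k ∧ Continuous k ∧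
      (∃ C, ∀ x, ‖k x‖ ≤ C) ∧ (𝓕 k = fun ξ => Ψ (A ξ)) ∧ ∫⁻ x, ‖k x‖ₑ ≤ ENNReal.ofReal B := by
  set Φ : SchwartzMap E3 ℂ := hc.toSchwartzMap hΨ with hΦ
  set κ : SchwartzMap E3 ℂ := 𝓕⁻ Φ with hκ
  have hκF : 𝓕 (κ : E3 → ℂ) = Ψ := by
    have : 𝓕 κ = Φ := FourierTransform.fourier_fourierInv_eq Φ
    have h2 : (𝓕 κ : SchwartzMap E3 ℂ) = 𝓕 (κ : E3 → ℂ) := SchwartzMap.fourier_coe κ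
    rw [← h2, this]; rfl
  refine ⟨∫ x, ‖κ x‖, integral_nonneg fun _ => norm_nonneg _, fun A => ?_⟩
  -- `S` is the inverse adjoint of `A`
  set S : E3 ≃ₗ[ℝ] E3 := LinearEquiv.ofLinearMap (LinearMap.adjoint (A.symm : E3 →ₗ[ℝ] E3))
    (LinearMap.adjoint (A : E3 →ₗ[ℝ] E3))
    (by rw [← LinearMap.adjoint_comp]; simp)
    (by rw [← LinearMap.adjoint_comp]; simp) with hS
  have hdet : LinearMap.det (S : E3 →ₗ[ℝ] E3) ≠ 0 := (LinearEquiv.isUnit_det' S).ne_zero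
  set d : ℝ := |LinearMap.det (S : E3 →ₗ[ℝ] E3)| with hd
  have hd0 : 0 < d := abs_pos.2 hdet
  have hScont : Continuous S := LinearMap.continuous_of_finiteDimensional (S : E3 →ₗ[ℝ] E3)
  have hmap : Measure.map S (volume : Measure E3) = ENNReal.ofReal d⁻¹ • volume := by
    have := Measure.map_linearMap_addHaar_eq_smul_addHaar (volume : Measure E3) hdet
    rw [abs_inv, ← hd] at this
    exact this
  have hemb : MeasurableEmbedding S := S.toContinuousLinearEquiv.toHomeomorph.measurableEmbedding
  have hint : ∀ (g : E3 → ℂ), ∫ x, g (S x) = d⁻¹ • ∫ y, g y := by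
    intro g
    rw [← hemb.integral_map, hmap, integral_smul_measure, ENNReal.toReal_ofReal (by positivity)]
  have hinte : ∀ (g : E3 → ℂ), Integrable g → Integrable (fun x => g (S x)) := by
    intro g hg
    refine hemb.integrable_map_iff.1 ?_
    rw [hmap]
    exact hg.smul_measure ENNReal.ofReal_ne_top
  refine ⟨fun x => (d : ℂ) * κ (S x), (hinte _ κ.integrable).const_mul _,
    continuous_const.mul (κ.continuous.comp hScont), ?_, ?_, ?_⟩
  · obtain ⟨C, hC⟩ : ∃ C, ∀ x, ‖κ x‖ ≤ C := by
      refine ⟨_, fun x => SchwartzMap.norm_le_seminorm ℝ κ x⟩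
    refine ⟨d * C, fun x => ?_⟩
    rw [norm_mul, Complex.norm_real, Real.norm_of_nonneg hd0.le]
    gcongr
    exact hC _
  · funext ξ
    rw [← hκF, Real.fourier_eq, Real.fourier_eq]
    have : ∀ x, (Real.fourierChar (-inner ℝ x ξ)) • ((d : ℂ) * κ (S x)) =
        (fun y => (d : ℂ) * ((Real.fourierChar (-inner ℝ y (A ξ))) • κ y)) (S x) := by
      intro x
      have : inner ℝ (S x) (A ξ) = inner ℝ x ξ := by
        have : S x = LinearMap.adjoint (A.symm : E3 →ₗ[ℝ] E3) x := rfl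
        rw [this, LinearMap.adjoint_inner_left]; simp
      simp only [this, Circle.smul_def, smul_eq_mul]; ring
    rw [integral_congr_ae (ae_of_all _ this),
      hint (fun y => (d : ℂ) * ((Real.fourierChar (-inner ℝ y (A ξ))) • κ y)),
      integral_const_mul, ← smul_mul_assoc, Complex.real_smul, ← Complex.ofReal_mul,
      inv_mul_cancel₀ hd0.ne', Complex.ofReal_one, one_mul]
  · have h1 : ∀ x, ‖(d : ℂ) * κ (S x)‖ₑ = (fun y => ENNReal.ofReal d * ‖κ y‖ₑ) (S x) := by
      intro x
      simp only [enorm_mul]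
      congr 1
      rw [← ofReal_norm, Complex.norm_real, Real.norm_of_nonneg hd0.le]
    rw [lintegral_congr h1, ← hemb.lintegral_map (fun y => ENNReal.ofReal d * ‖κ y‖ₑ), hmap, lintegral_smul_measure, lintegral_const_mul' _ _ ENNReal.ofReal_ne_top,
      smul_eq_mul, ← mul_assoc, ← ENNReal.ofReal_mul (by positivity), inv_mul_cancel₀ hd0.ne',
      ENNReal.ofReal_one, one_mul, ofReal_integral_norm_eq_lintegral_enorm κ.integrable]

/-- The Fourier multiplier operators with symbols `Ψ ∘ A`: uniform bounds in the linear
isomorphism `A`. -/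
lemma exists_op {Ψ : E3 → ℂ} (hΨ : ContDiff ℝ (⊤ : ℕ∞) Ψ) (hc : HasCompactSupport Ψ) :
    ∃ B : ℝ, 0 ≤ B ∧ ∀ A : E3 ≃ₗ[ℝ] E3, ∃ T : (E3 → ℂ) → (E3 → ℂ),
      (∀ g, Integrable g → Spec {ξ | Ψ (A ξ) ≠ 0} (T g) ∧ 𝓕 (T g) = fun ξ => Ψ (A ξ) * 𝓕 g ξ) ∧
      (∀ g g', Integrable g → Integrable g' → T (g + g') = T g + T g') ∧
      (∀ g, Measurable g → ∀ q : ℝ, 1 < q →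
        ∫⁻ x, ‖T g x‖ₑ ^ q ≤ ENNReal.ofReal B ^ q * ∫⁻ x, ‖g x‖ₑ ^ q) := by
  obtain ⟨B, hB, h⟩ := exists_kernel hΨ hc
  refine ⟨B, hB, fun A => ?_⟩
  obtain ⟨k, hki, hkc, ⟨C, hC⟩, hkF, hkB⟩ := h A
  have hbdd : BddAbove (Set.range fun x => ‖k x‖) := ⟨C, by rintro _ ⟨x, rfl⟩; exact hC x⟩
  have hconv : ∀ g : E3 → ℂ, (fun x => ∫ t, k t * g (x - t)) =
      convolution k g (ContinuousLinearMap.mul ℂ ℂ) volume := fun g => rfl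
  have hkg : ∀ g : E3 → ℂ, Integrable g → ∀ x, Integrable (fun t => k t * g (x - t)) := by
    intro g hg x
    exact (hg.comp_sub_left x).bdd_mul hkc.aestronglyMeasurable (ae_of_all _ hC)
  refine ⟨fun g x => ∫ t, k t * g (x - t), fun g hg => ?_, fun g g' hg hg' => ?_,
    fun g hg q hq => ?_⟩
  · have hF : 𝓕 (fun x => ∫ t, k t * g (x - t)) = fun ξ => Ψ (A ξ) * 𝓕 g ξ := by
      funext ξ
      rw [hconv, Real.fourier_mul_convolution_eq hki hg, hkF]
    refine ⟨⟨?_, ?_, ?_, ?_⟩, hF⟩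
    · exact hki.integrable_convolution (ContinuousLinearMap.mul ℂ ℂ) hg
    · exact hbdd.continuous_convolution_left_of_integrable (ContinuousLinearMap.mul ℂ ℂ) hkc hg
    · rw [hF]
      have hi : Integrable (fun ξ => Ψ (A ξ)) := by
        have hAc : Continuous A := LinearMap.continuous_of_finiteDimensional (A : E3 →ₗ[ℝ] E3)
        refine (hΨ.continuous.comp hAc).integrable_of_hasCompactSupport ?_
        exact hc.comp_homeomorph A.toContinuousLinearEquiv.toHomeomorph
      exact hi.mul_bdd (continuous_fourier_of_integrable hg).aestronglyMeasurable
        (ae_of_all _ (norm_fourier_le g))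
    · intro ξ hξ
      rw [hF]
      have : Ψ (A ξ) = 0 := by simpa using hξ
      simp [this]
  · funext x
    simp only [Pi.add_apply, mul_add]
    exact integral_add (hkg g hg x) (hkg g' hg' x)
  · refine (young hkc.measurable hg hq).trans ?_
    gcongr

/-! ### Real interpolation between `L²` and `L⁶` -/

lemma layer_hi {p a : ℝ} (hp : 2 < p) (ha : 0 ≤ a) :
    ∫⁻ t in Ioi (0:ℝ), ENNReal.ofReal (t ^ (p - 3)) *
      (if t < a then ENNReal.ofReal (a ^ (2:ℝ)) else 0) ≤ ENNReal.ofReal (a ^ p / (p - 2)) := by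
  have h1 : ∀ t : ℝ, ENNReal.ofReal (t ^ (p - 3)) *
      (if t < a then ENNReal.ofReal (a ^ (2:ℝ)) else 0) =
      (Iio a).indicator (fun t => ENNReal.ofReal (t ^ (p - 3) * a ^ (2:ℝ))) t := by
    intro t
    by_cases h : t < a
    · rw [if_pos h, indicator_of_mem (by exact h), ENNReal.ofReal_mul' (by positivity)]
    · rw [if_neg h, indicator_of_notMem (by exact h), mul_zero]
  simp_rw [h1]
  rw [lintegral_indicator measurableSet_Iio, Measure.restrict_restrict measurableSet_Iio]
  have h2 : Iio a ∩ Ioi 0 = Ioo 0 a := by ext; simp [and_comm]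
  rw [h2, restrict_Ioo_eq_restrict_Ioc]
  have hii : IntervalIntegrable (fun t : ℝ => t ^ (p - 3)) volume 0 a :=
    intervalIntegral.intervalIntegrable_rpow' (by linarith)
  have hi : IntegrableOn (fun t : ℝ => t ^ (p - 3)) (Ioc 0 a) :=
    (intervalIntegrable_iff_integrableOn_Ioc_of_le ha).1 hii
  rw [← ofReal_integral_eq_lintegral_ofReal (hi.mul_const _)
    ((ae_restrict_iff' measurableSet_Ioc).2 (ae_of_all _ fun t ht => by
      have := ht.1; positivity)), integral_mul_const, ← intervalIntegral.integral_of_le ha,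
    integral_rpow (Or.inl (by linarith))]
  refine ENNReal.ofReal_le_ofReal (le_of_eq ?_)
  rw [Real.zero_rpow (by linarith), sub_zero, div_mul_eq_mul_div]
  rcases ha.eq_or_lt with rfl | h
  · have h0 : p ≠ 0 := by linarith
    simp [Real.zero_rpow h0]
  · rw [← Real.rpow_add h, show p - 3 + 1 + 2 = p by ring, show p - 3 + 1 = p - 2 by ring]

lemma layer_lo {p a : ℝ} (hp : p < 6) (ha : 0 ≤ a) :
    ∫⁻ t in Ioi (0:ℝ), ENNReal.ofReal (t ^ (p - 7)) *
      (if t < a then 0 else ENNReal.ofReal (a ^ (6:ℝ))) ≤ ENNReal.ofReal (a ^ p / (6 - p)) := by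
  rcases ha.eq_or_lt with rfl | h
  · rw [Real.zero_rpow (by norm_num)]; simp
  have h1 : ∀ t : ℝ, ENNReal.ofReal (t ^ (p - 7)) *
      (if t < a then 0 else ENNReal.ofReal (a ^ (6:ℝ))) =
      (Ici a).indicator (fun t => ENNReal.ofReal (t ^ (p - 7) * a ^ (6:ℝ))) t := by
    intro t
    by_cases h : t < a
    · rw [if_pos h, indicator_of_notMem (by simpa using h), mul_zero]
    · rw [if_neg h, indicator_of_mem (by simpa using h), ENNReal.ofReal_mul' (by positivity)]
  simp_rw [h1]
  rw [lintegral_indicator measurableSet_Ici, Measure.restrict_restrict measurableSet_Ici]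
  have h2 : Ici a ∩ Ioi 0 = Ici a := by
    ext t; simp only [mem_inter_iff, mem_Ici, mem_Ioi, and_iff_left_iff_imp]; intro; linarith
  rw [h2, ← restrict_Ioi_eq_restrict_Ici]
  rw [← ofReal_integral_eq_lintegral_ofReal
    ((integrableOn_Ioi_rpow_of_lt (by linarith) h).mul_const _)
    ((ae_restrict_iff' measurableSet_Ioi).2 (ae_of_all _ fun t ht => by
      have : 0 < t := h.trans ht
      positivity)), integral_mul_const, integral_Ioi_rpow_of_lt (by linarith) h]
  refine ENNReal.ofReal_le_ofReal (le_of_eq ?_)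
  have : p - 7 + 1 = -(6 - p) := by ring
  rw [this, neg_div_neg_eq, div_mul_eq_mul_div, ← Real.rpow_add h]
  congr 2; ring

lemma ofReal_norm_rpow (z : ℂ) {q : ℝ} (hq : 0 ≤ q) : ENNReal.ofReal (‖z‖ ^ q) = ‖z‖ₑ ^ q := by
  rw [← ENNReal.ofReal_rpow_of_nonneg (norm_nonneg _) hq, ofReal_norm]

/-- The part of `g` where `|g| > t`. -/
def hiPart (t : ℝ) (g : E3 → ℂ) (x : E3) : ℂ := if t < ‖g x‖ then g x else 0

/-- The part of `g` where `|g| ≤ t`. -/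
def loPart (t : ℝ) (g : E3 → ℂ) (x : E3) : ℂ := if t < ‖g x‖ then 0 else g x

lemma measurable_hiPart {g : E3 → ℂ} (hg : Measurable g) (t : ℝ) : Measurable (hiPart t g) :=
  Measurable.ite (measurableSet_lt measurable_const hg.norm) hg measurable_const

lemma measurable_loPart {g : E3 → ℂ} (hg : Measurable g) (t : ℝ) : Measurable (loPart t g) :=
  Measurable.ite (measurableSet_lt measurable_const hg.norm) measurable_const hg

lemma cheb {h : E3 → ℂ} (hm : Measurable h) {t : ℝ} (ht : 0 < t) {q : ℝ} (hq : 0 < q) :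
    volume {x | t / 2 ≤ ‖h x‖} ≤ ENNReal.ofReal (2 ^ q * t ^ (-q)) * ∫⁻ x, ‖h x‖ₑ ^ q := by
  have h1 := mul_meas_ge_le_lintegral (μ := volume) (hm.enorm.pow_const q)
    (ENNReal.ofReal ((t / 2) ^ q))
  have h2 : {x | t / 2 ≤ ‖h x‖} ⊆ {x | ENNReal.ofReal ((t / 2) ^ q) ≤ ‖h x‖ₑ ^ q} := by
    intro x hx
    have hx' : t / 2 ≤ ‖h x‖ := hx
    change ENNReal.ofReal ((t / 2) ^ q) ≤ ‖h x‖ₑ ^ q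
    rw [← ofReal_norm_rpow _ hq.le]
    exact ENNReal.ofReal_le_ofReal (Real.rpow_le_rpow (by positivity) hx' hq.le)
  have h3 : ENNReal.ofReal (2 ^ q * t ^ (-q)) * ENNReal.ofReal ((t / 2) ^ q) = 1 := by
    rw [← ENNReal.ofReal_mul (by positivity), Real.div_rpow ht.le (by norm_num),
      Real.rpow_neg ht.le]
    have : (t ^ q) ≠ 0 := by positivity
    have h2 : ((2:ℝ) ^ q) ≠ 0 := by positivity
    rw [show (2:ℝ) ^ q * (t ^ q)⁻¹ * (t ^ q / 2 ^ q) = 1 by field_simp, ENNReal.ofReal_one]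
  calc volume {x | t / 2 ≤ ‖h x‖} ≤ 1 * volume {x | ENNReal.ofReal ((t / 2) ^ q) ≤ ‖h x‖ₑ ^ q} := by
        rw [one_mul]; exact measure_mono h2
    _ ≤ _ := by
        rw [← h3, mul_assoc]
        gcongr

/-- Real interpolation between weighted direct sums of `L²` and of `L⁶` for an additive operator
on finite families of functions, by splitting every function at the height `t` and integrating the
Chebyshev bounds in `t`. -/
lemma marcinkiewicz {ι : Type*} (s : Finset ι) (T : (ι → E3 → ℂ) → E3 → ℂ) (ω : ι → ℝ≥0∞)
    (C2 C6 : ℝ≥0∞)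
    (hadd : ∀ G G' : ι → E3 → ℂ, (∀ i, Integrable (G i) ∧ Measurable (G i)) →
      (∀ i, Integrable (G' i) ∧ Measurable (G' i)) → T (G + G') = T G + T G')
    (hm : ∀ G : ι → E3 → ℂ, (∀ i, Integrable (G i) ∧ Measurable (G i)) → Measurable (T G))
    (H2 : ∀ G : ι → E3 → ℂ, (∀ i, Integrable (G i) ∧ Measurable (G i)) →
      ∫⁻ x, ‖T G x‖ₑ ^ (2:ℝ) ≤ C2 * ∑ i ∈ s, ω i * ∫⁻ x, ‖G i x‖ₑ ^ (2:ℝ))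
    (H6 : ∀ G : ι → E3 → ℂ, (∀ i, Integrable (G i) ∧ Measurable (G i)) →
      ∫⁻ x, ‖T G x‖ₑ ^ (6:ℝ) ≤ C6 * ∑ i ∈ s, ω i * ∫⁻ x, ‖G i x‖ₑ ^ (6:ℝ))
    {p : ℝ} (hp2 : 2 < p) (hp6 : p < 6) (G : ι → E3 → ℂ)
    (hG : ∀ i, Integrable (G i) ∧ Measurable (G i)) :
    ∫⁻ x, ‖T G x‖ₑ ^ p ≤
      ENNReal.ofReal p * (ENNReal.ofReal (4 / (p - 2)) * C2 + ENNReal.ofReal (64 / (6 - p)) * C6) *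
        ∑ i ∈ s, ω i * ∫⁻ x, ‖G i x‖ₑ ^ p := by
  have hp0 : 0 < p := by linarith
  have hhi : ∀ t i, Integrable (hiPart t (G i)) ∧ Measurable (hiPart t (G i)) := fun t i =>
    ⟨(hG i).1.mono (measurable_hiPart (hG i).2 t).aestronglyMeasurable (ae_of_all _ fun x => by
      unfold hiPart; split_ifs <;> simp), measurable_hiPart (hG i).2 t⟩
  have hlo : ∀ t i, Integrable (loPart t (G i)) ∧ Measurable (loPart t (G i)) := fun t i =>
    ⟨(hG i).1.mono (measurable_loPart (hG i).2 t).aestronglyMeasurable (ae_of_all _ fun x => by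
      unfold loPart; split_ifs <;> simp), measurable_loPart (hG i).2 t⟩
  have hsplit : ∀ t, G = (fun i => hiPart t (G i)) + (fun i => loPart t (G i)) := by
    intro t; funext i x; simp only [Pi.add_apply, hiPart, loPart]; split_ifs <;> simp
  set U : ι → ℝ → E3 → ℝ≥0∞ := fun i t x =>
    if t < ‖G i x‖ then ENNReal.ofReal (‖G i x‖ ^ (2:ℝ)) else 0 with hU
  set V : ι → ℝ → E3 → ℝ≥0∞ := fun i t x =>
    if t < ‖G i x‖ then 0 else ENNReal.ofReal (‖G i x‖ ^ (6:ℝ)) with hV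
  have hUm : ∀ i, Measurable (fun q : ℝ × E3 => U i q.1 q.2) := fun i =>
    Measurable.ite (measurableSet_lt measurable_fst ((hG i).2.norm.comp measurable_snd))
      (((hG i).2.norm.comp measurable_snd).pow_const _).ennreal_ofReal measurable_const
  have hVm : ∀ i, Measurable (fun q : ℝ × E3 => V i q.1 q.2) := fun i =>
    Measurable.ite (measurableSet_lt measurable_fst ((hG i).2.norm.comp measurable_snd))
      measurable_const (((hG i).2.norm.comp measurable_snd).pow_const _).ennreal_ofReal
  have hmeas : ∀ t : ℝ, 0 < t → volume {x | t < ‖T G x‖} * ENNReal.ofReal (t ^ (p - 1)) ≤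
      (4 * C2) * (∑ i ∈ s, ω i * ∫⁻ x, ENNReal.ofReal (t ^ (p - 3)) * U i t x) +
      (64 * C6) * ∑ i ∈ s, ω i * ∫⁻ x, ENNReal.ofReal (t ^ (p - 7)) * V i t x := by
    intro t ht
    have hsub : {x | t < ‖T G x‖} ⊆ {x | t / 2 ≤ ‖T (fun i => hiPart t (G i)) x‖} ∪
        {x | t / 2 ≤ ‖T (fun i => loPart t (G i)) x‖} := by
      intro x hx
      have hx' : t < ‖T G x‖ := hx
      by_contra hcon
      simp only [mem_union, mem_ofPred_eq, not_or, not_le] at hcon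
      have : T G x = T (fun i => hiPart t (G i)) x + T (fun i => loPart t (G i)) x := by
        conv_lhs => rw [hsplit t, hadd _ _ (hhi t) (hlo t)]
        rfl
      rw [this] at hx'
      have := norm_add_le (T (fun i => hiPart t (G i)) x) (T (fun i => loPart t (G i)) x)
      linarith [hcon.1, hcon.2]
    have e2 : ∀ i x, ‖hiPart t (G i) x‖ₑ ^ (2:ℝ) = U i t x := by
      intro i x
      rw [← ofReal_norm_rpow _ (by norm_num)]; simp only [hU, hiPart]
      split_ifs
      · rfl
      · simp
    have e6 : ∀ i x, ‖loPart t (G i) x‖ₑ ^ (6:ℝ) = V i t x := by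
      intro i x
      rw [← ofReal_norm_rpow _ (by norm_num)]; simp only [hV, loPart]
      split_ifs
      · simp
      · rfl
    have b2 := (cheb (hm _ (hhi t)) ht (q := 2) (by norm_num)).trans
      (mul_le_mul_right (H2 _ (hhi t)) _)
    have b6 := (cheb (hm _ (hlo t)) ht (q := 6) (by norm_num)).trans
      (mul_le_mul_right (H6 _ (hlo t)) _)
    simp_rw [e2] at b2
    simp_rw [e6] at b6
    have c2 : ENNReal.ofReal (2 ^ (2:ℝ) * t ^ (-2:ℝ)) * ENNReal.ofReal (t ^ (p - 1)) =
        4 * ENNReal.ofReal (t ^ (p - 3)) := by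
      rw [← ENNReal.ofReal_mul (by positivity), mul_assoc, ← Real.rpow_add ht,
        ENNReal.ofReal_mul (by positivity)]
      congr 1
      · norm_num
      · congr 2; ring
    have c6 : ENNReal.ofReal (2 ^ (6:ℝ) * t ^ (-6:ℝ)) * ENNReal.ofReal (t ^ (p - 1)) =
        64 * ENNReal.ofReal (t ^ (p - 7)) := by
      rw [← ENNReal.ofReal_mul (by positivity), mul_assoc, ← Real.rpow_add ht,
        ENNReal.ofReal_mul (by positivity)]
      congr 1
      · norm_num
      · congr 2; ring
    have pull : ∀ (r : ℝ) (W : ι → ℝ → E3 → ℝ≥0∞), ∑ i ∈ s, ω i * ∫⁻ x, ENNReal.ofReal r * W i t x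
        = ENNReal.ofReal r * ∑ i ∈ s, ω i * ∫⁻ x, W i t x := by
      intro r W
      rw [Finset.mul_sum]
      refine Finset.sum_congr rfl fun i _ => ?_
      rw [lintegral_const_mul' _ _ ENNReal.ofReal_ne_top]; ring
    rw [pull, pull]
    calc _ ≤ (volume {x | t / 2 ≤ ‖T (fun i => hiPart t (G i)) x‖} +
          volume {x | t / 2 ≤ ‖T (fun i => loPart t (G i)) x‖}) * ENNReal.ofReal (t ^ (p - 1)) := by
          gcongr
          exact (measure_mono hsub).trans (measure_union_le _ _)
      _ ≤ _ := mul_le_mul_left (add_le_add b2 b6) _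
      _ = (ENNReal.ofReal (2 ^ (2:ℝ) * t ^ (-2:ℝ)) * ENNReal.ofReal (t ^ (p - 1))) *
            (C2 * ∑ i ∈ s, ω i * ∫⁻ x, U i t x) +
          (ENNReal.ofReal (2 ^ (6:ℝ) * t ^ (-6:ℝ)) * ENNReal.ofReal (t ^ (p - 1))) *
            (C6 * ∑ i ∈ s, ω i * ∫⁻ x, V i t x) := by ring
      _ = _ := by rw [c2, c6]; ring
  have tm : ∀ r : ℝ, Measurable (fun q : ℝ × E3 => ENNReal.ofReal (q.1 ^ r)) := fun r => by fun_prop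
  have sw : ∀ (r D : ℝ) (W : ι → ℝ → E3 → ℝ≥0∞) (C : ℝ≥0∞), 0 ≤ D →
      (∀ i, Measurable (fun q : ℝ × E3 => W i q.1 q.2)) →
      (∀ i x, ∫⁻ t in Ioi (0:ℝ), ENNReal.ofReal (t ^ r) * W i t x ≤
        ENNReal.ofReal (‖G i x‖ ^ p / D)) →
      ∫⁻ t in Ioi (0:ℝ), C * ∑ i ∈ s, ω i * ∫⁻ x, ENNReal.ofReal (t ^ r) * W i t x ≤
        C * (ENNReal.ofReal (1 / D) * ∑ i ∈ s, ω i * ∫⁻ x, ‖G i x‖ₑ ^ p) := by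
    intro r D W C hD hW hb
    have hmi : ∀ i, Measurable fun t : ℝ => ∫⁻ x, ENNReal.ofReal (t ^ r) * W i t x := fun i =>
      ((tm r).mul (hW i)).lintegral_prod_right'
    rw [lintegral_const_mul _ (Finset.measurable_sum _ fun i _ => (hmi i).const_mul _),
      lintegral_finsetSum _ (fun i _ => (hmi i).const_mul _)]
    gcongr
    rw [Finset.mul_sum]
    refine Finset.sum_le_sum fun i _ => ?_
    rw [lintegral_const_mul _ (hmi i), lintegral_lintegral_swap ((tm r).mul (hW i)).aemeasurable,
      mul_left_comm]
    gcongr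
    rw [← lintegral_const_mul' _ _ ENNReal.ofReal_ne_top]
    refine lintegral_mono fun x => (hb i x).trans (le_of_eq ?_)
    rw [← ofReal_norm_rpow _ hp0.le, ← ENNReal.ofReal_mul (by positivity)]
    congr 1; ring
  have hlc := lintegral_rpow_eq_lintegral_meas_lt_mul (volume : Measure E3)
    (f := fun x => ‖T G x‖) (ae_of_all _ fun _ => norm_nonneg _) (hm G hG).norm.aemeasurable hp0
  simp_rw [ofReal_norm_rpow _ hp0.le] at hlc
  rw [hlc, mul_assoc]
  gcongr
  have hmV : ∀ i, Measurable fun t : ℝ => ∫⁻ x, ENNReal.ofReal (t ^ (p - 3)) * U i t x := fun i =>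
      ((tm _).mul (hUm i)).lintegral_prod_right'
  calc _ ≤ ∫⁻ t in Ioi (0:ℝ), ((4 * C2) * (∑ i ∈ s, ω i * ∫⁻ x, ENNReal.ofReal (t ^ (p - 3)) * U i t x) +
      (64 * C6) * ∑ i ∈ s, ω i * ∫⁻ x, ENNReal.ofReal (t ^ (p - 7)) * V i t x) :=
        setLIntegral_mono' measurableSet_Ioi fun t ht => hmeas t ht
    _ = _ := lintegral_add_left
        ((Finset.measurable_sum _ fun i _ => (hmV i).const_mul _).const_mul _) _
    _ ≤ (4 * C2) * (ENNReal.ofReal (1 / (p - 2)) * ∑ i ∈ s, ω i * ∫⁻ x, ‖G i x‖ₑ ^ p) +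
        (64 * C6) * (ENNReal.ofReal (1 / (6 - p)) * ∑ i ∈ s, ω i * ∫⁻ x, ‖G i x‖ₑ ^ p) :=
        add_le_add (sw _ _ U _ (by linarith) hUm fun i x => layer_hi hp2 (norm_nonneg _))
          (sw _ _ V _ (by linarith) hVm fun i x => layer_lo hp6 (norm_nonneg _))
    _ = _ := by
        have a4 : ENNReal.ofReal (4 / (p - 2)) = 4 * ENNReal.ofReal (1 / (p - 2)) := by
          rw [div_eq_mul_one_div, ENNReal.ofReal_mul (by norm_num)]; norm_num
        have a6 : ENNReal.ofReal (64 / (6 - p)) = 64 * ENNReal.ofReal (1 / (6 - p)) := by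
          rw [div_eq_mul_one_div, ENNReal.ofReal_mul (by norm_num)]; norm_num
        rw [a4, a6]; ring

/-! ### From direct-sum estimates to `ℓ²` estimates -/

/-- Weights proportional (up to a floor) to the numbers `a i ^ 2`. -/
lemma exists_weights (s : Finset ℤ) (hs : s.Nonempty) (a : ℤ → ℝ) (ha : ∀ i, 0 ≤ a i) {p : ℝ}
    (hp : 2 ≤ p) :
    ∃ w : ℤ → ℝ, (∀ i, 0 < w i) ∧ ∑ i ∈ s, w i ^ 2 = 1 ∧
      ∀ i ∈ s, w i ^ 2 * ((w i)⁻¹ ^ p * a i ^ p) ≤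
        (2 * ∑ j ∈ s, a j ^ 2) ^ ((p - 2) / 2) * a i ^ 2 := by
  set S := ∑ j ∈ s, a j ^ 2 with hS
  have hS0 : 0 ≤ S := Finset.sum_nonneg fun j _ => sq_nonneg _
  have hN : (0:ℝ) < s.card := by exact_mod_cast hs.card_pos
  have hp0 : p ≠ 0 := by linarith
  rcases hS0.eq_or_lt with h0 | hpos
  · refine ⟨fun _ => Real.sqrt (1 / s.card), fun _ => by positivity, ?_, fun i hi => ?_⟩
    · simp only
      rw [Real.sq_sqrt (by positivity), Finset.sum_const, nsmul_eq_mul]; field_simp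
    · have : a i ^ 2 = 0 := (Finset.sum_eq_zero_iff_of_nonneg fun j _ => sq_nonneg (a j)).1
        (hS.symm.trans h0.symm) i hi
      have : a i = 0 := by simpa using this
      rw [this, Real.zero_rpow hp0]; simp
  · have hq : ∀ i, 0 < (a i ^ 2 + S / s.card) / (2 * S) := fun i => by positivity
    refine ⟨fun i => Real.sqrt ((a i ^ 2 + S / s.card) / (2 * S)),
      fun i => Real.sqrt_pos.2 (hq i), ?_, fun i hi => ?_⟩
    · simp_rw [fun i => Real.sq_sqrt (hq i).le]
      rw [← Finset.sum_div, Finset.sum_add_distrib, ← hS, Finset.sum_const, nsmul_eq_mul]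
      field_simp; norm_num
    · simp only
      set w := Real.sqrt ((a i ^ 2 + S / s.card) / (2 * S)) with hw
      have hw0 : 0 < w := Real.sqrt_pos.2 (hq i)
      rcases (ha i).eq_or_lt with h | h
      · rw [← h, Real.zero_rpow hp0]; simp
      · have h1 : a i ^ 2 ≤ (2 * S) * w ^ 2 := by
          rw [hw, Real.sq_sqrt (hq i).le, mul_div_cancel₀ _ (by positivity)]
          have : 0 ≤ S / s.card := by positivity
          linarith
        have h2 : a i ^ (p - 2) ≤ (2 * S) ^ ((p - 2) / 2) * w ^ (p - 2) := by
          have := Real.rpow_le_rpow (by positivity) h1 (by linarith : 0 ≤ (p - 2) / 2)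
          rw [Real.mul_rpow (by positivity) (by positivity), ← Real.rpow_natCast,
            ← Real.rpow_natCast, ← Real.rpow_mul h.le, ← Real.rpow_mul hw0.le] at this
          convert this using 2 <;> [skip; congr 1] <;> push_cast <;> ring
        have e1 : a i ^ p = a i ^ (p - 2) * a i ^ 2 := by
          rw [← Real.rpow_natCast (a i) 2, ← Real.rpow_add h]; congr 1; push_cast; ring
        have e2 : w ^ p = w ^ (p - 2) * w ^ 2 := by
          rw [← Real.rpow_natCast w 2, ← Real.rpow_add hw0]; congr 1; push_cast; ring
        have hwp : 0 < w ^ (p - 2) := by positivity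
        calc w ^ 2 * (w⁻¹ ^ p * a i ^ p) = (w ^ (p - 2))⁻¹ * a i ^ (p - 2) * a i ^ 2 := by
              rw [Real.inv_rpow hw0.le, e1, e2]; field_simp
          _ ≤ _ := by
              gcongr
              rw [inv_mul_le_iff₀ hwp, mul_comm]; exact h2

lemma Spec.lintegral_pow {A : Set E3} {f : E3 → ℂ} (hf : Spec A f) (n : ℕ) :
    ∫⁻ x, ‖f x‖ₑ ^ ((n + 1 : ℕ) : ℝ) = ENNReal.ofReal (∫ x, ‖f x‖ ^ (n + 1)) := by
  rw [ofReal_integral_eq_lintegral_ofReal (hf.integrable_pow n)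
    (ae_of_all _ fun x => by positivity)]
  refine lintegral_congr fun x => ?_
  rw [← ofReal_norm_rpow _ (by positivity), Real.rpow_natCast]

lemma Spec.lintegral_rpow_ne_top {A : Set E3} {f : E3 → ℂ} (hf : Spec A f) {p : ℝ} (hp : 1 ≤ p) :
    ∫⁻ x, ‖f x‖ₑ ^ p ≠ ⊤ := by
  obtain ⟨C, hC0, hC⟩ := hf.bdd
  have h1 : ∀ x, ‖f x‖ₑ ^ p ≤ ENNReal.ofReal (C ^ (p - 1)) * ‖f x‖ₑ := by
    intro x
    rw [← ofReal_norm_rpow _ (by linarith), ← ofReal_norm, ← ENNReal.ofReal_mul (by positivity)]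
    refine ENNReal.ofReal_le_ofReal ?_
    rcases (norm_nonneg (f x)).eq_or_lt with h | h
    · rw [← h, Real.zero_rpow (by linarith)]; simp
    · calc ‖f x‖ ^ p = ‖f x‖ ^ (p - 1) * ‖f x‖ := by
            rw [← Real.rpow_add_one h.ne']; congr 1; ring
        _ ≤ _ := by
            exact mul_le_mul_of_nonneg_right
              (Real.rpow_le_rpow h.le (hC x) (by linarith)) h.le
  refine ne_top_of_le_ne_top ?_ (lintegral_mono h1)
  rw [lintegral_const_mul' _ _ ENNReal.ofReal_ne_top]
  exact ENNReal.mul_ne_top ENNReal.ofReal_ne_top hf.int.2.ne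

/-- If the operators `T i` are bounded on every `L^q`, `q > 1`, almost orthogonal in `L²`, and satisfy an `ℓ²L⁶`
decoupling inequality with constant `L`, then they satisfy an `ℓ²Lᵖ` decoupling inequality for
`2 ≤ p ≤ 6`: for weights `w` with `∑ w i ^ 2 = 1` the operator `G ↦ ∑ T i (w i G i)` can be
interpolated between the `L²` and `L⁶` direct sums with measure `w i ^ 2`, and the weights can be
adapted to the given functions. -/
lemma ops_interp {p : ℝ} (hp2 : 2 ≤ p) (hp6 : p ≤ 6) {B D : ℝ} (hD : 0 ≤ D) :
    ∃ M : ℝ, 0 < M ∧ ∀ (L : ℝ), 1 ≤ L → ∀ s : Finset ℤ, s.Nonempty →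
      ∀ T : ℤ → (E3 → ℂ) → E3 → ℂ,
      (∀ i g, Integrable g → ∃ A, Spec A (T i g)) →
      (∀ i g g', Integrable g → Integrable g' → T i (g + g') = T i g + T i g') →
      (∀ i g, Measurable g → ∀ q : ℝ, 1 < q →
        ∫⁻ x, ‖T i g x‖ₑ ^ q ≤ ENNReal.ofReal B ^ q * ∫⁻ x, ‖g x‖ₑ ^ q) →
      (∀ g : ℤ → E3 → ℂ, (∀ i, Integrable (g i)) →
        ∫ x, ‖∑ i ∈ s, T i (g i) x‖ ^ 2 ≤ D * ∑ i ∈ s, ∫ x, ‖T i (g i) x‖ ^ 2) →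
      (∀ g : ℤ → E3 → ℂ, (∀ i, Integrable (g i)) →
        ∫ x, ‖∑ i ∈ s, T i (g i) x‖ ^ 6 ≤
          L * (∑ i ∈ s, (∫ x, ‖T i (g i) x‖ ^ 6) ^ ((1:ℝ) / 3)) ^ 3) →
      ∀ F : ℤ → E3 → ℂ, (∀ i, Integrable (F i) ∧ Measurable (F i)) →
        (∀ i, ∫⁻ x, ‖F i x‖ₑ ^ p ≠ ⊤) →
        ∫⁻ x, ‖∑ i ∈ s, T i (F i) x‖ₑ ^ p ≤ ENNReal.ofReal (M * L) *
          (∑ i ∈ s, (∫⁻ x, ‖F i x‖ₑ ^ p) ^ (2 / p)) ^ (p / 2) := by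
  have hp0 : 0 < p := by linarith
  set b := ENNReal.ofReal B with hb
  set d := ENNReal.ofReal D with hd
  set M₁ : ℝ≥0∞ := ENNReal.ofReal p * (ENNReal.ofReal (4 / (p - 2)) * (d * b ^ (2:ℝ)) +
    ENNReal.ofReal (64 / (6 - p)) * b ^ (6:ℝ)) + d * b ^ (2:ℝ) + b ^ (6:ℝ) with hM₁
  have hM₁t : M₁ ≠ ⊤ := by
    have h1 : ∀ q : ℝ, 0 ≤ q → b ^ q ≠ ⊤ := fun q hq =>
      ENNReal.rpow_ne_top_of_nonneg hq ENNReal.ofReal_ne_top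
    have h2 := h1 2 (by norm_num)
    have h6 := h1 6 (by norm_num)
    have hd' : d ≠ ⊤ := ENNReal.ofReal_ne_top
    rw [hM₁]
    finiteness
  set c₂ : ℝ := 2 ^ ((p - 2) / 2) with hc₂
  refine ⟨M₁.toReal * c₂ + 1, by positivity, ?_⟩
  intro L hL s hs T hspec hadd hbd h2 h6 F hF hFt
  set ℓ := ENNReal.ofReal L with hℓ
  have hℓ1 : 1 ≤ ℓ := by rw [hℓ, ← ENNReal.ofReal_one]; exact ENNReal.ofReal_le_ofReal hL
  set α : ℤ → ℝ := fun i => (∫⁻ x, ‖F i x‖ₑ ^ p).toReal ^ (1 / p) with hα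
  have hα0 : ∀ i, 0 ≤ α i := fun i => by positivity
  have hαp : ∀ i, ∫⁻ x, ‖F i x‖ₑ ^ p = ENNReal.ofReal (α i ^ p) := by
    intro i
    rw [hα]; simp only
    rw [← Real.rpow_mul ENNReal.toReal_nonneg, one_div_mul_cancel hp0.ne', Real.rpow_one,
      ENNReal.ofReal_toReal (hFt i)]
  obtain ⟨w, hw0, hw1, hw⟩ := exists_weights s hs α hα0 hp2
  set U : (ℤ → E3 → ℂ) → E3 → ℂ := fun G x => ∑ i ∈ s, T i ((w i : ℂ) • G i) x with hU
  set ω : ℤ → ℝ≥0∞ := fun i => ENNReal.ofReal (w i) ^ (2:ℝ) with hω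
  have hω1 : ∑ i ∈ s, ω i = 1 := by
    rw [← ENNReal.ofReal_one, ← hw1, ENNReal.ofReal_sum_of_nonneg fun i _ => sq_nonneg _]
    refine Finset.sum_congr rfl fun i _ => ?_
    rw [hω, ENNReal.ofReal_pow (hw0 i).le]; simp only
    rw [← ENNReal.rpow_natCast]; norm_num
  -- scaling
  have hsc : ∀ (i : ℤ) (g : E3 → ℂ), Measurable g → ∀ q : ℝ, 1 < q →
      ∫⁻ x, ‖T i ((w i : ℂ) • g) x‖ₑ ^ q ≤
        b ^ q * (ENNReal.ofReal (w i) ^ q * ∫⁻ x, ‖g x‖ₑ ^ q) := by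
    intro i g hg q hq
    have hgm : Measurable ((w i : ℂ) • g) := hg.const_smul _
    refine (hbd i _ hgm q hq).trans (le_of_eq ?_)
    congr 1
    rw [← lintegral_const_mul' _ _ (ENNReal.rpow_ne_top_of_nonneg (by linarith) ENNReal.ofReal_ne_top)]
    refine lintegral_congr fun x => ?_
    rw [Pi.smul_apply, enorm_smul, ENNReal.mul_rpow_of_nonneg _ _ (by linarith)]
    congr 2
    rw [← ofReal_norm, Complex.norm_real, Real.norm_of_nonneg (hw0 i).le]
  have hSU : ∀ G : ℤ → E3 → ℂ, (∀ i, Integrable (G i)) →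
      Spec univ (fun x => ∑ i ∈ s, T i (G i) x) := fun G hG =>
    Spec.sum s fun i _ => by
      obtain ⟨A, hA⟩ := hspec i (G i) (hG i)
      exact hA.mono (subset_univ _)
  have hwi : ∀ G : ℤ → E3 → ℂ, (∀ i, Integrable (G i) ∧ Measurable (G i)) →
      ∀ i, Integrable ((w i : ℂ) • G i) := fun G hG i => (hG i).1.smul _
  have p2 : ∀ {A : Set E3} {f : E3 → ℂ}, Spec A f →
      ∫⁻ x, ‖f x‖ₑ ^ (2:ℝ) = ENNReal.ofReal (∫ x, ‖f x‖ ^ 2) := fun hf => by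
    simpa using hf.lintegral_pow 1
  have p6 : ∀ {A : Set E3} {f : E3 → ℂ}, Spec A f →
      ∫⁻ x, ‖f x‖ₑ ^ (6:ℝ) = ENNReal.ofReal (∫ x, ‖f x‖ ^ 6) := fun hf => by
    simpa using hf.lintegral_pow 5
  have H2 : ∀ G : ℤ → E3 → ℂ, (∀ i, Integrable (G i) ∧ Measurable (G i)) →
      ∫⁻ x, ‖U G x‖ₑ ^ (2:ℝ) ≤ (d * b ^ (2:ℝ)) * ∑ i ∈ s, ω i * ∫⁻ x, ‖G i x‖ₑ ^ (2:ℝ) := by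
    intro G hG
    rw [p2 (hSU _ (hwi G hG))]
    calc _ ≤ ENNReal.ofReal (D * ∑ i ∈ s, ∫ x, ‖T i ((w i : ℂ) • G i) x‖ ^ 2) :=
          ENNReal.ofReal_le_ofReal (h2 _ (hwi G hG))
      _ = d * ∑ i ∈ s, ∫⁻ x, ‖T i ((w i : ℂ) • G i) x‖ₑ ^ (2:ℝ) := by
          rw [ENNReal.ofReal_mul hD, ENNReal.ofReal_sum_of_nonneg fun i _ =>
            integral_nonneg fun x => by positivity]
          congr 1
          refine Finset.sum_congr rfl fun i _ => ?_
          obtain ⟨A, hA⟩ := hspec i _ (hwi G hG i)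
          rw [p2 hA]
      _ ≤ d * ∑ i ∈ s, b ^ (2:ℝ) * (ENNReal.ofReal (w i) ^ (2:ℝ) * ∫⁻ x, ‖G i x‖ₑ ^ (2:ℝ)) := by
          gcongr with i _
          exact hsc i _ (hG i).2 2 (by norm_num)
      _ = _ := by rw [← Finset.mul_sum, mul_assoc]
  have H6 : ∀ G : ℤ → E3 → ℂ, (∀ i, Integrable (G i) ∧ Measurable (G i)) →
      ∫⁻ x, ‖U G x‖ₑ ^ (6:ℝ) ≤ (ℓ * b ^ (6:ℝ)) * ∑ i ∈ s, ω i * ∫⁻ x, ‖G i x‖ₑ ^ (6:ℝ) := by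
    intro G hG
    rw [p6 (hSU _ (hwi G hG))]
    calc _ ≤ ENNReal.ofReal
            (L * (∑ i ∈ s, (∫ x, ‖T i ((w i : ℂ) • G i) x‖ ^ 6) ^ ((1:ℝ) / 3)) ^ 3) :=
          ENNReal.ofReal_le_ofReal (h6 _ (hwi G hG))
      _ = ℓ * (∑ i ∈ s, (∫⁻ x, ‖T i ((w i : ℂ) • G i) x‖ₑ ^ (6:ℝ)) ^ ((1:ℝ) / 3)) ^ (3:ℝ) := by
          have hnn : ∀ i, 0 ≤ ∫ x, ‖T i ((w i : ℂ) • G i) x‖ ^ 6 := fun i =>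
            integral_nonneg fun x => by positivity
          rw [ENNReal.ofReal_mul (by linarith), ENNReal.ofReal_pow
            (Finset.sum_nonneg fun i _ => Real.rpow_nonneg (hnn i) _),
            ENNReal.ofReal_sum_of_nonneg fun i _ => Real.rpow_nonneg (hnn i) _,
            ← ENNReal.rpow_natCast]
          congr 2
          refine Finset.sum_congr rfl fun i _ => ?_
          obtain ⟨A, hA⟩ := hspec i _ (hwi G hG i)
          rw [p6 hA, ENNReal.ofReal_rpow_of_nonneg (hnn i) (by norm_num)]
      _ ≤ ℓ * (∑ i ∈ s, (b ^ (6:ℝ) * (ENNReal.ofReal (w i) ^ (6:ℝ) *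
            ∫⁻ x, ‖G i x‖ₑ ^ (6:ℝ))) ^ ((1:ℝ) / 3)) ^ (3:ℝ) := by
          gcongr with i _
          exact hsc i _ (hG i).2 6 (by norm_num)
      _ = ℓ * (b ^ (2:ℝ) * ∑ i ∈ s, ω i * (∫⁻ x, ‖G i x‖ₑ ^ (6:ℝ)) ^ ((1:ℝ) / 3)) ^ (3:ℝ) := by
          congr 2
          rw [Finset.mul_sum]
          refine Finset.sum_congr rfl fun i _ => ?_
          rw [ENNReal.mul_rpow_of_nonneg _ _ (by norm_num),
            ENNReal.mul_rpow_of_nonneg _ _ (by norm_num), ← ENNReal.rpow_mul, ← ENNReal.rpow_mul]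
          norm_num [hω]
      _ = (ℓ * b ^ (6:ℝ)) *
          (∑ i ∈ s, ω i * (∫⁻ x, ‖G i x‖ₑ ^ (6:ℝ)) ^ ((1:ℝ) / 3)) ^ (3:ℝ) := by
          rw [ENNReal.mul_rpow_of_nonneg _ _ (by norm_num), ← ENNReal.rpow_mul, mul_assoc]
          norm_num
      _ ≤ (ℓ * b ^ (6:ℝ)) *
          ∑ i ∈ s, ω i * ((∫⁻ x, ‖G i x‖ₑ ^ (6:ℝ)) ^ ((1:ℝ) / 3)) ^ (3:ℝ) := by
          gcongr
          exact ENNReal.rpow_arith_mean_le_arith_mean_rpow s _ _ hω1 (by norm_num)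
      _ = _ := by
          congr 1
          refine Finset.sum_congr rfl fun i _ => ?_
          rw [← ENNReal.rpow_mul]; norm_num
  have hUadd : ∀ G G' : ℤ → E3 → ℂ, (∀ i, Integrable (G i) ∧ Measurable (G i)) →
      (∀ i, Integrable (G' i) ∧ Measurable (G' i)) → U (G + G') = U G + U G' := by
    intro G G' hG hG'
    funext x
    simp only [hU, Pi.add_apply, smul_add]
    rw [← Finset.sum_add_distrib]
    refine Finset.sum_congr rfl fun i _ => ?_
    rw [hadd i _ _ (hwi G hG i) (hwi G' hG' i)]; rfl
  have hUm : ∀ G : ℤ → E3 → ℂ, (∀ i, Integrable (G i) ∧ Measurable (G i)) → Measurable (U G) :=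
    fun G hG => (hSU _ (hwi G hG)).cont.measurable
  have HP : ∀ G : ℤ → E3 → ℂ, (∀ i, Integrable (G i) ∧ Measurable (G i)) →
      ∫⁻ x, ‖U G x‖ₑ ^ p ≤ (M₁ * ℓ) * ∑ i ∈ s, ω i * ∫⁻ x, ‖G i x‖ₑ ^ p := by
    intro G hG
    have hle : ∀ x : ℝ≥0∞, x ≤ x * ℓ := fun x => le_mul_of_one_le_right' hℓ1
    rcases hp2.eq_or_lt with h | h2'
    · rw [← h]
      refine (H2 G hG).trans (mul_le_mul_left ?_ _)
      refine le_trans ?_ (hle _)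
      rw [hM₁]
      exact le_trans le_add_self le_self_add
    rcases hp6.eq_or_lt with h | h6'
    · rw [h]
      refine (H6 G hG).trans (mul_le_mul_left ?_ _)
      rw [mul_comm]
      refine mul_le_mul_left ?_ _
      rw [hM₁]
      exact le_add_self
    · refine (marcinkiewicz s U ω _ _ hUadd hUm H2 H6 h2' h6' G hG).trans (mul_le_mul_left ?_ _)
      rw [hM₁, add_assoc, add_mul]
      refine le_trans ?_ le_self_add
      rw [mul_assoc, add_mul]
      refine mul_le_mul_right (add_le_add (hle _) (le_of_eq (by ring))) _
  set G : ℤ → E3 → ℂ := fun i => ((w i)⁻¹ : ℂ) • F i with hG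
  have hGg : ∀ i, Integrable (G i) ∧ Measurable (G i) := fun i =>
    ⟨(hF i).1.smul _, (hF i).2.const_smul _⟩
  have hUG : U G = fun x => ∑ i ∈ s, T i (F i) x := by
    funext x
    refine Finset.sum_congr rfl fun i _ => ?_
    have : ((w i : ℂ)) ≠ 0 := by exact_mod_cast (hw0 i).ne'
    rw [hG]; simp only
    rw [smul_smul, mul_inv_cancel₀ this, one_smul]
  have hGp : ∀ i, ∫⁻ x, ‖G i x‖ₑ ^ p = ENNReal.ofReal ((w i)⁻¹ ^ p * α i ^ p) := by
    intro i
    have hwn : 0 ≤ (w i)⁻¹ := (inv_pos.2 (hw0 i)).le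
    rw [ENNReal.ofReal_mul (by positivity), ← hαp, ← lintegral_const_mul' _ _ ENNReal.ofReal_ne_top]
    refine lintegral_congr fun x => ?_
    simp only [hG, Pi.smul_apply]
    rw [enorm_smul, ENNReal.mul_rpow_of_nonneg _ _ hp0.le]
    congr 1
    rw [← ofReal_norm, ENNReal.ofReal_rpow_of_nonneg (norm_nonneg _) hp0.le, norm_inv,
      Complex.norm_real, Real.norm_of_nonneg (hw0 i).le]
  have main := HP G hGg
  rw [hUG] at main
  refine main.trans ?_
  set S := ∑ j ∈ s, α j ^ 2 with hS
  have hS0 : 0 ≤ S := Finset.sum_nonneg fun j _ => sq_nonneg _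
  have hsum : ∑ i ∈ s, ω i * ∫⁻ x, ‖G i x‖ₑ ^ p ≤ ENNReal.ofReal (c₂ * S ^ (p / 2)) := by
    calc _ = ENNReal.ofReal (∑ i ∈ s, w i ^ 2 * ((w i)⁻¹ ^ p * α i ^ p)) := by
          rw [ENNReal.ofReal_sum_of_nonneg fun i _ => by
            have := hw0 i; have := hα0 i; positivity]
          refine Finset.sum_congr rfl fun i _ => ?_
          rw [hGp, ENNReal.ofReal_mul (sq_nonneg _), ENNReal.ofReal_pow (hw0 i).le, hω]
          simp only
          rw [← ENNReal.rpow_natCast]; norm_num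
      _ ≤ ENNReal.ofReal (∑ i ∈ s, (2 * S) ^ ((p - 2) / 2) * α i ^ 2) :=
          ENNReal.ofReal_le_ofReal (Finset.sum_le_sum fun i hi => hw i hi)
      _ = _ := by
          rw [← Finset.mul_sum, ← hS, Real.mul_rpow (by norm_num) hS0, mul_assoc]
          congr 2
          rcases hS0.eq_or_lt with h | h
          · rw [← h, Real.zero_rpow (x := p / 2) (by positivity), mul_zero]
          · rw [← Real.rpow_add_one h.ne']; congr 1; ring
  have hSe : (∑ i ∈ s, (∫⁻ x, ‖F i x‖ₑ ^ p) ^ (2 / p)) ^ (p / 2) = ENNReal.ofReal (S ^ (p / 2)) := by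
    rw [← ENNReal.ofReal_rpow_of_nonneg hS0 (by positivity), hS,
      ENNReal.ofReal_sum_of_nonneg fun i _ => sq_nonneg _]
    congr 1
    refine Finset.sum_congr rfl fun i _ => ?_
    rw [hαp, ENNReal.ofReal_rpow_of_nonneg (Real.rpow_nonneg (hα0 i) _) (by positivity),
      ← Real.rpow_mul (hα0 i), mul_div_cancel₀ _ hp0.ne', ← Real.rpow_natCast]
    norm_num
  rw [hSe]
  calc _ ≤ M₁ * ℓ * ENNReal.ofReal (c₂ * S ^ (p / 2)) := by gcongr
    _ = ENNReal.ofReal (M₁.toReal * c₂ * L * S ^ (p / 2)) := by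
        rw [← ENNReal.ofReal_toReal hM₁t, hℓ, ← ENNReal.ofReal_mul ENNReal.toReal_nonneg,
          ← ENNReal.ofReal_mul (by positivity), ENNReal.ofReal_toReal hM₁t]
        congr 1; ring
    _ ≤ _ := by
        rw [← ENNReal.ofReal_mul (by positivity)]
        refine ENNReal.ofReal_le_ofReal ?_
        gcongr
        linarith

/-! ### Decoupling for a sector of the cone -/

/-- The plates of a sector of the cone `x z = y²`, in coordinates in which consecutive plates
are related by the shears `(x, y, z) ↦ (x, y - x, z - 2 y + x)`. -/
def ConePl (x y z : E3 →ₗ[ℝ] ℝ) (c : ℝ) (i : ℤ) : Set E3 :=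
  {ξ | 1 / 4 ≤ x ξ ∧ x ξ ≤ 6 ∧ |y ξ - i * x ξ| ≤ c ∧
    |z ξ - 2 * i * y ξ + (i : ℝ) ^ 2 * x ξ| ≤ c}

/-- A smooth bump equal to `1` on `[-c, c]` and supported in `[-2c, 2c]`. -/
def bump (c t : ℝ) : ℝ := Real.smoothTransition (2 - t / c) * Real.smoothTransition (2 + t / c)

lemma bump_eq_one {c t : ℝ} (hc : 0 < c) (ht : |t| ≤ c) : bump c t = 1 := by
  obtain ⟨h1, h2⟩ := abs_le.1 ht
  have h3 : t / c ≤ 1 := by rw [div_le_one hc]; exact h2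
  have h4 : -1 ≤ t / c := by rw [le_div_iff₀ hc]; linarith
  rw [bump, Real.smoothTransition.one_of_one_le (by linarith),
    Real.smoothTransition.one_of_one_le (by linarith), one_mul]

lemma abs_le_of_bump_ne {c t : ℝ} (hc : 0 < c) (ht : bump c t ≠ 0) : |t| ≤ 2 * c := by
  by_contra h
  apply ht
  rw [not_le, lt_abs] at h
  rcases h with h | h
  · have : 2 ≤ t / c := by rw [le_div_iff₀ hc]; exact h.le
    rw [bump, Real.smoothTransition.zero_of_nonpos (by linarith), zero_mul]
  · have : t / c ≤ -2 := by rw [div_le_iff₀ hc]; linarith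
    rw [bump, Real.smoothTransition.zero_of_nonpos (x := 2 + t / c) (by linarith), mul_zero]

lemma contDiff_bump (c : ℝ) : ContDiff ℝ (⊤ : ℕ∞) (bump c) := by
  unfold bump
  have h1 : ContDiff ℝ (⊤ : ℕ∞) fun t : ℝ => 2 - t / c := by fun_prop
  have h2 : ContDiff ℝ (⊤ : ℕ∞) fun t : ℝ => 2 + t / c := by fun_prop
  exact (Real.smoothTransition.contDiff.comp h1).mul (Real.smoothTransition.contDiff.comp h2)

/-- The symbol localizing to `m / P ≤ x ≤ (m + 2) / P`, `|y| ≤ 2 c`, `|z| ≤ 2 c`. -/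
def sliceSymbol (c P m : ℝ) (v : E3) : ℂ :=
  (((Real.smoothTransition (P * v 0 - m) - Real.smoothTransition (P * v 0 - m - 1)) *
    bump c (v 1) * bump c (v 2) : ℝ) : ℂ)

lemma sliceSymbol_ne {c P m : ℝ} (hc : 0 < c) {v : E3} (h : sliceSymbol c P m v ≠ 0) :
    m ≤ P * v 0 ∧ P * v 0 ≤ m + 2 ∧ |v 1| ≤ 2 * c ∧ |v 2| ≤ 2 * c := by
  have h' : (Real.smoothTransition (P * v 0 - m) - Real.smoothTransition (P * v 0 - m - 1)) *
    bump c (v 1) * bump c (v 2) ≠ 0 := fun h0 => h (by rw [sliceSymbol, h0, Complex.ofReal_zero])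
  have h2 := abs_le_of_bump_ne hc (right_ne_zero_of_mul h')
  have h1 := abs_le_of_bump_ne hc (right_ne_zero_of_mul (left_ne_zero_of_mul h'))
  have h0 := left_ne_zero_of_mul (left_ne_zero_of_mul h')
  refine ⟨?_, ?_, h1, h2⟩
  · by_contra hcon
    apply h0
    rw [Real.smoothTransition.zero_of_nonpos (by linarith),
      Real.smoothTransition.zero_of_nonpos (by linarith), sub_zero]
  · by_contra hcon
    apply h0
    rw [Real.smoothTransition.one_of_one_le (by linarith),
      Real.smoothTransition.one_of_one_le (by linarith), sub_self]

lemma contDiff_sliceSymbol (c P m : ℝ) : ContDiff ℝ (⊤ : ℕ∞) (sliceSymbol c P m) := by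
  have hp : ∀ i : Fin 3, ContDiff ℝ (⊤ : ℕ∞) fun v : E3 => v i := fun i =>
    (EuclideanSpace.proj (𝕜 := ℝ) i).contDiff
  have h1 : ContDiff ℝ (⊤ : ℕ∞) fun v : E3 => P * v 0 - m := (contDiff_const.mul (hp 0)).sub contDiff_const
  have h2 : ContDiff ℝ (⊤ : ℕ∞) fun v : E3 => P * v 0 - m - 1 := h1.sub contDiff_const
  unfold sliceSymbol
  refine Complex.ofRealCLM.contDiff.comp ?_
  exact (((Real.smoothTransition.contDiff.comp h1).sub (Real.smoothTransition.contDiff.comp h2)).mul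
    ((contDiff_bump c).comp (hp 1))).mul ((contDiff_bump c).comp (hp 2))

lemma hasCompactSupport_sliceSymbol {c P m : ℝ} (hc : 0 < c) (hP : 0 < P) :
    HasCompactSupport (sliceSymbol c P m) := by
  refine HasCompactSupport.of_support_subset_isCompact
    (isCompact_closedBall (0 : E3) (|m| / P + 2 / P + 2 * c + 2 * c)) fun v hv => ?_
  obtain ⟨h0, h0', h1, h2⟩ := sliceSymbol_ne hc hv
  rw [mem_closedBall_zero_iff]
  have hv0 : |v 0| ≤ |m| / P + 2 / P := by
    rw [← add_div, le_div_iff₀ hP, ← abs_of_pos hP, ← abs_mul, abs_le]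
    constructor <;> nlinarith [neg_abs_le m, le_abs_self m]
  rw [EuclideanSpace.norm_eq]
  refine Real.sqrt_le_iff.2 ⟨by positivity, ?_⟩
  rw [Fin.sum_univ_three]
  simp only [Real.norm_eq_abs]
  have := abs_nonneg (v 0); have := abs_nonneg (v 1); have := abs_nonneg (v 2)
  have hq : 0 ≤ |m| / P + 2 / P := by positivity
  calc |v 0| ^ 2 + |v 1| ^ 2 + |v 2| ^ 2 ≤ (|m| / P + 2 / P) ^ 2 + (2 * c) ^ 2 + (2 * c) ^ 2 := by gcongr
    _ ≤ _ := by nlinarith [mul_nonneg hq hc.le]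

lemma sum_sliceSymbol {c P : ℝ} (hc : 0 < c) {m₀ n : ℕ} {v : E3} (h0 : (m₀ : ℝ) + 1 ≤ P * v 0)
    (hn : P * v 0 ≤ m₀ + n) (h1 : |v 1| ≤ c) (h2 : |v 2| ≤ c) :
    ∑ k ∈ Finset.range n, sliceSymbol c P (m₀ + k : ℕ) v = 1 := by
  simp only [sliceSymbol, bump_eq_one hc h1, bump_eq_one hc h2, mul_one]
  rw [← Complex.ofReal_sum]
  have := Finset.sum_range_sub' (fun k : ℕ => Real.smoothTransition (P * v 0 - (m₀ + k : ℕ))) n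
  have h3 : ∀ k : ℕ, P * v 0 - ((m₀ + (k + 1) : ℕ) : ℝ) = P * v 0 - (m₀ + k : ℕ) - 1 := by
    intro k; push_cast; ring
  simp_rw [h3] at this
  rw [this, Real.smoothTransition.one_of_one_le (by push_cast; linarith),
    Real.smoothTransition.zero_of_nonpos (by push_cast; linarith)]
  simp

/-- Sheared coordinates adapted to the plate with index `i`. -/
lemma exists_shear {x y z : E3 →ₗ[ℝ] ℝ} (hinj : ∀ ξ, x ξ = 0 → y ξ = 0 → z ξ = 0 → ξ = 0) (i : ℤ) :
    ∃ A : E3 ≃ₗ[ℝ] E3, ∀ ξ, A ξ 0 = x ξ ∧ A ξ 1 = y ξ - i * x ξ ∧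
      A ξ 2 = z ξ - 2 * i * y ξ + (i : ℝ) ^ 2 * x ξ := by
  set f : E3 →ₗ[ℝ] E3 := (WithLp.linearEquiv 2 ℝ (Fin 3 → ℝ)).symm.toLinearMap ∘ₗ
    LinearMap.pi ![x, y - (i : ℝ) • x, z - (2 * i : ℝ) • y + ((i : ℝ) ^ 2) • x] with hf
  have hv : ∀ ξ, f ξ 0 = x ξ ∧ f ξ 1 = y ξ - i * x ξ ∧
      f ξ 2 = z ξ - 2 * i * y ξ + (i : ℝ) ^ 2 * x ξ := by
    intro ξ
    refine ⟨rfl, ?_, ?_⟩ <;> simp [hf]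
  have hfi : Function.Injective f := by
    rw [injective_iff_map_eq_zero]
    intro ξ h
    obtain ⟨h0, h1, h2⟩ := hv ξ
    rw [h] at h0 h1 h2
    have h0' : x ξ = 0 := by rw [← h0]; simp
    have h1' : y ξ = 0 := by
      rw [h0', mul_zero, sub_zero] at h1; rw [← h1]; simp
    have h2' : z ξ = 0 := by
      rw [h0', h1', mul_zero, mul_zero, sub_zero, add_zero] at h2; rw [← h2]; simp
    exact hinj ξ h0' h1' h2'
  refine ⟨LinearEquiv.ofInjectiveEndo f hfi, fun ξ => ?_⟩
  rw [LinearEquiv.coe_ofInjectiveEndo]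
  exact hv ξ

lemma Spec.ext_fourier {A B : Set E3} {f g : E3 → ℂ} (hf : Spec A f) (hg : Spec B g)
    (h : 𝓕 f = 𝓕 g) : f = g := by
  rw [← hf.inv, ← hg.inv, h]

lemma Spec.fourier_sum {A : Set E3} {ι : Type*} (s : Finset ι) {F : ι → E3 → ℂ}
    (h : ∀ i ∈ s, Spec A (F i)) (ξ : E3) :
    𝓕 (fun x => ∑ i ∈ s, F i x) ξ = ∑ i ∈ s, 𝓕 (F i) ξ := by
  classical
  induction s using Finset.induction_on with
  | empty =>
    simp only [Finset.sum_empty]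
    exact congrFun Spec.fourier_zero' ξ
  | insert i s hi ih =>
    have h1 := h i (Finset.mem_insert_self _ _)
    have h2 : ∀ j ∈ s, Spec A (F j) := fun j hj => h j (Finset.mem_insert_of_mem hj)
    have e : (fun x => ∑ j ∈ insert i s, F j x) = F i + fun x => ∑ j ∈ s, F j x := by
      funext x; simp [Finset.sum_insert hi]
    rw [e, Spec.fourier_add' h1.int (Spec.sum s h2).int, Finset.sum_insert hi, Pi.add_apply, ih h2]

open scoped Pointwise in
/-- Decoupling for a thin slice `m / P ≤ x ≤ (m + 2) / P` of a sector, `P = 16 R²`. -/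
lemma slice_decoupling {c R m : ℕ} (hc : 1 ≤ c) (hR : 2 ≤ R) (hm : 2 * R ^ 2 ≤ m) {A η : ℝ}
    (hA : 1 ≤ A) (hη : 0 < η)
    (hslab : ∀ (x y z : E3 →ₗ[ℝ] ℝ) (F : ℤ → E3 → ℂ) (e : ℤ → ℝ),
      (∀ j, Spec (ConeSlab x y z ((16 * c : ℕ) : ℝ) R j) (F j)) → (∀ j, 0 ≤ e j) →
      (∀ j, ∫ x, ‖F j x‖ ^ 6 ≤ e j ^ 3) → ∀ (a : ℤ) (N : ℕ), 1 ≤ N →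
        ∫ x, ‖blockSum F a N x‖ ^ 6 ≤ A * (N : ℝ) ^ η * blockE e a N ^ 3)
    {p : ℝ} (hp2 : 2 ≤ p) (hp6 : p ≤ 6) :
    ∃ C : ℝ, 0 < C ∧ ∀ (x y z : E3 →ₗ[ℝ] ℝ) (Sh : ℤ → E3 ≃ₗ[ℝ] E3),
      (∀ i ξ, Sh i ξ 0 = x ξ ∧ Sh i ξ 1 = y ξ - i * x ξ ∧
        Sh i ξ 2 = z ξ - 2 * i * y ξ + (i : ℝ) ^ 2 * x ξ) →
      ∃ T : ℤ → (E3 → ℂ) → E3 → ℂ,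
        (∀ i g, Integrable g → Spec univ (T i g) ∧
          𝓕 (T i g) = fun ξ => sliceSymbol c (16 * R ^ 2) m (Sh i ξ) * 𝓕 g ξ) ∧
        ∀ F : ℤ → E3 → ℂ, (∀ i, Integrable (F i) ∧ Measurable (F i)) →
          (∀ i, ∫⁻ x, ‖F i x‖ₑ ^ p ≠ ⊤) → ∀ (a : ℤ) (N : ℕ), 1 ≤ N →
          ∫⁻ x, ‖∑ i ∈ Finset.Ico a (a + N), T i (F i) x‖ₑ ^ p ≤ ENNReal.ofReal (C * (N : ℝ) ^ η) *
            (∑ i ∈ Finset.Ico a (a + N), (∫⁻ x, ‖F i x‖ₑ ^ p) ^ (2 / p)) ^ (p / 2) := by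
  have hc0 : (0:ℝ) < c := by exact_mod_cast hc
  have hR0 : (0:ℝ) < R := by exact_mod_cast (by omega : 0 < R)
  have hP : (0:ℝ) < 16 * (R:ℝ) ^ 2 := by positivity
  have hm' : 2 * (R:ℝ) ^ 2 ≤ m := by exact_mod_cast hm
  have hm0 : (0:ℝ) < m := by nlinarith
  obtain ⟨B, hB, hop⟩ := exists_op (contDiff_sliceSymbol c (16 * R ^ 2) m)
    (hasCompactSupport_sliceSymbol hc0 hP)
  obtain ⟨M, hM, hint⟩ := ops_interp hp2 hp6 (B := B) (D := ((64 * c + 1 : ℕ) : ℝ)) (by positivity)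
  refine ⟨M * A, by positivity, fun x y z Sh hSh => ?_⟩
  choose T hT1 hT2 hT3 using fun i => hop (Sh i)
  refine ⟨T, fun i g hg => ⟨(hT1 i g hg).1.mono (subset_univ _), (hT1 i g hg).2⟩, ?_⟩
  intro F hF hFt a N hN
  have hN1 : (1:ℝ) ≤ N := by exact_mod_cast hN
  have hL : 1 ≤ A * (N : ℝ) ^ η := by
    have : 1 ≤ (N:ℝ) ^ η := Real.one_le_rpow hN1 hη.le
    nlinarith
  have hs : (Finset.Ico a (a + N)).Nonempty := by
    rw [Finset.nonempty_Ico]; omega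
  -- frequency support of the pieces
  have hsupp : ∀ (i : ℤ) (ξ : E3), sliceSymbol c (16 * R ^ 2) m (Sh i ξ) ≠ 0 →
      (m : ℝ) ≤ 16 * (R : ℝ) ^ 2 * x ξ ∧ 16 * (R : ℝ) ^ 2 * x ξ ≤ (m : ℝ) + 2 ∧
      |y ξ - (i : ℝ) * x ξ| ≤ 2 * (c : ℝ) ∧
      |z ξ - 2 * (i : ℝ) * y ξ + (i : ℝ) ^ 2 * x ξ| ≤ 2 * (c : ℝ) := by
    intro i ξ h
    have := sliceSymbol_ne hc0 h
    obtain ⟨h0, h1, h2⟩ := hSh i ξ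
    rwa [h0, h1, h2] at this
  have hx8 : ∀ i ξ, sliceSymbol c (16 * R ^ 2) m (Sh i ξ) ≠ 0 → 1 / 8 ≤ x ξ := by
    intro i ξ h
    obtain ⟨h0, -⟩ := hsupp i ξ h
    by_contra hcon
    nlinarith
  set x₀ : ℝ := m / (16 * R ^ 2) with hx₀
  have hx₀' : 1 / 8 ≤ x₀ := by rw [hx₀, le_div_iff₀ hP]; linarith
  have hx₀p : 0 < x₀ := by linarith
  have hslabsub : ∀ i, {ξ | sliceSymbol c (16 * R ^ 2) m (Sh i ξ) ≠ 0} ⊆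
      ConeSlab (x₀⁻¹ • x) (x₀⁻¹ • y) (x₀⁻¹ • z) ((16 * c : ℕ) : ℝ) R i := by
    intro i ξ h
    obtain ⟨h0, h1, h2, h3⟩ := hsupp i ξ h
    have hi8 : x₀⁻¹ ≤ 8 := by
      rw [inv_le_comm₀ hx₀p (by norm_num)]; linarith
    have hip : 0 < x₀⁻¹ := inv_pos.2 hx₀p
    have hmx : (m:ℝ) = 16 * R ^ 2 * x₀ := by rw [hx₀]; field_simp
    have hxx : x₀ ≤ x ξ := by
      rw [hmx] at h0; exact le_of_mul_le_mul_left h0 hP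
    refine ⟨?_, ?_, ?_, ?_⟩
    · simp only [LinearMap.smul_apply, smul_eq_mul]
      rw [← inv_mul_cancel₀ hx₀p.ne']; gcongr
    · simp only [LinearMap.smul_apply, smul_eq_mul]
      have e1 : (R:ℝ) ^ 2 * (x₀⁻¹ * x ξ - 1) = x₀⁻¹ * (R ^ 2 * (x ξ - x₀)) := by
        field_simp
      rw [e1]
      have e2 : (R:ℝ) ^ 2 * (x ξ - x₀) ≤ 1 / 8 := by rw [hmx] at h1; linarith
      calc x₀⁻¹ * (R ^ 2 * (x ξ - x₀)) ≤ 8 * (1 / 8) := by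
            have : 0 ≤ (R:ℝ) ^ 2 * (x ξ - x₀) := by
              have : 0 ≤ x ξ - x₀ := by linarith
              positivity
            gcongr
        _ = 1 := by norm_num
    · simp only [LinearMap.smul_apply, smul_eq_mul]
      rw [show x₀⁻¹ * y ξ - i * (x₀⁻¹ * x ξ) = x₀⁻¹ * (y ξ - i * x ξ) by ring, abs_mul,
        abs_of_pos hip]
      calc _ ≤ 8 * (2 * (c:ℝ)) := by gcongr
        _ = _ := by push_cast; ring
    · simp only [LinearMap.smul_apply, smul_eq_mul]
      rw [show x₀⁻¹ * z ξ - 2 * i * (x₀⁻¹ * y ξ) + (i:ℝ) ^ 2 * (x₀⁻¹ * x ξ) =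
        x₀⁻¹ * (z ξ - 2 * i * y ξ + (i:ℝ) ^ 2 * x ξ) by ring, abs_mul, abs_of_pos hip]
      calc _ ≤ 8 * (2 * (c:ℝ)) := by gcongr
        _ = _ := by push_cast; ring
  refine (hint (A * (N:ℝ) ^ η) hL _ hs T (fun i g hg => ⟨_, (hT1 i g hg).1⟩) hT2 hT3 ?_ ?_
    F hF hFt).trans (le_of_eq (by rw [mul_assoc]))
  · intro g hg
    have hdec : DecidableRel fun i j : ℤ => |i - j| ≤ 32 * (c : ℤ) := fun i j => inferInstance
    have := orth_weight (Finset.Ico a (a + N)) (fun i => T i (g i)) (fun _ => 1)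
      (fun _ => zero_le_one) continuous_const ⟨1, fun _ => le_rfl⟩
      (fun i _ => ⟨_, (hT1 i _ (hg i)).1⟩) (fun i j => |i - j| ≤ 32 * (c : ℤ))
      (fun i j h => by rwa [abs_sub_comm]) (64 * c + 1) ?_ ?_
    · simpa using this
    · intro i _
      calc _ ≤ (Finset.Icc (i - 32 * c) (i + 32 * c)).card := by
            refine Finset.card_le_card fun j hj => ?_
            have h := (Finset.mem_filter.1 hj).2
            rw [abs_le] at h
            rw [Finset.mem_Icc]; omega
        _ ≤ _ := by rw [Int.card_Icc]; omega
    · intro i _ j _ hij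
      have hS := (hT1 i _ (hg i)).1.mul (hT1 j _ (hg j)).1.conj
      have h0 : (0 : E3) ∉ {ξ | sliceSymbol c (16 * R ^ 2) m (Sh i ξ) ≠ 0} +
          -{ξ | sliceSymbol c (16 * R ^ 2) m (Sh j ξ) ≠ 0} := by
        rintro ⟨u, hu, v, hv, huv⟩
        have hvu : -v = u := by
          have : u + v = 0 := huv
          exact (eq_neg_of_add_eq_zero_left this).symm
        have hv' : sliceSymbol c (16 * R ^ 2) m (Sh j u) ≠ 0 := by rw [← hvu]; exact hv
        have h1 := (hsupp i u hu).2.2.1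
        have h2 := (hsupp j u hv').2.2.1
        have h3 := hx8 i u hu
        apply hij
        have h4 : |((i:ℝ) - j)| * x u ≤ 4 * c := by
          rw [← abs_of_pos (show 0 < x u by linarith), ← abs_mul]
          rw [abs_le] at h1 h2 ⊢
          constructor <;> nlinarith
        have h5 : |((i:ℝ) - j)| ≤ 32 * c := by nlinarith [abs_nonneg ((i:ℝ) - j)]
        exact_mod_cast h5
      simpa using hS.integral_eq_zero h0
  · intro g hg
    have hnn : ∀ i, 0 ≤ ∫ x, ‖T i (g i) x‖ ^ 6 := fun i => integral_nonneg fun x => by positivity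
    exact hslab _ _ _ (fun i => T i (g i)) (fun i => (∫ x, ‖T i (g i) x‖ ^ 6) ^ ((1:ℝ) / 3))
      (fun i => (hT1 i _ (hg i)).1.mono (hslabsub i)) (fun i => Real.rpow_nonneg (hnn i) _)
      (fun i => by
        rw [← Real.rpow_natCast, ← Real.rpow_mul (hnn i)]; norm_num) a N hN

/-- Decoupling for a sector of the cone: a smooth partition of the range `1/4 ≤ x ≤ 6` into
boundedly many thin slices reduces it to `slice_decoupling`. -/
theorem sector_decoupling {c : ℕ} (hc : 1 ≤ c) {p : ℝ} (hp2 : 2 ≤ p) (hp6 : p ≤ 6) {η : ℝ}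
    (hη : 0 < η) :
    ∃ C : ℝ, 0 < C ∧ ∀ x y z : E3 →ₗ[ℝ] ℝ, (∀ ξ, x ξ = 0 → y ξ = 0 → z ξ = 0 → ξ = 0) →
      ∀ F : ℤ → E3 → ℂ, (∀ i, Spec (ConePl x y z c i) (F i)) → ∀ (a : ℤ) (N : ℕ), 1 ≤ N →
        ∫⁻ x, ‖∑ i ∈ Finset.Ico a (a + N), F i x‖ₑ ^ p ≤ ENNReal.ofReal (C * (N : ℝ) ^ η) *
          (∑ i ∈ Finset.Ico a (a + N), (∫⁻ x, ‖F i x‖ₑ ^ p) ^ (2 / p)) ^ (p / 2) := by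
  obtain ⟨R, A, hR, hA, hslab⟩ := slab_decoupling (16 * c) hη
  have hR0 : (0:ℝ) < R := by exact_mod_cast (by omega : 0 < R)
  have hR1 : (1:ℝ) ≤ R := by exact_mod_cast (by omega : 1 ≤ R)
  have hc0 : (0:ℝ) < c := by exact_mod_cast hc
  have hslab' : ∀ (x y z : E3 →ₗ[ℝ] ℝ) (F : ℤ → E3 → ℂ) (e : ℤ → ℝ),
      (∀ j, Spec (ConeSlab x y z ((16 * c : ℕ) : ℝ) R j) (F j)) → (∀ j, 0 ≤ e j) →
      (∀ j, ∫ x, ‖F j x‖ ^ 6 ≤ e j ^ 3) → ∀ (a : ℤ) (N : ℕ), 1 ≤ N →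
        ∫ x, ‖blockSum F a N x‖ ^ 6 ≤ max A 1 * (N : ℝ) ^ η * blockE e a N ^ 3 := by
    intro x y z F e h1 h2 h3 a N hN
    refine (hslab x y z F e h1 h2 h3 a N hN).trans ?_
    have : 0 ≤ blockE e a N := Finset.sum_nonneg fun i _ => h2 i
    gcongr
    exact le_max_left _ _
  set m₀ : ℕ := 2 * R ^ 2 with hm₀
  set n : ℕ := 94 * R ^ 2 with hn
  choose D hD0 hD using fun k : ℕ => slice_decoupling (m := m₀ + k) hc hR (by omega)
    (le_max_right A 1) hη hslab' hp2 hp6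
  have hp0 : 0 < p := by linarith
  have hn0 : 0 < n := by
    have : 0 < R ^ 2 := by positivity
    omega
  refine ⟨(n : ℝ) ^ (p - 1) * ∑ k ∈ Finset.range n, D k, ?_, ?_⟩
  · refine mul_pos (Real.rpow_pos_of_pos (by exact_mod_cast hn0) _)
      (Finset.sum_pos (fun k _ => hD0 k) (Finset.nonempty_range_iff.2 hn0.ne'))
  intro x y z hinj F hF a N hN
  choose Sh hSh using exists_shear hinj
  choose T hT1 hT2 using fun k => hD k x y z Sh hSh
  -- the slices of each piece add up to the piece
  have hdec : ∀ i, F i = fun u => ∑ k ∈ Finset.range n, T k i (F i) u := by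
    intro i
    refine (hF i).ext_fourier (Spec.sum _ fun k _ => (hT1 k i _ (hF i).int).1) ?_
    funext ξ
    rw [Spec.fourier_sum _ fun k _ => (hT1 k i _ (hF i).int).1]
    simp only [fun k => (hT1 k i _ (hF i).int).2]
    rw [← Finset.sum_mul]
    by_cases hξ : ξ ∈ ConePl x y z c i
    · obtain ⟨h1, h2, h3, h4⟩ := hξ
      obtain ⟨e0, e1, e2⟩ := hSh i ξ
      rw [sum_sliceSymbol hc0, one_mul]
      · rw [e0, hm₀]; push_cast; nlinarith [mul_le_mul_of_nonneg_left h1 (sq_nonneg (R:ℝ))]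
      · rw [e0, hm₀, hn]; push_cast; nlinarith [mul_le_mul_of_nonneg_left h2 (sq_nonneg (R:ℝ))]
      · rwa [e1]
      · rwa [e2]
    · rw [(hF i).supp ξ hξ, mul_zero]
  have hsum : ∀ u, ∑ i ∈ Finset.Ico a (a + N), F i u =
      ∑ k ∈ Finset.range n, ∑ i ∈ Finset.Ico a (a + N), T k i (F i) u := by
    intro u
    rw [Finset.sum_comm]
    exact Finset.sum_congr rfl fun i _ => congrFun (hdec i) u
  have hmeas : ∀ k i, Measurable (T k i (F i)) := fun k i =>
    (hT1 k i _ (hF i).int).1.cont.measurable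
  set W := (∑ i ∈ Finset.Ico a (a + N), (∫⁻ x, ‖F i x‖ₑ ^ p) ^ (2 / p)) ^ (p / 2) with hW
  have hk : ∀ k, ∫⁻ u, ‖∑ i ∈ Finset.Ico a (a + N), T k i (F i) u‖ₑ ^ p ≤
      ENNReal.ofReal (D k * (N : ℝ) ^ η) * W := fun k =>
    hT2 k F (fun i => ⟨(hF i).int, (hF i).cont.measurable⟩)
      (fun i => (hF i).lintegral_rpow_ne_top (by linarith)) a N hN
  calc ∫⁻ u, ‖∑ i ∈ Finset.Ico a (a + N), F i u‖ₑ ^ p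
      ≤ ∫⁻ u, (n : ℝ≥0∞) ^ (p - 1) *
          ∑ k ∈ Finset.range n, ‖∑ i ∈ Finset.Ico a (a + N), T k i (F i) u‖ₑ ^ p := by
        refine lintegral_mono fun u => ?_
        rw [hsum u]
        have h1 := ENNReal.rpow_sum_le_const_mul_sum_rpow (Finset.range n)
          (fun k => ‖∑ i ∈ Finset.Ico a (a + N), T k i (F i) u‖ₑ) (p := p) (by linarith)
        rw [Finset.card_range] at h1
        exact (ENNReal.rpow_le_rpow (enorm_sum_le _ _) hp0.le).trans h1
    _ = (n : ℝ≥0∞) ^ (p - 1) * ∑ k ∈ Finset.range n,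
          ∫⁻ u, ‖∑ i ∈ Finset.Ico a (a + N), T k i (F i) u‖ₑ ^ p := by
        rw [lintegral_const_mul, lintegral_finsetSum]
        · intro k _
          exact (Finset.measurable_sum _ fun i _ => hmeas k i).enorm.pow_const p
        · exact Finset.measurable_sum _ fun k _ =>
            (Finset.measurable_sum _ fun i _ => hmeas k i).enorm.pow_const p
    _ ≤ (n : ℝ≥0∞) ^ (p - 1) * ∑ k ∈ Finset.range n, ENNReal.ofReal (D k * (N : ℝ) ^ η) * W := by
        exact mul_le_mul_right (Finset.sum_le_sum fun k _ => hk k) _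
    _ = _ := by
        rw [← Finset.sum_mul, ← ENNReal.ofReal_sum_of_nonneg (fun k _ => by
          have := hD0 k; positivity), ← mul_assoc]
        congr 1
        rw [← ENNReal.ofReal_natCast, ENNReal.ofReal_rpow_of_pos (by exact_mod_cast hn0),
          ← ENNReal.ofReal_mul (by positivity), ← Finset.sum_mul, mul_assoc]

/-! ### Geometry of the plates -/

lemma cos_ge_of_abs_le {φ : ℝ} (hφ : |φ| ≤ Real.pi / 4) : 7 / 10 ≤ Real.cos φ := by
  rw [← Real.cos_abs]
  refine le_trans ?_ (Real.cos_le_cos_of_nonneg_of_le_pi (abs_nonneg _)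
    (by linarith [Real.pi_pos]) hφ)
  rw [Real.cos_pi_div_four]
  have : (14 / 10 : ℝ) ≤ √2 := Real.le_sqrt_of_sq_le (by norm_num)
  linarith

lemma abs_tan_le_one {φ : ℝ} (hφ : |φ| ≤ Real.pi / 4) : |Real.tan φ| ≤ 1 := by
  have hc := cos_ge_of_abs_le hφ
  have h2 : Real.cos (2 * φ) ≥ 0 := by
    apply Real.cos_nonneg_of_neg_pi_div_two_le_of_le <;> linarith [abs_le.1 hφ]
  rw [Real.cos_two_mul] at h2
  have h3 := Real.sin_sq_add_cos_sq φ
  rw [Real.tan_eq_sin_div_cos, abs_div, abs_of_pos (by linarith : 0 < Real.cos φ),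
    div_le_one (by linarith)]
  exact abs_le_of_sq_le_sq (by linarith) (by linarith)

/-- A point of the plate at half-angle `φ`, written as `(x, y, z) = (2 r cos² ψ + τ, 2 r sin ψ cos ψ,
2 r sin² ψ + τ)` with `ψ` close to `φ`, lies in the sheared box with index `⌊K tan φ⌋` after the
scaling `(x, K y, K² z)`. -/
lemma cone_est {K r τ φ ψ : ℝ} (hK : 20 ≤ K) (hr : 1 / 2 ≤ r) (hr2 : r ≤ 2)
    (hτ : |τ| ≤ 1 / K ^ 2) (hφ : |φ| ≤ Real.pi / 4) (h1 : φ ≤ ψ) (h2 : ψ - φ ≤ Real.pi / K)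
    {i : ℤ} (hi : i = ⌊K * Real.tan φ⌋) {x y z : ℝ} (hx : x = 2 * r * Real.cos ψ ^ 2 + τ)
    (hy : y = 2 * r * (Real.sin ψ * Real.cos ψ)) (hz : z = 2 * r * Real.sin ψ ^ 2 + τ) :
    1 / 4 ≤ x ∧ x ≤ 6 ∧ |K * y - i * x| ≤ 150 ∧
      |K ^ 2 * z - 2 * i * (K * y) + (i : ℝ) ^ 2 * x| ≤ 150 := by
  have hK0 : 0 < K := by linarith
  have hcφ := cos_ge_of_abs_le hφ
  have htan := abs_tan_le_one hφ
  have hpi := Real.pi_lt_d2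
  have hpi0 := Real.pi_pos
  have hK2 : 1 / K ^ 2 ≤ 1 / 400 := by
    exact one_div_le_one_div_of_le (by norm_num) (by nlinarith)
  have hpK : Real.pi / K ≤ 16 / 100 := by
    rw [div_le_iff₀ hK0]; linarith
  have hcc : |Real.cos ψ - Real.cos φ| ≤ 16 / 100 := by
    refine (Real.abs_cos_sub_cos_le ψ φ).trans ?_
    rw [abs_of_nonneg (by linarith)]; linarith
  have hcψ : 54 / 100 ≤ Real.cos ψ := by linarith [abs_le.1 hcc]
  have hcψ1 := Real.cos_le_one ψ
  have hτ' := abs_le.1 hτ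
  -- `σ = i / K` approximates the slope `tan φ`
  set σ : ℝ := i / K with hσ
  have hiσ : (i : ℝ) = K * σ := by rw [hσ]; field_simp
  have hfl := Int.floor_le (K * Real.tan φ)
  have hfl2 := Int.lt_floor_add_one (K * Real.tan φ)
  rw [← hi] at hfl hfl2
  rw [hiσ] at hfl hfl2
  have hσ1 : |Real.tan φ - σ| ≤ 1 / K := by
    rw [le_div_iff₀ hK0, ← abs_of_pos hK0, ← abs_mul, abs_le]
    constructor <;> linarith
  have hK1 : 1 / K ≤ 1 / 20 := one_div_le_one_div_of_le (by norm_num) hK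
  have hσ2 : |σ| ≤ 2 := by
    rw [abs_le] at *; constructor <;> linarith
  have hq0 : |Real.sin ψ - Real.tan φ * Real.cos ψ| ≤ 5 / K := by
    have e : Real.sin ψ - Real.tan φ * Real.cos ψ = Real.sin (ψ - φ) / Real.cos φ := by
      rw [Real.tan_eq_sin_div_cos, Real.sin_sub]
      field_simp [(by linarith : Real.cos φ ≠ 0)]
    rw [e, abs_div, abs_of_pos (by linarith : 0 < Real.cos φ), div_le_iff₀ (by linarith)]
    have : |Real.sin (ψ - φ)| ≤ Real.pi / K := by
      refine (Real.abs_sin_le_abs).trans ?_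
      rwa [abs_of_nonneg (by linarith)]
    refine this.trans ?_
    rw [div_mul_eq_mul_div]
    gcongr
    linarith
  set q : ℝ := Real.sin ψ - σ * Real.cos ψ with hq
  have hq1 : |q| ≤ 6 / K := by
    have e : q = (Real.sin ψ - Real.tan φ * Real.cos ψ) + (Real.tan φ - σ) * Real.cos ψ := by
      rw [hq]; ring
    rw [e]
    refine (abs_add_le _ _).trans ?_
    have : |(Real.tan φ - σ) * Real.cos ψ| ≤ 1 / K := by
      rw [abs_mul, abs_of_pos (by linarith : 0 < Real.cos ψ)]
      exact (mul_le_of_le_one_right (abs_nonneg _) hcψ1).trans hσ1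
    calc _ ≤ 5 / K + 1 / K := by linarith
      _ = 6 / K := by ring
  have hKq : |K * q| ≤ 6 := by
    rw [abs_mul, abs_of_pos hK0]
    calc K * |q| ≤ K * (6 / K) := by gcongr
      _ = 6 := by field_simp
  have hKτ : |K ^ 2 * τ| ≤ 1 := by
    rw [abs_mul, abs_of_pos (by positivity)]
    calc K ^ 2 * |τ| ≤ K ^ 2 * (1 / K ^ 2) := by gcongr
      _ = 1 := by field_simp
  have hKτ' : |K * τ| ≤ 1 := by
    refine le_trans ?_ hKτ
    rw [abs_mul, abs_mul, abs_of_pos hK0, abs_of_pos (by positivity : 0 < K ^ 2)]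
    have : K ≤ K ^ 2 := by nlinarith
    gcongr
  refine ⟨?_, ?_, ?_, ?_⟩
  · have hsq : (54 / 100 : ℝ) ^ 2 ≤ Real.cos ψ ^ 2 := by gcongr
    have : 2 * (1 / 2) * (54 / 100 : ℝ) ^ 2 ≤ 2 * r * Real.cos ψ ^ 2 := by gcongr
    rw [hx]; linarith [hτ'.1]
  · have hsq : Real.cos ψ ^ 2 ≤ 1 := Real.cos_sq_le_one ψ
    have : 2 * r * Real.cos ψ ^ 2 ≤ 2 * 2 * 1 := by gcongr
    rw [hx]; linarith [hτ'.2]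
  · have e : K * y - i * x = 2 * r * Real.cos ψ * (K * q) - σ * (K * τ) := by
      rw [hy, hx, hiσ, hq]; ring
    rw [e]
    have a1 : |2 * r * Real.cos ψ * (K * q)| ≤ 4 * 6 := by
      have hcp : 0 < Real.cos ψ := by linarith
      have hrp : 0 < r := by linarith
      have b : 2 * r * Real.cos ψ ≤ 2 * 2 * 1 := by gcongr
      rw [abs_mul, abs_of_pos (by positivity : 0 < 2 * r * Real.cos ψ)]
      exact mul_le_mul (by linarith) hKq (abs_nonneg _) (by norm_num)
    have a2 : |σ * (K * τ)| ≤ 2 * 1 := by rw [abs_mul]; gcongr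
    have := abs_sub (2 * r * Real.cos ψ * (K * q)) (σ * (K * τ))
    linarith
  · have e : K ^ 2 * z - 2 * i * (K * y) + (i : ℝ) ^ 2 * x =
        2 * r * (K * q) ^ 2 + (1 + σ ^ 2) * (K ^ 2 * τ) := by
      rw [hy, hx, hz, hiσ, hq]; ring
    rw [e]
    have b1 : (K * q) ^ 2 ≤ 6 ^ 2 := by rw [← sq_abs]; gcongr
    have a1 : |2 * r * (K * q) ^ 2| ≤ 4 * 6 ^ 2 := by
      rw [abs_of_nonneg (by positivity)]
      exact mul_le_mul (by linarith) b1 (sq_nonneg _) (by norm_num)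
    have b2 : σ ^ 2 ≤ 2 ^ 2 := by rw [← sq_abs]; gcongr
    have a2 : |(1 + σ ^ 2) * (K ^ 2 * τ)| ≤ (1 + 2 ^ 2) * 1 := by
      rw [abs_mul, abs_of_pos (by positivity : 0 < 1 + σ ^ 2)]; gcongr
    have := abs_add_le (2 * r * (K * q) ^ 2) ((1 + σ ^ 2) * (K ^ 2 * τ))
    linarith

/-- The half-angle of the `j`-th plate, measured from the centre `k π / 2` of the `k`-th sector. -/
def halfAngle (K : ℕ) (k : ℕ) (j : Fin K) : ℝ := Real.pi * j / K - k * (Real.pi / 2)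

/-- The index of the `j`-th plate within the `k`-th sector. -/
def plateIdx (K : ℕ) (k : ℕ) (j : Fin K) : ℤ := ⌊(K : ℝ) * Real.tan (halfAngle K k j)⌋

/-- The `i`-th coordinate functional. -/
def coordF (i : Fin 3) : E3 →ₗ[ℝ] ℝ := (EuclideanSpace.proj (𝕜 := ℝ) i : E3 →L[ℝ] ℝ).toLinearMap

lemma coordF_apply (i : Fin 3) (ξ : E3) : coordF i ξ = ξ i := rfl

/-- Coordinates `x`, `K y`, `K² z` adapted to the `k`-th sector, in which the cone is `x z = y²`. -/
def secX (k : ℕ) : E3 →ₗ[ℝ] ℝ := coordF 2 + ((-1 : ℝ) ^ k) • coordF 0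

/-- See `secX`. -/
def secY (K : ℝ) (k : ℕ) : E3 →ₗ[ℝ] ℝ := (K * (-1 : ℝ) ^ k) • coordF 1

/-- See `secX`. -/
def secZ (K : ℝ) (k : ℕ) : E3 →ₗ[ℝ] ℝ := (K ^ 2) • (coordF 2 - ((-1 : ℝ) ^ k) • coordF 0)

lemma sec_inj {K : ℝ} (hK : 0 < K) (k : ℕ) (ξ : E3) (hx : secX k ξ = 0) (hy : secY K k ξ = 0)
    (hz : secZ K k ξ = 0) : ξ = 0 := by
  have he : ((-1 : ℝ) ^ k) ≠ 0 := pow_ne_zero _ (by norm_num)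
  simp only [secX, secY, secZ, LinearMap.add_apply, LinearMap.smul_apply, LinearMap.sub_apply,
    coordF_apply, smul_eq_mul, mul_eq_zero, pow_eq_zero_iff two_ne_zero, hK.ne', he, or_false,
    false_or] at hx hy hz
  have h2 : ξ 2 = 0 := by linarith
  have h0 : ξ 0 = 0 := by
    have : (-1 : ℝ) ^ k * ξ 0 = 0 := by linarith
    exact (mul_eq_zero.1 this).resolve_left he
  ext i
  fin_cases i
  · exact h0
  · exact hy
  · exact h2

lemma conePlate_subset {K : ℕ} (hK : 20 ≤ K) {k : ℕ} {j : Fin K}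
    (hφ : |halfAngle K k j| ≤ Real.pi / 4) :
    conePlate (1 / (K : ℝ) ^ 2) K j ⊆
      ConePl (secX k) (secY K k) (secZ K k) (150 : ℕ) (plateIdx K k j) := by
  rintro ξ ⟨r, θ, hr, hr2, ⟨hθ1, hθ2⟩, h0, h1, h2⟩
  have hK' : (20 : ℝ) ≤ K := by exact_mod_cast hK
  have hK0 : (0 : ℝ) < K := by linarith
  set ψ : ℝ := θ / 2 - k * (Real.pi / 2) with hψ
  have hθψ : θ - k * Real.pi = 2 * ψ := by rw [hψ]; ring
  have hc : (-1 : ℝ) ^ k * Real.cos θ = Real.cos (2 * ψ) := by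
    rw [← hθψ, Real.cos_sub_nat_mul_pi]
  have hs : (-1 : ℝ) ^ k * Real.sin θ = Real.sin (2 * ψ) := by
    rw [← hθψ, Real.sin_sub_nat_mul_pi]
  have hsc := Real.sin_sq_add_cos_sq ψ
  have e1 : 2 * Real.pi * j / K = 2 * (Real.pi * j / K) := by ring
  have e2 : 2 * Real.pi * (j + 1) / K = 2 * (Real.pi * j / K) + 2 * (Real.pi / K) := by ring
  rw [e1] at hθ1
  rw [e2] at hθ2
  have := cone_est (τ := ξ 2 - r) (ψ := ψ) hK' hr hr2 h2 hφ
    (by rw [hψ, halfAngle]; linarith) (by rw [hψ, halfAngle]; linarith) (i := plateIdx K k j) rfl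
    (x := secX k ξ) (y := (-1 : ℝ) ^ k * ξ 1) (z := ξ 2 - (-1 : ℝ) ^ k * ξ 0)
    (by
      simp only [secX, LinearMap.add_apply, LinearMap.smul_apply, coordF_apply, smul_eq_mul]
      rw [h0, show (-1 : ℝ) ^ k * (r * Real.cos θ) = r * ((-1 : ℝ) ^ k * Real.cos θ) by ring, hc,
        Real.cos_two_mul]; ring)
    (by
      rw [h1, show (-1 : ℝ) ^ k * (r * Real.sin θ) = r * ((-1 : ℝ) ^ k * Real.sin θ) by ring, hs,
        Real.sin_two_mul]; ring)
    (by
      rw [h0, show (-1 : ℝ) ^ k * (r * Real.cos θ) = r * ((-1 : ℝ) ^ k * Real.cos θ) by ring, hc,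
        Real.cos_two_mul, Real.sin_sq]; ring)
  obtain ⟨a1, a2, a3, a4⟩ := this
  have ey : secY K k ξ = K * ((-1 : ℝ) ^ k * ξ 1) := by
    simp only [secY, LinearMap.smul_apply, coordF_apply, smul_eq_mul]; ring
  have ez : secZ K k ξ = (K : ℝ) ^ 2 * (ξ 2 - (-1 : ℝ) ^ k * ξ 0) := by
    simp only [secZ, LinearMap.smul_apply, LinearMap.sub_apply, coordF_apply, smul_eq_mul]
  refine ⟨a1, a2, ?_, ?_⟩
  · rw [ey]; exact_mod_cast a3
  · rw [ey, ez]; exact_mod_cast a4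

lemma plateIdx_inj {K k : ℕ} {j j' : Fin K} (hφ : |halfAngle K k j| ≤ Real.pi / 4)
    (hφ' : |halfAngle K k j'| ≤ Real.pi / 4) (h : plateIdx K k j = plateIdx K k j') : j = j' := by
  wlog hlt : j < j' generalizing j j'
  · rcases lt_trichotomy j j' with h1 | h1 | h1
    · exact absurd h1 hlt
    · exact h1
    · exact (this hφ' hφ h.symm h1).symm
  exfalso
  have hK0 : (0 : ℝ) < K := by exact_mod_cast (lt_of_le_of_lt (Nat.zero_le _) j.2)
  have hpi := Real.pi_pos
  have hc := cos_ge_of_abs_le hφ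
  have hc' := cos_ge_of_abs_le hφ'
  have hj : (j : ℝ) + 1 ≤ j' := by exact_mod_cast hlt
  have hd : Real.pi / K ≤ halfAngle K k j' - halfAngle K k j := by
    have e : halfAngle K k j' - halfAngle K k j = Real.pi / K * (j' - j) := by
      simp only [halfAngle]; ring
    rw [e]
    exact le_mul_of_one_le_right (by positivity) (by linarith)
  set φ := halfAngle K k j with hφd
  set φ' := halfAngle K k j' with hφd'
  have hsin : 2 / K ≤ Real.sin (φ' - φ) := by
    have h1 := Real.mul_le_sin (x := φ' - φ) ((by positivity : 0 ≤ Real.pi / K).trans hd)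
      (by linarith [abs_le.1 hφ, abs_le.1 hφ'])
    refine le_trans ?_ h1
    calc 2 / (K : ℝ) = 2 / Real.pi * (Real.pi / K) := by field_simp
      _ ≤ _ := by gcongr
  have ht : Real.sin (φ' - φ) = (Real.tan φ' - Real.tan φ) * (Real.cos φ * Real.cos φ') := by
    rw [Real.tan_eq_sin_div_cos, Real.tan_eq_sin_div_cos, Real.sin_sub]
    have : Real.cos φ ≠ 0 := by linarith
    have : Real.cos φ' ≠ 0 := by linarith
    field_simp
  have hfl : (K : ℝ) * Real.tan φ' - K * Real.tan φ < 1 := by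
    have h1 := Int.floor_le (K * Real.tan φ)
    have h2 := Int.lt_floor_add_one (K * Real.tan φ')
    have h3 : (⌊(K : ℝ) * Real.tan φ⌋ : ℝ) = ⌊(K : ℝ) * Real.tan φ'⌋ := by exact_mod_cast h
    linarith
  have hpos : 0 < Real.cos φ * Real.cos φ' := by positivity
  have hle : Real.cos φ * Real.cos φ' ≤ 1 := by
    nlinarith [Real.cos_le_one φ, Real.cos_le_one φ']
  rw [div_le_iff₀ hK0, ht] at hsin
  nlinarith

lemma plateIdx_mem {K k : ℕ} {j : Fin K} (hφ : |halfAngle K k j| ≤ Real.pi / 4) :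
    plateIdx K k j ∈ Finset.Ico (-(K : ℤ)) (-(K : ℤ) + (2 * K + 1 : ℕ)) := by
  have ht := abs_le.1 (abs_tan_le_one hφ)
  have hK0 : (0 : ℝ) ≤ K := Nat.cast_nonneg _
  rw [Finset.mem_Ico]
  constructor
  · rw [plateIdx, Int.le_floor]; push_cast; nlinarith
  · rw [plateIdx, Int.floor_lt]; push_cast; nlinarith

lemma exists_sector {K : ℕ} (j : Fin K) : ∃ k : Fin 3, |halfAngle K k j| ≤ Real.pi / 4 := by
  have hK0 : (0 : ℝ) < K := by exact_mod_cast (lt_of_le_of_lt (Nat.zero_le _) j.2)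
  have hpi := Real.pi_pos
  have h0 : 0 ≤ Real.pi * j / K := by positivity
  have h1 : Real.pi * j / K ≤ Real.pi := by
    rw [div_le_iff₀ hK0]
    have : (j : ℝ) ≤ K := by exact_mod_cast j.2.le
    gcongr
  by_cases c1 : Real.pi * j / K ≤ Real.pi / 4
  · refine ⟨0, ?_⟩
    rw [halfAngle, abs_le]; simp only [Fin.val_zero, Nat.cast_zero]; constructor <;> linarith
  by_cases c2 : Real.pi * j / K ≤ 3 * Real.pi / 4
  · refine ⟨1, ?_⟩
    rw [halfAngle, abs_le]; simp only [Fin.val_one, Nat.cast_one]; constructor <;> linarith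
  · refine ⟨2, ?_⟩
    rw [halfAngle, abs_le]; simp only [Fin.val_two, Nat.cast_ofNat]; constructor <;> linarith

lemma isBounded_conePlate {δ : ℝ} (hδ : δ ≤ 1) (K : ℕ) (j : Fin K) :
    Bornology.IsBounded (conePlate δ K j) := by
  refine (Metric.isBounded_closedBall (x := (0 : E3)) (r := 5)).subset ?_
  rintro ξ ⟨r, θ, hr, hr2, -, h0, h1, h2⟩
  rw [mem_closedBall_zero_iff, EuclideanSpace.norm_eq]
  refine Real.sqrt_le_iff.2 ⟨by norm_num, ?_⟩
  rw [Fin.sum_univ_three]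
  simp only [Real.norm_eq_abs, sq_abs]
  rw [h0, h1]
  have := abs_le.1 h2
  have := Real.sin_sq_add_cos_sq θ
  have e : (r * Real.cos θ) ^ 2 + (r * Real.sin θ) ^ 2 = r ^ 2 := by
    rw [mul_pow, mul_pow, ← mul_add, add_comm, this, mul_one]
  rw [e]
  nlinarith

lemma conePlate_disjoint {δ : ℝ} {K : ℕ} {j j' : Fin K} {ξ : E3} (h : ξ ∈ conePlate δ K j)
    (h' : ξ ∈ conePlate δ K j') : j = j' := by
  obtain ⟨r, θ, hr, -, ⟨a1, a2⟩, h0, h1, -⟩ := h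
  obtain ⟨r', θ', hr', -, ⟨b1, b2⟩, h0', h1', -⟩ := h'
  have hK0 : (0 : ℝ) < K := by exact_mod_cast (lt_of_le_of_lt (Nat.zero_le _) j.2)
  have hpi := Real.pi_pos
  rw [h0] at h0'
  rw [h1] at h1'
  have s1 := Real.sin_sq_add_cos_sq θ
  have s2 := Real.sin_sq_add_cos_sq θ'
  have hrr : r = r' := by
    have : r ^ 2 = r' ^ 2 := by
      calc r ^ 2 = (r * Real.sin θ) ^ 2 + (r * Real.cos θ) ^ 2 := by
            rw [mul_pow, mul_pow, ← mul_add, s1, mul_one]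
        _ = r' ^ 2 := by rw [h0', h1', mul_pow, mul_pow, ← mul_add, s2, mul_one]
    exact (sq_eq_sq₀ (by linarith) (by linarith)).1 this
  subst hrr
  have hcos : Real.cos θ = Real.cos θ' := mul_left_cancel₀ (by linarith) h0'
  have hsin : Real.sin θ = Real.sin θ' := mul_left_cancel₀ (by linarith) h1'
  have hone : Real.cos (θ - θ') = 1 := by
    rw [Real.cos_sub, hcos, hsin]; nlinarith
  have up : ∀ l : Fin K, 2 * Real.pi * ((l : ℝ) + 1) / K ≤ 2 * Real.pi := by
    intro l
    rw [div_le_iff₀ hK0]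
    have : (l : ℝ) + 1 ≤ K := by exact_mod_cast l.2
    gcongr
  have lo : ∀ l : Fin K, 0 ≤ 2 * Real.pi * (l : ℝ) / K := fun l => by positivity
  have hθ : θ - θ' = 0 := by
    refine (Real.cos_eq_one_iff_of_lt_of_lt ?_ ?_).1 hone <;>
    linarith [up j, up j', lo j, lo j']
  have hθ' : θ = θ' := by linarith
  subst hθ'
  have c1 : (j : ℝ) < j' + 1 := by
    have := a1.trans_lt b2
    rw [div_lt_div_iff_of_pos_right hK0] at this
    exact lt_of_mul_lt_mul_left this (by positivity)
  have c2 : (j' : ℝ) < j + 1 := by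
    have := b1.trans_lt a2
    rw [div_lt_div_iff_of_pos_right hK0] at this
    exact lt_of_mul_lt_mul_left this (by positivity)
  have d1 : (j : ℕ) < j' + 1 := by exact_mod_cast c1
  have d2 : (j' : ℕ) < j + 1 := by exact_mod_cast c2
  exact Fin.ext (by omega)

/-! ### Conclusion -/

lemma eLpNorm_ofReal {p : ℝ} (hp : 0 < p) (f : E3 → ℂ) :
    eLpNorm f (ENNReal.ofReal p) volume = (∫⁻ x, ‖f x‖ₑ ^ p) ^ (1 / p) := by
  rw [eLpNorm_eq_lintegral_rpow_enorm_toReal (by simpa using hp) ENNReal.ofReal_ne_top,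
    ENNReal.toReal_ofReal hp.le]

lemma eLpNorm_sq {p : ℝ} (hp : 0 < p) (f : E3 → ℂ) :
    eLpNorm f (ENNReal.ofReal p) volume ^ (2 : ℝ) = (∫⁻ x, ‖f x‖ₑ ^ p) ^ (2 / p) := by
  rw [eLpNorm_ofReal hp, ← ENNReal.rpow_mul]; congr 1; ring

/-- `sector_decoupling` for a finite family of plates of one sector with distinct indices. -/
lemma sector_family {c : ℕ} (hc : 1 ≤ c) {p : ℝ} (hp2 : 2 ≤ p) (hp6 : p ≤ 6) {η : ℝ}
    (hη : 0 < η) :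
    ∃ C : ℝ, 0 < C ∧ ∀ x y z : E3 →ₗ[ℝ] ℝ, (∀ ξ, x ξ = 0 → y ξ = 0 → z ξ = 0 → ξ = 0) →
      ∀ (ι : Type) (S : Finset ι) (idx : ι → ℤ) (F : ι → E3 → ℂ), Set.InjOn idx S →
        (∀ j ∈ S, Spec (ConePl x y z c (idx j)) (F j)) → ∀ (a : ℤ) (N : ℕ), 1 ≤ N →
        (∀ j ∈ S, idx j ∈ Finset.Ico a (a + N)) →
        eLpNorm (fun u => ∑ j ∈ S, F j u) (ENNReal.ofReal p) volume ≤
          ENNReal.ofReal ((C * (N : ℝ) ^ η) ^ (1 / p)) *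
          (∑ j ∈ S, eLpNorm (F j) (ENNReal.ofReal p) volume ^ (2 : ℝ)) ^ ((1 : ℝ) / 2) := by
  classical
  obtain ⟨C, hC, h⟩ := sector_decoupling hc hp2 hp6 hη
  have hp0 : 0 < p := by linarith
  refine ⟨C, hC, fun x y z hinj ι S idx F hidx hF a N hN hmem => ?_⟩
  set G : ℤ → E3 → ℂ := fun i u => ∑ j ∈ S with idx j = i, F j u with hG
  have hGS : ∀ i, Spec (ConePl x y z c i) (G i) := by
    intro i
    refine Spec.sum _ fun j hj => ?_
    obtain ⟨h1, h2⟩ := Finset.mem_filter.1 hj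
    exact h2 ▸ hF j h1
  have key := h x y z hinj G hGS a N hN
  have e1 : ∀ u, ∑ i ∈ Finset.Ico a (a + N), G i u = ∑ j ∈ S, F j u := fun u =>
    Finset.sum_fiberwise_of_maps_to hmem _
  have e2 : ∑ i ∈ Finset.Ico a (a + N), (∫⁻ x, ‖G i x‖ₑ ^ p) ^ (2 / p) =
      ∑ j ∈ S, (∫⁻ x, ‖F j x‖ₑ ^ p) ^ (2 / p) := by
    rw [← Finset.sum_fiberwise_of_maps_to hmem]
    refine Finset.sum_congr rfl fun i _ => ?_
    -- each fibre of `idx` has at most one element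
    have hcard : (S.filter fun j => idx j = i).card ≤ 1 := by
      rw [Finset.card_le_one]
      intro j hj l hl
      obtain ⟨h1, h2⟩ := Finset.mem_filter.1 hj
      obtain ⟨h3, h4⟩ := Finset.mem_filter.1 hl
      exact hidx h1 h3 (h2.trans h4.symm)
    rcases Nat.le_one_iff_eq_zero_or_eq_one.1 hcard with h0 | h0
    · rw [Finset.card_eq_zero] at h0
      simp only [hG, h0, Finset.sum_empty, enorm_zero, ENNReal.zero_rpow_of_pos hp0,
        lintegral_zero]
      exact ENNReal.zero_rpow_of_pos (by positivity)
    · obtain ⟨j, h0⟩ := Finset.card_eq_one.1 h0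
      simp only [hG, h0, Finset.sum_singleton]
  simp only [e1, e2] at key
  simp only [eLpNorm_sq hp0]
  rw [eLpNorm_ofReal hp0]
  refine (ENNReal.rpow_le_rpow key (by positivity)).trans (le_of_eq ?_)
  have hN0 : (0 : ℝ) < N := by exact_mod_cast hN
  rw [ENNReal.mul_rpow_of_nonneg _ _ (by positivity), ← ENNReal.rpow_mul,
    ENNReal.ofReal_rpow_of_pos (by positivity)]
  congr 2
  field_simp

/-- ℓ² decoupling for the truncated cone into plates of dimensions `1 × δ^{1/2} × δ`,
for `2 ≤ p ≤ 6`. -/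
theorem cone_decoupling (ε p : ℝ) (hε : 0 < ε) (hp2 : 2 ≤ p) (hp6 : p ≤ 6) :
    ∃ C : ℝ, 0 < C ∧
      ∀ (δ : ℝ) (K : ℕ), 0 < δ → δ < 1 → (K : ℝ) = δ ^ (-(1:ℝ)/2) →
      ∀ f : E3 → ℂ, Integrable f →
        (∀ x : E3, x ∉ ⋃ j : Fin K, conePlate δ K j → 𝓕 f x = 0) →
      ∀ F : Fin K → E3 → ℂ,
        (∀ j, Integrable (F j)) →
        (∀ j x, 𝓕 (F j) x = Set.indicator (conePlate δ K j) (𝓕 f) x) →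
        eLpNorm f (ENNReal.ofReal p) volume ≤
          ENNReal.ofReal (C * δ ^ (-ε)) *
            (∑ j : Fin K, eLpNorm (F j) (ENNReal.ofReal p) volume ^ (2:ℝ)) ^ ((1:ℝ)/2) := by
  have hp0 : 0 < p := by linarith
  obtain ⟨C, hC, hsec⟩ := sector_family (c := 150) (by norm_num) hp2 hp6
    (η := p * (2 * ε)) (by positivity)
  refine ⟨20 + 3 * (C ^ (1 / p) * 9 ^ ε), by positivity, ?_⟩
  intro δ K hδ hδ1 hKδ f hf hfs F hF hFf
  have hK0 : (0 : ℝ) < K := by rw [hKδ]; positivity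
  have hK2 : (K : ℝ) ^ 2 = δ⁻¹ := by
    rw [hKδ, ← Real.rpow_natCast, ← Real.rpow_mul hδ.le, ← Real.rpow_neg_one]
    congr 1; norm_num
  have hδK : δ = 1 / (K : ℝ) ^ 2 := by rw [hK2, one_div, inv_inv]
  have hδε : 1 ≤ δ ^ (-ε) := Real.one_le_rpow_of_pos_of_le_one_of_nonpos hδ hδ1.le (by linarith)
  -- continuous representatives with the same Fourier transforms
  have hb : ∀ j, ∃ g, Spec (conePlate δ K j) g ∧ g =ᵐ[volume] F j ∧ 𝓕 g = 𝓕 (F j) := fun j =>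
    exists_spec_of_bounded (hF j) (isBounded_conePlate hδ1.le K j) fun x hx => by
      rw [hFf, indicator_of_notMem hx]
  choose G hG1 hG2 hG3 using hb
  obtain ⟨g, hg1, hg2, hg3⟩ := exists_spec_of_bounded hf
    ((Bornology.isBounded_iUnion).2 fun j => isBounded_conePlate hδ1.le K j) hfs
  have hGu : ∀ j ∈ (Finset.univ : Finset (Fin K)), Spec univ (G j) := fun j _ =>
    (hG1 j).mono (subset_univ _)
  have hsum : g = fun u => ∑ j, G j u := by
    refine hg1.ext_fourier (Spec.sum _ hGu) ?_
    funext ξ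
    rw [Spec.fourier_sum _ hGu, hg3]
    simp only [hG3, hFf]
    by_cases hξ : ξ ∈ ⋃ j : Fin K, conePlate δ K j
    · obtain ⟨j, hj⟩ := mem_iUnion.1 hξ
      rw [Finset.sum_eq_single j, indicator_of_mem hj]
      · intro l _ hl
        exact indicator_of_notMem (fun h => hl (conePlate_disjoint h hj)) _
      · simp
    · rw [hfs ξ hξ]
      refine (Finset.sum_eq_zero fun j _ => ?_).symm
      exact indicator_of_notMem (fun h => hξ (mem_iUnion.2 ⟨j, h⟩)) _
  have hnF : ∀ j, eLpNorm (F j) (ENNReal.ofReal p) volume =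
      eLpNorm (G j) (ENNReal.ofReal p) volume := fun j => (eLpNorm_congr_ae (hG2 j)).symm
  rw [← eLpNorm_congr_ae hg2, hsum]
  simp only [hnF]
  have hp1 : 1 ≤ ENNReal.ofReal p := by rw [ENNReal.one_le_ofReal]; linarith
  have hmeas : ∀ S : Finset (Fin K), AEStronglyMeasurable (fun u => ∑ j ∈ S, G j u) volume :=
    fun S => (Spec.sum S fun j _ => hGu j (Finset.mem_univ _)).int.aestronglyMeasurable
  set W := (∑ j : Fin K, eLpNorm (G j) (ENNReal.ofReal p) volume ^ (2:ℝ)) ^ ((1:ℝ)/2) with hW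
  by_cases hK : 20 ≤ K
  · choose kf hkf using fun j : Fin K => exists_sector j
    have hsplit : (fun u => ∑ j, G j u) =
        ∑ k : Fin 3, fun u => ∑ j with kf j = k, G j u := by
      funext u
      rw [Finset.sum_apply]
      exact (Finset.sum_fiberwise _ _ _).symm
    have hN : (((2 * K + 1 : ℕ) : ℝ) ^ (p * (2 * ε))) ^ (1 / p) ≤ 9 ^ ε * δ ^ (-ε) := by
      have h1 : (((2 * K + 1 : ℕ) : ℝ)) ≤ 3 * K := by
        have : (20 : ℝ) ≤ K := by exact_mod_cast hK
        push_cast; linarith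
      rw [← Real.rpow_mul (by positivity), show p * (2 * ε) * (1 / p) = 2 * ε by field_simp]
      calc ((2 * K + 1 : ℕ) : ℝ) ^ (2 * ε) ≤ (3 * K : ℝ) ^ (2 * ε) := by gcongr
        _ = ((3 * K : ℝ) ^ 2) ^ ε := by
          rw [Real.rpow_mul (by positivity), Real.rpow_two]
        _ = (9 * δ⁻¹) ^ ε := by rw [mul_pow, hK2]; norm_num
        _ = _ := by
          rw [Real.mul_rpow (by norm_num) (by positivity), Real.inv_rpow hδ.le, Real.rpow_neg hδ.le]
    have hone : ∀ k : Fin 3, eLpNorm (fun u => ∑ j with kf j = k, G j u) (ENNReal.ofReal p) volume ≤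
        ENNReal.ofReal (C ^ (1 / p) * 9 ^ ε * δ ^ (-ε)) * W := by
      intro k
      have hk : ∀ j ∈ Finset.univ.filter (fun j => kf j = k), |halfAngle K k j| ≤ Real.pi / 4 := by
        intro j hj
        rw [← (Finset.mem_filter.1 hj).2]
        exact hkf j
      have := hsec (secX k) (secY K k) (secZ K k) (sec_inj hK0 k) (Fin K)
        (Finset.univ.filter fun j => kf j = k) (plateIdx K k) G
        (fun j hj l hl h => plateIdx_inj (hk j hj) (hk l hl) h)
        (fun j hj => (hG1 j).mono (by rw [hδK]; exact conePlate_subset hK (hk j hj)))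
        (-(K : ℤ)) (2 * K + 1) (by omega) (fun j hj => plateIdx_mem (hk j hj))
      refine this.trans ?_
      refine mul_le_mul' (ENNReal.ofReal_le_ofReal ?_) ?_
      · rw [Real.mul_rpow hC.le (by positivity), mul_assoc]
        gcongr
      · exact ENNReal.rpow_le_rpow (Finset.sum_le_sum_of_subset (Finset.subset_univ _))
          (by norm_num)
    rw [hsplit]
    refine (eLpNorm_sum_le (fun k _ => hmeas _) hp1).trans ?_
    refine (Finset.sum_le_sum fun k _ => hone k).trans ?_
    rw [Finset.sum_const, Finset.card_univ, Fintype.card_fin, nsmul_eq_mul, ← mul_assoc]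
    refine mul_le_mul' ?_ le_rfl
    rw [← ENNReal.ofReal_natCast, ← ENNReal.ofReal_mul (by positivity)]
    refine ENNReal.ofReal_le_ofReal ?_
    have : 0 ≤ 20 * δ ^ (-ε) := by positivity
    push_cast
    linarith
  · -- few plates: the triangle inequality suffices
    have hle : ∀ j, eLpNorm (G j) (ENNReal.ofReal p) volume ≤ W := by
      intro j
      have h1 : eLpNorm (G j) (ENNReal.ofReal p) volume ^ (2:ℝ) ≤
          ∑ j : Fin K, eLpNorm (G j) (ENNReal.ofReal p) volume ^ (2:ℝ) :=
        Finset.single_le_sum (f := fun j => eLpNorm (G j) (ENNReal.ofReal p) volume ^ (2:ℝ))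
          (fun _ _ => zero_le) (Finset.mem_univ j)
      have h2 := ENNReal.rpow_le_rpow h1 (show (0:ℝ) ≤ 1 / 2 by norm_num)
      rw [← ENNReal.rpow_mul] at h2
      norm_num at h2
      simpa [hW] using h2
    have e : (fun u => ∑ j, G j u) = ∑ j, G j := by funext u; rw [Finset.sum_apply]
    rw [e]
    refine (eLpNorm_sum_le (fun j _ => (hG1 j).int.aestronglyMeasurable) hp1).trans ?_
    refine (Finset.sum_le_sum fun j _ => hle j).trans ?_
    rw [Finset.sum_const, Finset.card_univ, Fintype.card_fin, nsmul_eq_mul]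
    refine mul_le_mul' ?_ le_rfl
    rw [← ENNReal.ofReal_natCast]
    refine ENNReal.ofReal_le_ofReal ?_
    have h1 : (K : ℝ) ≤ 20 := by exact_mod_cast (by omega : K ≤ 20)
    have h2 : 0 ≤ 3 * (C ^ (1 / p) * 9 ^ ε) := by positivity
    calc (K : ℝ) ≤ 20 * 1 := by linarith
      _ ≤ _ := by gcongr; linarith
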